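/- arXiv:2206.00889 — 3 statements merged into one kernel-verified Lean document; each statement's English description precedes it below -/
import Mathlib

section
/- For every positive integer k there exist constants γ_k > 0, μ_k' > 0 and a threshold n₀(k) such that the following holds for all n ≥ n₀(k). Let A and C be mutually avoiding n-element point sets in ℝ² (every line through two distinct points of A is disjoint from the convex hull of C, and every line through two distinct points of C is disjoint from the convex hull of A), and let B be an n-element point set in ℝ² such that no line through two distinct points of A and no line through two distinct points of C intersects the convex hull of B. If the set T of all collinear triples (a,b,c) with a ∈ A, b ∈ B, c ∈ C satisfies |T| ≥ μ_k' · n^{2−γ_k}, then T contains a k-system in which the k² middle points b_{i,j} are pairwise distinct; in particular T contains a configuration of exactly 3k² points spanning k³ triples of T. -/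
/-!
Seen from any `b ∈ B`, collinearity defines a partial matching between `A` and `C`. No line of `A`
or `C` meets the convex hull of `B`, so the slope orders of `A` and of `C` around `b` do not depend
on `b` up to rotation: for fixed linear orders on `A` and `C`, every one of these matchings is a
union of two increasing matchings (`exists_orders`).

Cut both orders into blocks of length `m`, a constant times `n ^ γ`. An increasing matching meets
only `O(n / m)` pairs of blocks (`card_blockPairs_le`), so most triples lie in triples `(b, I, J)`,
with `I` and `J` blocks, where the matching of `b` has at least `K` edges. Selecting `K` edges for
each and recording their offsets inside the blocks gives at most `m ^ (2 K)` labels; a popular label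
assigns to every block one fixed `K`-tuple of points. Two blocks are joined when some `b` matches
their tuples. This graph has `n ^ (2 - O(γ))` edges, so for small `γ` the Kővári–Sós–Turán theorem
(`exists_complete_bipartite`) yields a complete bipartite subgraph with `K` rows and `K ^ 3`
columns. Tuples in different blocks are disjoint, and a greedy choice of `K` columns
(`exists_rainbow`) makes the middle points distinct. These steps form `exists_system`.
-/

/-- Points of the Euclidean plane. -/
abbrev Pt : Type := ℝ × ℝ

/-- The line through two points, as a set. -/
def lineThrough (p q : Pt) : Set Pt :=
  (affineSpan ℝ ({p, q} : Set Pt) : AffineSubspace ℝ Pt)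

/-- Every line through two distinct points of `P` is disjoint from the convex hull of `Q`. -/
def AvoidsHull (P Q : Finset Pt) : Prop :=
  ∀ p ∈ P, ∀ q ∈ P, p ≠ q → Disjoint (lineThrough p q) (convexHull ℝ (Q : Set Pt))

/-- A `k`-complete collinear triple arrangement (`k`-system) in `T ⊆ A × B × C`:
`k` pairwise disjoint `k`-element sequences `As 1, …, As k` of distinct points of `A`,
`k` pairwise disjoint `k`-element sequences `Cs 1, …, Cs k` of distinct points of `C`,
and points `bs i j ∈ B` such that `(As i ℓ, bs i j, Cs j (rev ℓ)) ∈ T` for all `i, j, ℓ`,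
where `rev` reverses the order of `Fin k` (0-indexed version of `ℓ ↦ k - ℓ + 1`). -/
def IsKSystem (A B C : Finset Pt) (T : Set (Pt × Pt × Pt)) (k : ℕ)
    (As Cs bs : Fin k → Fin k → Pt) : Prop :=
  (Function.Injective fun p : Fin k × Fin k => As p.1 p.2) ∧
  (∀ i ℓ : Fin k, As i ℓ ∈ A) ∧
  (Function.Injective fun p : Fin k × Fin k => Cs p.1 p.2) ∧
  (∀ j ℓ : Fin k, Cs j ℓ ∈ C) ∧
  (∀ i j : Fin k, bs i j ∈ B) ∧
  (∀ i j ℓ : Fin k, (As i ℓ, bs i j, Cs j ℓ.rev) ∈ T)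

/-! ### Bipartite graphs -/

open Finset in
/-- Kővári–Sós–Turán: a dense enough bipartite graph on `[n] × [n]` contains `K_{s,t}`.
Double count the pairs (`s`-set of left vertices, common right neighbour), using
`(d + 1 - s) ^ s ≤ s! * choose d s` and the power mean inequality. Subtracting `s * n` from the
number of edges accounts for the shift in that bound and makes no claim when it truncates. -/
lemma exists_complete_bipartite {n s t : ℕ} (hs : 0 < s) (G : Finset (ℕ × ℕ))
    (hG : G ⊆ range n ×ˢ range n)
    (h : t * n ^ (2 * s - 1) < (#G - s * n) ^ s) :
    ∃ S U : Finset ℕ, #S = s ∧ t ≤ #U ∧ ∀ I ∈ S, ∀ J ∈ U, (I, J) ∈ G := by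
  classical
  by_contra hcon
  push Not at hcon
  obtain ⟨s', rfl⟩ : ∃ s', s = s' + 1 := ⟨s - 1, by omega⟩
  set s := s' + 1 with hs'
  set N : ℕ → Finset ℕ := fun J => {I ∈ range n | (I, J) ∈ G} with hN
  have hcard : #G = ∑ J ∈ range n, #(N J) := by
    rw [card_eq_sum_card_fiberwise (f := Prod.snd) (t := range n)]
    · refine sum_congr rfl fun J hJ => ?_
      refine card_bij (fun p _ => p.1) ?_ ?_ ?_
      · rintro ⟨I, J'⟩ hp
        simp only [mem_filter] at hp
        obtain ⟨hp, rfl⟩ := hp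
        have := hG hp
        simp only [mem_product, mem_range] at this
        simp [hN, hp, this.1]
      · rintro ⟨I, J'⟩ hp ⟨I2, J2⟩ hp2 h
        simp only [mem_filter] at hp hp2
        grind
      · intro I hI
        refine ⟨(I, J), ?_, rfl⟩
        simp only [hN, mem_filter] at hI
        simp [hI.2]
    · intro p hp
      have := hG hp
      simp only [mem_product] at this
      exact this.2
  have h1 : #G - s * n ≤ ∑ J ∈ range n, (#(N J) + 1 - s) := by
    have : #G ≤ ∑ J ∈ range n, ((#(N J) + 1 - s) + s) := by
      rw [hcard]; exact sum_le_sum fun J _ => by omega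
    rw [sum_add_distrib, sum_const, card_range, smul_eq_mul, mul_comm n] at this
    omega
  have h2 : ∑ J ∈ range n, (#(N J)).choose s ≤ n.choose s * t := by
    have key := sum_card_bipartiteAbove_eq_sum_card_bipartiteBelow
      (s := powersetCard s (range n)) (t := range n) (fun S J => ∀ I ∈ S, (I, J) ∈ G)
    have e : ∀ J ∈ range n, #(bipartiteBelow (fun S J => ∀ I ∈ S, (I, J) ∈ G)
        (powersetCard s (range n)) J) = (#(N J)).choose s := by
      intro J _
      rw [← card_powersetCard]
      congr 1
      ext S
      simp only [mem_bipartiteBelow, mem_powersetCard, hN, subset_iff, mem_filter]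
      grind
    rw [← sum_congr rfl e, ← key]
    have : #(powersetCard s (range n)) = n.choose s := by simp
    rw [← this, ← smul_eq_mul]
    refine sum_le_card_nsmul _ _ _ fun S hS => ?_
    by_contra hlt
    obtain ⟨I, hI, J, hJ, hn⟩ := hcon S (bipartiteAbove (fun S J => ∀ I ∈ S, (I, J) ∈ G)
        (range n) S) (mem_powersetCard.1 hS).2 (by omega)
    exact hn ((mem_bipartiteAbove _).1 hJ |>.2 I hI)
  have h3 : (#G - s * n) ^ s ≤ t * n ^ (2 * s - 1) := calc
    (#G - s * n) ^ s ≤ (∑ J ∈ range n, (#(N J) + 1 - s)) ^ (s' + 1) := Nat.pow_le_pow_left h1 _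
    _ ≤ n ^ s' * ∑ J ∈ range n, (#(N J) + 1 - s) ^ (s' + 1) := by
      have := pow_sum_le_card_mul_sum_pow (s := range n) (f := fun J => #(N J) + 1 - s)
        (fun _ _ => Nat.zero_le _) s'
      simpa using this
    _ ≤ n ^ s' * ∑ J ∈ range n, s.factorial * (#(N J)).choose s := by
      gcongr with J hJ
      rw [← Nat.descFactorial_eq_factorial_mul_choose]
      exact Nat.pow_sub_le_descFactorial _ _
    _ = n ^ s' * (s.factorial * ∑ J ∈ range n, (#(N J)).choose s) := by rw [← mul_sum]
    _ ≤ n ^ s' * (s.factorial * (n.choose s * t)) := by gcongr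
    _ = n ^ s' * (n.descFactorial s * t) := by
      rw [Nat.descFactorial_eq_factorial_mul_choose]; ring
    _ ≤ n ^ s' * (n ^ s * t) := by gcongr; exact Nat.descFactorial_le_pow _ _
    _ = t * n ^ (2 * s - 1) := by
      rw [show 2 * s - 1 = s' + s by omega, pow_add]; ring
  omega

open Finset in
/-- In a properly edge-coloured `K × K³` complete bipartite graph, some `K` columns carry
pairwise distinct colours. The columns are chosen greedily: each earlier column and each pair of
rows excludes at most one new column. -/
lemma exists_rainbow {β : Type*} (K : ℕ) (S U : Finset ℕ) (hS : #S = K) (hU : K ^ 3 ≤ #U)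
    (b : ℕ → ℕ → β)
    (hrow : ∀ I ∈ S, ∀ J ∈ U, ∀ J' ∈ U, b I J = b I J' → J = J')
    (hcol : ∀ I ∈ S, ∀ I' ∈ S, ∀ J ∈ U, b I J = b I' J → I = I') :
    ∃ V ⊆ U, #V = K ∧ ∀ I ∈ S, ∀ I' ∈ S, ∀ J ∈ V, ∀ J' ∈ V, b I J = b I' J' → I = I' ∧ J = J' := by
  classical
  have step : ∀ j ≤ K, ∃ V ⊆ U, #V = j ∧
      ∀ I ∈ S, ∀ I' ∈ S, ∀ J ∈ V, ∀ J' ∈ V, b I J = b I' J' → I = I' ∧ J = J' := by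
    intro j
    induction j with
    | zero => exact fun _ => ⟨∅, by simp⟩
    | succ j ih =>
      intro hj
      obtain ⟨V, hVU, hV, hinj⟩ := ih (by omega)
      -- the columns sharing a colour with a column already chosen
      set bad : Finset ℕ := ((S ×ˢ S) ×ˢ V).biUnion
        fun p => {J ∈ U | b p.1.1 J = b p.1.2 p.2} with hbad
      have hbadcard : #bad ≤ #((S ×ˢ S) ×ˢ V) * 1 := by
        refine card_biUnion_le_card_mul _ _ _ fun p hp => ?_
        rw [card_le_one]
        simp only [mem_product] at hp
        intro J hJ J' hJ'
        simp only [mem_filter] at hJ hJ'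
        exact hrow _ hp.1.1 _ hJ.1 _ hJ'.1 (hJ.2.trans hJ'.2.symm)
      have hlt : #bad < #U := by
        rw [card_product, card_product, hS, hV] at hbadcard
        have : K * K * j * 1 < K ^ 3 := by
          have : 0 < K := by omega
          have h2 : K * K * j < K * K * K := by gcongr; omega
          calc _ = K * K * j := by ring
            _ < _ := h2
            _ = _ := by ring
        omega
      obtain ⟨J₀, hJ₀, hJ₀b⟩ := exists_mem_notMem_of_card_lt_card hlt
      have hgood : ∀ I ∈ S, ∀ I' ∈ S, ∀ J ∈ V, b I J₀ ≠ b I' J := by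
        intro I hI I' hI' J hJ he
        apply hJ₀b
        rw [hbad, mem_biUnion]
        exact ⟨((I, I'), J), by simp [hI, hI', hJ], by simp [hJ₀, he]⟩
      have hSne : S.Nonempty := card_pos.1 (by omega)
      have hJV : J₀ ∉ V := fun h => by
        obtain ⟨I, hI⟩ := hSne
        exact hgood I hI I hI J₀ h rfl
      refine ⟨insert J₀ V, ?_, by rw [card_insert_of_notMem hJV, hV], ?_⟩
      · intro J hJ
        rcases mem_insert.1 hJ with rfl | h
        exacts [hJ₀, hVU h]
      · intro I hI I' hI' J hJ J' hJ' he
        rcases mem_insert.1 hJ with rfl | h <;> rcases mem_insert.1 hJ' with rfl | h'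
        · exact ⟨hcol I hI I' hI' _ hJ₀ he, rfl⟩
        · exact absurd he (hgood I hI I' hI' _ h')
        · exact absurd he.symm (hgood I' hI' I hI _ h)
        · exact hinj I hI I' hI' J h J' h' he
  exact step K le_rfl

/-! ### Families of piecewise increasing matchings -/

open Finset in
/-- For each `b`, the matching `{(a, c) | (a, b, c) ∈ T}` splits into two increasing matchings
(the two values of `δ`). On an increasing matching the pair of blocks `(a / m, c / m)` is
determined by the sum of its entries, so the matchings meet only linearly many block pairs. -/
lemma card_blockPairs_le {β : Type*} [DecidableEq β] {n m : ℕ}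
    (T : Finset (ℕ × β × ℕ)) (B : Finset β) (hB : #B ≤ n)
    (hT : ∀ a b c, (a, b, c) ∈ T → a < n ∧ b ∈ B ∧ c < n)
    (hfun : ∀ a b c c', (a, b, c) ∈ T → (a, b, c') ∈ T → c = c')
    (δ : ℕ × β × ℕ → Bool)
    (hmono : ∀ a b c a' c', (a, b, c) ∈ T → (a', b, c') ∈ T → δ (a, b, c) = δ (a', b, c') →
      a < a' → c < c') :
    #(T.image fun t => (t.2.1, t.1 / m, t.2.2 / m)) ≤ n * (4 * (n / m + 1)) := by
  classical
  set Q := T.image fun t => (δ t, t.2.1, t.1 / m, t.2.2 / m) with hQ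
  have h1 : (T.image fun t => (t.2.1, t.1 / m, t.2.2 / m)) = Q.image Prod.snd := by
    rw [hQ, image_image]; rfl
  have h2 : #Q ≤ #((univ : Finset Bool) ×ˢ B ×ˢ range (2 * (n / m + 1))) := by
    refine card_le_card_of_injOn (fun x => (x.1, x.2.1, x.2.2.1 + x.2.2.2)) ?_ ?_
    · intro x hx
      obtain ⟨⟨a, b, c⟩, ht, rfl⟩ := mem_image.1 hx
      obtain ⟨ha, hb, hc⟩ := hT a b c ht
      have h1 : a / m ≤ n / m := Nat.div_le_div_right ha.le
      have h2 : c / m ≤ n / m := Nat.div_le_div_right hc.le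
      simp only [coe_product, Set.mem_prod, mem_coe, mem_univ, mem_range, hb, true_and]
      omega
    · intro x hx y hy hxy
      obtain ⟨⟨a, b, c⟩, ht, rfl⟩ := mem_image.1 hx
      obtain ⟨⟨a', b', c'⟩, ht', rfl⟩ := mem_image.1 hy
      simp only [Prod.mk.injEq] at hxy ⊢
      obtain ⟨hd, rfl, hs⟩ := hxy
      refine ⟨hd, rfl, ?_⟩
      -- along a monotone matching both block indices move in the same direction
      rcases lt_trichotomy a a' with h | rfl | h
      · have hc := hmono _ _ _ _ _ ht ht' hd h
        have h1 : a / m ≤ a' / m := Nat.div_le_div_right h.le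
        have h2 : c / m ≤ c' / m := Nat.div_le_div_right hc.le
        omega
      · obtain rfl := hfun _ _ _ _ ht ht'
        simp
      · have hc := hmono _ _ _ _ _ ht' ht hd.symm h
        have h1 : a' / m ≤ a / m := Nat.div_le_div_right h.le
        have h2 : c' / m ≤ c / m := Nat.div_le_div_right hc.le
        omega
  rw [h1]
  refine card_image_le.trans (h2.trans ?_)
  simp only [card_product, card_univ, Fintype.card_bool, card_range]
  calc 2 * (#B * (2 * (n / m + 1))) ≤ 2 * (n * (2 * (n / m + 1))) := by gcongr
    _ = _ := by ring

open Finset in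
/-- The combinatorial core, for triples whose outer entries are ranks below `n`. Each `b`
defines a matching (`hfun`, `hinj`), two edges of a matching determine `b` (`huniq`), and each
matching is a union of two increasing ones (`hmono`). The points of the system in block `I` are
`m * I + u ℓ` with the same offsets `u` for every block. -/
lemma exists_system {β : Type*} {n q K : ℕ} (hK : 2 ≤ K) (hq : 0 < q)
    (T : Finset (ℕ × β × ℕ)) (B : Finset β) (hB : #B ≤ n)
    (hT : ∀ a b c, (a, b, c) ∈ T → a < n ∧ b ∈ B ∧ c < n)
    (hfun : ∀ a b c c', (a, b, c) ∈ T → (a, b, c') ∈ T → c = c')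
    (hinj : ∀ a a' b c, (a, b, c) ∈ T → (a', b, c) ∈ T → a = a')
    (huniq : ∀ a a' b b' c c', a ≠ a' → (a, b, c) ∈ T → (a', b, c') ∈ T →
      (a, b', c) ∈ T → (a', b', c') ∈ T → b = b')
    (δ : ℕ × β × ℕ → Bool)
    (hmono : ∀ a b c a' c', (a, b, c) ∈ T → (a', b, c') ∈ T → δ (a, b, c) = δ (a', b, c') →
      a < a' → c < c')
    (hTn : n ^ 2 ≤ q * #T)
    (hn : K ^ 3 * (4 * q * (16 * K * q) ^ (2 * K + 1)) ^ K < n) :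
    ∃ X Y : Fin K → Fin K → ℕ, ∃ bs : Fin K → Fin K → β,
      (Function.Injective fun p : Fin K × Fin K => X p.1 p.2) ∧
      (Function.Injective fun p : Fin K × Fin K => Y p.1 p.2) ∧
      (Function.Injective fun p : Fin K × Fin K => bs p.1 p.2) ∧
      ∀ i j ℓ, (X i ℓ, bs i j, Y j ℓ) ∈ T := by
  classical
  set m := 16 * K * q with hm
  have hm0 : 0 < m := by positivity
  set P := 4 * q * m ^ (2 * K + 1) with hP
  have hP0 : 0 < P := by positivity
  have hn0 : 0 < n := by omega
  have hKPn : K * P ≤ n := by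
    calc K * P ≤ K ^ 3 * P ^ K :=
          Nat.mul_le_mul (Nat.le_self_pow (by omega) _) (Nat.le_self_pow (by omega) _)
      _ ≤ n := hn.le
  have hmn : m ≤ n := by
    calc m ≤ m ^ (2 * K + 1) := Nat.le_self_pow (by omega) _
      _ ≤ P := by rw [hP]; exact Nat.le_mul_of_pos_left _ (by positivity)
      _ ≤ K * P := Nat.le_mul_of_pos_left _ (by omega)
      _ ≤ n := hKPn
  -- `π` records the middle point and the two blocks; `F p` is the part of the matching there
  set π : ℕ × β × ℕ → β × ℕ × ℕ := fun t => (t.2.1, t.1 / m, t.2.2 / m) with hπ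
  set F : β × ℕ × ℕ → Finset (ℕ × β × ℕ) := fun p => {t ∈ T | π t = p} with hF
  set R := T.image π with hR
  set Rg := {p ∈ R | K ≤ #(F p)} with hRg
  have hRcard : #R ≤ n * (4 * (n / m + 1)) := card_blockPairs_le T B hB hT hfun δ hmono
  have hFm : ∀ p, #(F p) ≤ m := by
    intro p
    rw [← card_range m]
    refine card_le_card_of_injOn (fun t => t.1 % m) ?_ ?_
    · intro t _
      simpa using Nat.mod_lt _ hm0
    · rintro ⟨a, b, c⟩ ht ⟨a', b', c'⟩ ht' h
      simp only [hF, hπ, coe_filter, Set.mem_ofPred_eq] at ht ht' h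
      obtain ⟨ht, rfl⟩ := ht
      simp only [Prod.mk.injEq] at ht'
      obtain ⟨ht', rfl, h1, h2⟩ := ht'
      obtain rfl : a = a' := by
        rw [← Nat.div_add_mod a m, ← Nat.div_add_mod a' m, h, h1]
      obtain rfl := hfun _ _ _ _ ht ht'
      rfl
  have hTcard : #T ≤ m * #Rg + K * #R := by
    rw [card_eq_sum_card_image π T]
    calc ∑ p ∈ R, #(F p) ≤ ∑ p ∈ R, ((if K ≤ #(F p) then m else 0) + K) := by
          refine sum_le_sum fun p _ => ?_
          split_ifs with h
          · exact (hFm p).trans (by omega)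
          · omega
      _ = m * #Rg + K * #R := by
          rw [sum_add_distrib, ← sum_filter, sum_const, sum_const, smul_eq_mul, smul_eq_mul,
            mul_comm, mul_comm K]
  have hgood : #T ≤ 2 * m * #Rg := by
    have h1 : m * (n / m + 1) ≤ 2 * n := by
      have := Nat.mul_div_le n m
      rw [mul_add]; omega
    have h2 : m * #T ≤ m * (m * #Rg) + 8 * K * n ^ 2 := calc
      m * #T ≤ m * (m * #Rg + K * (n * (4 * (n / m + 1)))) := by
        gcongr; exact hTcard.trans (by gcongr)
      _ = m * (m * #Rg) + 4 * K * n * (m * (n / m + 1)) := by ring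
      _ ≤ m * (m * #Rg) + 4 * K * n * (2 * n) := by gcongr
      _ = _ := by ring
    have h3 : 2 * (8 * K * n ^ 2) ≤ m * #T := calc
      2 * (8 * K * n ^ 2) = 16 * K * n ^ 2 := by ring
      _ ≤ 16 * K * (q * #T) := by gcongr
      _ = m * #T := by rw [hm]; ring
    have h4 : m * #T ≤ m * (2 * m * #Rg) := by
      have : m * (2 * m * #Rg) = 2 * (m * (m * #Rg)) := by ring
      omega
    exact Nat.le_of_mul_le_mul_left h4 hm0
  -- a choice of `K` edges of the matching for each rich block pair
  have hch : ∀ p : β × ℕ × ℕ, ∃ e : Fin K → ℕ × β × ℕ, p ∈ Rg →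
      Function.Injective e ∧ ∀ ℓ, e ℓ ∈ F p := by
    intro p
    by_cases hp : p ∈ Rg
    · obtain ⟨S, hSF, hS⟩ := exists_subset_card_eq (mem_filter.1 hp).2
      refine ⟨fun ℓ => (S.equivFinOfCardEq hS).symm ℓ, fun _ => ⟨?_, fun ℓ => hSF (by simp)⟩⟩
      exact Subtype.val_injective.comp (Equiv.injective _)
    · have : Nonempty (ℕ × β × ℕ) := by
        by_contra hne
        rw [not_nonempty_iff] at hne
        have : #T = 0 := by rw [card_eq_zero]; exact eq_empty_of_isEmpty T
        rw [this] at hTn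
        have : 0 < n ^ 2 := by positivity
        omega
      exact ⟨fun _ => this.some, fun h => absurd h hp⟩
  choose e he using hch
  set lab : β × ℕ × ℕ → (Fin K → Fin m) × (Fin K → Fin m) := fun p =>
    (fun ℓ => ⟨(e p ℓ).1 % m, Nat.mod_lt _ hm0⟩, fun ℓ => ⟨(e p ℓ).2.2 % m, Nat.mod_lt _ hm0⟩)
    with hlab
  -- the label of a rich block pair lists the offsets of its `K` edges; `(u, v)` is a popular label
  obtain ⟨⟨u, v⟩, huv⟩ : ∃ y, #Rg ≤ m ^ (2 * K) * #{p ∈ Rg | lab p = y} := by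
    by_contra hcon
    push Not at hcon
    have h1 : #Rg = ∑ y, #{p ∈ Rg | lab p = y} :=
      card_eq_sum_card_fiberwise fun _ _ => by simp
    have hne : (univ : Finset ((Fin K → Fin m) × (Fin K → Fin m))).Nonempty :=
      ⟨(fun _ => ⟨0, hm0⟩, fun _ => ⟨0, hm0⟩), mem_univ _⟩
    have h2 : ∑ y, m ^ (2 * K) * #{p ∈ Rg | lab p = y} <
        ∑ _y : (Fin K → Fin m) × (Fin K → Fin m), #Rg :=
      sum_lt_sum_of_nonempty hne fun y _ => hcon y
    rw [← mul_sum, ← h1] at h2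
    simp only [sum_const, card_univ, Fintype.card_prod, Fintype.card_pi, Fintype.card_fin,
      prod_const, smul_eq_mul] at h2
    rw [two_mul, pow_add] at h2
    exact lt_irrefl _ h2
  set W := {p ∈ Rg | lab p = (u, v)} with hW
  -- in every block pair of `W`, the `K` edges sit at the offsets `u` and `v`
  have hWT : ∀ p ∈ W, ∀ ℓ, e p ℓ = (m * p.2.1 + u ℓ, p.1, m * p.2.2 + v ℓ) ∧ e p ℓ ∈ T := by
    intro p hp ℓ
    obtain ⟨hpR, hpl⟩ := mem_filter.1 hp
    have h1 := (he p hpR).2 ℓ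
    obtain ⟨h1, h2⟩ := mem_filter.1 h1
    refine ⟨?_, h1⟩
    have hu : (u ℓ : ℕ) = (e p ℓ).1 % m := by
      have := congrArg (fun z => ((z.1 ℓ : Fin m) : ℕ)) hpl
      exact this.symm
    have hv : (v ℓ : ℕ) = (e p ℓ).2.2 % m := by
      have := congrArg (fun z => ((z.2 ℓ : Fin m) : ℕ)) hpl
      exact this.symm
    have e1 : p.1 = (e p ℓ).2.1 := (congrArg (fun z => z.1) h2).symm
    have e2 : p.2.1 = (e p ℓ).1 / m := (congrArg (fun z => z.2.1) h2).symm
    have e3 : p.2.2 = (e p ℓ).2.2 / m := (congrArg (fun z => z.2.2) h2).symm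
    rw [hu, hv, e1, e2, e3, Nat.div_add_mod, Nat.div_add_mod]
  have hWmem : ∀ p ∈ W, ∀ ℓ, (m * p.2.1 + u ℓ, p.1, m * p.2.2 + v ℓ) ∈ T := fun p hp ℓ => by
    have := hWT p hp ℓ
    rw [← this.1]; exact this.2
  have hWinj : ∀ p ∈ W, Function.Injective fun ℓ => ((u ℓ, v ℓ) : Fin m × Fin m) := by
    intro p hp ℓ ℓ' h
    apply (he p (mem_filter.1 hp).1).1
    simp only [Prod.mk.injEq] at h
    rw [(hWT p hp ℓ).1, (hWT p hp ℓ').1, h.1, h.2]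
  have huinj : W.Nonempty → Function.Injective u := by
    rintro ⟨p, hp⟩ ℓ ℓ' h
    refine hWinj p hp ?_
    have h1 := hWmem p hp ℓ
    have h2 := hWmem p hp ℓ'
    rw [← h] at h2
    have := hfun _ _ _ _ h1 h2
    simp only [Prod.mk.injEq]
    exact ⟨h, Fin.ext (by omega)⟩
  have hvinj : W.Nonempty → Function.Injective v := by
    rintro ⟨p, hp⟩ ℓ ℓ' h
    refine hWinj p hp ?_
    have h1 := hWmem p hp ℓ
    have h2 := hWmem p hp ℓ'
    rw [← h] at h2
    have := hinj _ _ _ _ h1 h2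
    simp only [Prod.mk.injEq]
    exact ⟨Fin.ext (by omega), h⟩
  -- the graph on blocks; an edge comes from a single `b`, so no edges are lost by forgetting `b`
  set G := W.image Prod.snd with hG
  have hGcard : #G = #W := by
    refine card_image_of_injOn ?_
    rintro ⟨b, I, J⟩ hp ⟨b', I', J'⟩ hp' h
    simp only [Prod.mk.injEq] at h
    obtain ⟨rfl, rfl⟩ := h
    have z0 : 0 < K := by omega
    have z1 : 1 < K := by omega
    have hne : u ⟨0, z0⟩ ≠ u ⟨1, z1⟩ := fun h => by
      have := huinj ⟨_, hp⟩ h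
      simp at this
    have := huniq _ _ _ _ _ _ (fun h => hne (Fin.ext (by simpa using h)))
      (hWmem _ hp ⟨0, z0⟩) (hWmem _ hp ⟨1, z1⟩) (hWmem _ hp' ⟨0, z0⟩) (hWmem _ hp' ⟨1, z1⟩)
    simp only at this
    rw [this]
  have hGn : G ⊆ range n ×ˢ range n := by
    intro x hx
    obtain ⟨⟨b, I, J⟩, hp, rfl⟩ := mem_image.1 hx
    have := hT _ _ _ (hWmem _ hp ⟨0, by omega⟩)
    have h1 : I ≤ m * I := Nat.le_mul_of_pos_left _ hm0
    have h2 : J ≤ m * J := Nat.le_mul_of_pos_left _ hm0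
    simp only [mem_product, mem_range] at this ⊢
    omega
  have hedge : n ^ 2 * 2 ≤ P * #G := by
    rw [hGcard]
    calc n ^ 2 * 2 ≤ q * #T * 2 := by gcongr
      _ ≤ q * (2 * m * (m ^ (2 * K) * #W)) * 2 := by
          gcongr; exact hgood.trans (by gcongr)
      _ = P * #W := by rw [hP, pow_succ]; ring
  have hhalf : n ^ 2 ≤ P * (#G - K * n) := by
    have : P * (K * n) ≤ n ^ 2 := by
      calc P * (K * n) = K * P * n := by ring
        _ ≤ n * n := by gcongr
        _ = n ^ 2 := by ring
    rw [Nat.mul_sub]; omega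
  have hkst : K ^ 3 * n ^ (2 * K - 1) < (#G - K * n) ^ K := by
    by_contra hcon
    push Not at hcon
    have h1 : n * n ^ (2 * K - 1) ≤ K ^ 3 * P ^ K * n ^ (2 * K - 1) := calc
      n * n ^ (2 * K - 1) = (n ^ 2) ^ K := by
        rw [← pow_mul, ← pow_succ']; congr 1; omega
      _ ≤ (P * (#G - K * n)) ^ K := Nat.pow_le_pow_left hhalf _
      _ = P ^ K * (#G - K * n) ^ K := mul_pow _ _ _
      _ ≤ P ^ K * (K ^ 3 * n ^ (2 * K - 1)) := by gcongr
      _ = _ := by ring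
    have := Nat.le_of_mul_le_mul_right h1 (by positivity)
    omega
  obtain ⟨S, U, hS, hU, hSU⟩ := exists_complete_bipartite (by omega) G hGn hkst
  have hbex : ∀ I J, ∃ b : β, I ∈ S → J ∈ U → (b, I, J) ∈ W := by
    intro I J
    by_cases h : I ∈ S ∧ J ∈ U
    · obtain ⟨⟨b, I', J'⟩, hp, h'⟩ := mem_image.1 (hSU I h.1 J h.2)
      simp only [Prod.mk.injEq] at h'
      obtain ⟨rfl, rfl⟩ := h'
      exact ⟨b, fun _ _ => hp⟩
    · have : T.Nonempty := by
        rw [← card_pos]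
        by_contra h0
        have : #T = 0 := by omega
        rw [this] at hTn
        have : 0 < n ^ 2 := by positivity
        omega
      exact ⟨this.choose.2.1, fun h1 h2 => absurd ⟨h1, h2⟩ h⟩
  choose b hb using hbex
  have hbT : ∀ I ∈ S, ∀ J ∈ U, ∀ ℓ, (m * I + u ℓ, b I J, m * J + v ℓ) ∈ T :=
    fun I hI J hJ ℓ => hWmem _ (hb I J hI hJ) ℓ
  have cancel : ∀ (x y : ℕ) (w : Fin m), m * x + w = m * y + w → x = y := fun x y w h =>
    Nat.eq_of_mul_eq_mul_left hm0 (by omega)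
  obtain ⟨V, hVU, hV, hrb⟩ := exists_rainbow K S U hS hU b
    (fun I hI J hJ J' hJ' h => by
      have h1 := hbT I hI J hJ ⟨0, by omega⟩
      have h2 := hbT I hI J' hJ' ⟨0, by omega⟩
      rw [← h] at h2
      exact cancel _ _ _ (hfun _ _ _ _ h1 h2))
    (fun I hI I' hI' J hJ h => by
      have h1 := hbT I hI J hJ ⟨0, by omega⟩
      have h2 := hbT I' hI' J hJ ⟨0, by omega⟩
      rw [← h] at h2
      exact cancel _ _ _ (hinj _ _ _ _ h1 h2))
  have hWne : W.Nonempty := by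
    obtain ⟨I, hI⟩ : S.Nonempty := card_pos.1 (by omega)
    obtain ⟨J, hJ⟩ : V.Nonempty := card_pos.1 (by omega)
    exact ⟨_, hb I J hI (hVU hJ)⟩
  have off : ∀ (x y : ℕ) (w z : Fin m), m * x + w = m * y + z → x = y ∧ w = z := by
    intro x y w z h
    have h1 := congrArg (· % m) h
    simp only [Nat.mul_add_mod, Nat.mod_eq_of_lt w.2, Nat.mod_eq_of_lt z.2] at h1
    obtain rfl := Fin.ext h1
    exact ⟨cancel _ _ _ h, rfl⟩
  set σ := (S.equivFinOfCardEq hS).symm with hσ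
  set τ := (V.equivFinOfCardEq hV).symm with hτ
  refine ⟨fun i ℓ => m * (σ i : ℕ) + u ℓ, fun j ℓ => m * (τ j : ℕ) + v ℓ,
    fun i j => b (σ i) (τ j), ?_, ?_, ?_, ?_⟩
  · rintro ⟨i, ℓ⟩ ⟨i', ℓ'⟩ h
    obtain ⟨h1, h2⟩ := off _ _ _ _ h
    simp only [Prod.mk.injEq]
    exact ⟨σ.injective (Subtype.ext h1), huinj hWne h2⟩
  · rintro ⟨i, ℓ⟩ ⟨i', ℓ'⟩ h
    obtain ⟨h1, h2⟩ := off _ _ _ _ h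
    simp only [Prod.mk.injEq]
    exact ⟨τ.injective (Subtype.ext h1), hvinj hWne h2⟩
  · rintro ⟨i, j⟩ ⟨i', j'⟩ h
    obtain ⟨h1, h2⟩ := hrb _ (σ i).2 _ (σ i').2 _ (τ j).2 _ (τ j').2 h
    simp only [Prod.mk.injEq]
    exact ⟨σ.injective (Subtype.ext h1), τ.injective (Subtype.ext h2)⟩
  · exact fun i j ℓ => hbT _ (σ i).2 _ (hVU (τ j).2) ℓ

/-! ### Geometry of avoiding sets -/

/-- Twice the signed area of the triangle `o p q`; as a function of `o` alone it is affine, and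
its zero set is the line `p q` when `p ≠ q`. -/
def cross (o p q : Pt) : ℝ :=
  (p.1 - o.1) * (q.2 - o.2) - (p.2 - o.2) * (q.1 - o.1)

lemma mem_lineThrough_of_cross_eq_zero {p q z : Pt} (hpq : p ≠ q) (h : cross z p q = 0) :
    z ∈ lineThrough p q := by
  unfold cross at h
  have key : ∃ r : ℝ, z = AffineMap.lineMap p q r := by
    by_cases h1 : q.1 = p.1
    · have h2 : q.2 - p.2 ≠ 0 := fun h2 => hpq (Prod.ext h1.symm (by linarith))
      refine ⟨(z.2 - p.2) / (q.2 - p.2), ?_⟩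
      have h3 : z.1 = p.1 := by
        rw [h1] at h
        have : (p.1 - z.1) * (q.2 - p.2) = 0 := by linarith
        rcases mul_eq_zero.1 this with h | h
        · linarith
        · exact absurd h h2
      ext
      · simp [AffineMap.lineMap_apply, h1, h3]
      · simp [AffineMap.lineMap_apply]
        field_simp
        ring
    · have h2 : q.1 - p.1 ≠ 0 := fun h2 => h1 (by linarith)
      refine ⟨(z.1 - p.1) / (q.1 - p.1), ?_⟩
      ext
      · simp [AffineMap.lineMap_apply]
        field_simp
        ring
      · simp [AffineMap.lineMap_apply]
        field_simp
        linarith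
  obtain ⟨r, rfl⟩ := key
  exact AffineMap.lineMap_mem_affineSpan_pair r p q

/-- All points of `Q` lie strictly on the same side of the line through two points of `P`. -/
lemma AvoidsHull.cross_mul_pos {P Q : Finset Pt} (h : AvoidsHull P Q) {p q x y : Pt}
    (hp : p ∈ P) (hq : q ∈ P) (hpq : p ≠ q) (hx : x ∈ Q) (hy : y ∈ Q) :
    0 < cross x p q * cross y p q := by
  have hd := Set.disjoint_left.1 (h p hp q hq hpq)
  have hx' : x ∈ convexHull ℝ (Q : Set Pt) := subset_convexHull ℝ _ hx
  have hy' : y ∈ convexHull ℝ (Q : Set Pt) := subset_convexHull ℝ _ hy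
  have hxne : cross x p q ≠ 0 := fun h0 => hd (mem_lineThrough_of_cross_eq_zero hpq h0) hx'
  have hyne : cross y p q ≠ 0 := fun h0 => hd (mem_lineThrough_of_cross_eq_zero hpq h0) hy'
  by_contra hcon
  -- opposite signs: the segment from `x` to `y` meets the line
  have hden : cross x p q - cross y p q ≠ 0 := fun h0 => by
    have : cross x p q = cross y p q := by linarith
    rw [← this] at hcon
    exact hcon (mul_self_pos.2 hxne)
  set t := cross x p q / (cross x p q - cross y p q) with ht
  have ht0 : 0 ≤ t ∧ 0 ≤ 1 - t := by
    have e : 1 - t = - cross y p q / (cross x p q - cross y p q) := by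
      rw [ht]; field_simp; ring
    rw [e, ht]
    rcases lt_or_gt_of_ne hxne with h1 | h1 <;> rcases lt_or_gt_of_ne hyne with h2 | h2
    · exact absurd (mul_pos_of_neg_of_neg h1 h2) hcon
    · exact ⟨div_nonneg_of_nonpos h1.le (by linarith),
        div_nonneg_of_nonpos (by linarith) (by linarith)⟩
    · exact ⟨div_nonneg h1.le (by linarith), div_nonneg (by linarith) (by linarith)⟩
    · exact absurd (mul_pos h1 h2) hcon
  have hz : (1 - t) • x + t • y ∈ convexHull ℝ (Q : Set Pt) :=
    (convex_convexHull ℝ _) hx' hy' ht0.2 ht0.1 (by ring)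
  refine hd (mem_lineThrough_of_cross_eq_zero hpq ?_) hz
  have haff : cross ((1 - t) • x + t • y) p q = (1 - t) * cross x p q + t * cross y p q := by
    simp only [cross, Prod.fst_add, Prod.snd_add, Prod.smul_fst, Prod.smul_snd, smul_eq_mul]
    ring
  rw [haff, ht]
  field_simp
  ring

lemma AvoidsHull.cross_ne_zero {P Q : Finset Pt} (h : AvoidsHull P Q) {p q x : Pt}
    (hp : p ∈ P) (hq : q ∈ P) (hpq : p ≠ q) (hx : x ∈ Q) : cross x p q ≠ 0 := fun h0 => by
  have := h.cross_mul_pos hp hq hpq hx hx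
  simp [h0] at this

lemma AvoidsHull.ne {P Q : Finset Pt} (h : AvoidsHull P Q) (hP : 2 ≤ P.card) {p x : Pt}
    (hp : p ∈ P) (hx : x ∈ Q) : p ≠ x := by
  rintro rfl
  obtain ⟨q, hq, hqp⟩ := Finset.exists_mem_ne (s := P) (by omega) p
  refine h.cross_ne_zero hp hq hqp.symm hx ?_
  simp [cross]

lemma exists_ratio {a b c : Pt} (h : Collinear ℝ {a, b, c}) (hab : a ≠ b) (hcb : c ≠ b) :
    ∃ r : ℝ, r ≠ 0 ∧ c.1 - b.1 = r * (a.1 - b.1) ∧ c.2 - b.2 = r * (a.2 - b.2) := by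
  obtain ⟨v, hv⟩ := (collinear_iff_of_mem (p₀ := b) (by simp)).1 h
  obtain ⟨x, hx⟩ := hv a (by simp)
  obtain ⟨y, hy⟩ := hv c (by simp)
  have hx0 : x ≠ 0 := fun h0 => hab (by simpa [h0] using hx)
  have hy0 : y ≠ 0 := fun h0 => hcb (by simpa [h0] using hy)
  refine ⟨y / x, div_ne_zero hy0 hx0, ?_, ?_⟩ <;>
  · rw [hx, hy]
    simp
    field_simp

/-- Ranking the elements of `A` by a real key. -/
lemma exists_rank {α : Type*} (A : Finset α) (key : α → ℝ) :
    ∃ f : α → ℕ, (∀ a ∈ A, f a < A.card) ∧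
      ∀ a ∈ A, ∀ a' ∈ A, (f a < f a' ↔ key a < key a') := by
  classical
  have hlt : ∀ a ∈ A, ∀ a' ∈ A, key a < key a' →
      (A.filter fun x => key x < key a).card < (A.filter fun x => key x < key a').card := by
    intro a ha a' _ h
    refine Finset.card_lt_card ⟨fun x hx => ?_, fun hsub => ?_⟩
    · rw [Finset.mem_filter] at hx ⊢
      exact ⟨hx.1, hx.2.trans h⟩
    · have := hsub (Finset.mem_filter.2 ⟨ha, h⟩)
      simp at this
  refine ⟨fun a => (A.filter fun x => key x < key a).card, fun a ha => ?_,
    fun a ha a' ha' => ⟨fun h => ?_, hlt a ha a' ha'⟩⟩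
  · refine Finset.card_lt_card ⟨Finset.filter_subset _ _, fun hsub => ?_⟩
    have := hsub ha
    simp at this
  · by_contra hcon
    push Not at hcon
    rcases hcon.lt_or_eq with h1 | h1
    · exact lt_asymm h (hlt a' ha' a ha h1)
    · simp [h1] at h

/-- Some line direction through `o` misses every point of `S`: the functional
`(x, y) ↦ y + s * x` does not vanish at any `p - o`. -/
lemma exists_transversal (o : Pt) (S : Finset Pt) (hS : ∀ p ∈ S, p ≠ o) :
    ∃ s : ℝ, ∀ p ∈ S, (p.2 - o.2) + s * (p.1 - o.1) ≠ 0 := by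
  classical
  obtain ⟨s, hs⟩ := Infinite.exists_notMem_finset
    (S.image fun p => -(p.2 - o.2) / (p.1 - o.1))
  refine ⟨s, fun p hp h => ?_⟩
  by_cases h1 : p.1 - o.1 = 0
  · rw [h1] at h
    exact hS p hp (Prod.ext (by linarith) (by linarith))
  · refine hs (Finset.mem_image.2 ⟨p, hp, ?_⟩)
    field_simp
    linarith

/-- Writing `ω p = (p.2 - o.2) + s * (p.1 - o.1)`, the quotient `(p.1 - o.1) / ω p` is a
coordinate on the pencil of lines through `o`. Its order is read off from `cross` after each
vector `p - o` is flipped into the half-plane `ω > 0`. -/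
lemma key_lt_iff {o a a' : Pt} {s : ℝ} (h : (a.2 - o.2) + s * (a.1 - o.1) ≠ 0)
    (h' : (a'.2 - o.2) + s * (a'.1 - o.1) ≠ 0) :
    (a.1 - o.1) / ((a.2 - o.2) + s * (a.1 - o.1)) <
        (a'.1 - o.1) / ((a'.2 - o.2) + s * (a'.1 - o.1)) ↔
      cross o a a' * (((a.2 - o.2) + s * (a.1 - o.1)) * ((a'.2 - o.2) + s * (a'.1 - o.1))) < 0 := by
  have hc : cross o a a' = (a.1 - o.1) * ((a'.2 - o.2) + s * (a'.1 - o.1))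
      - (a'.1 - o.1) * ((a.2 - o.2) + s * (a.1 - o.1)) := by unfold cross; ring
  rw [hc]
  generalize (a.2 - o.2) + s * (a.1 - o.1) = w at *
  generalize (a'.2 - o.2) + s * (a'.1 - o.1) = w' at *
  generalize a.1 - o.1 = x at *
  generalize a'.1 - o.1 = x' at *
  have hw : 0 < (w * w') ^ 2 := by positivity
  have e : (x * w' - x' * w) * (w * w') = (w * w') ^ 2 * (x / w - x' / w') := by
    field_simp
  rw [e, mul_neg_iff, ← sub_neg]
  constructor
  · exact fun h => Or.inl ⟨hw, h⟩
  · rintro (h | h)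
    · exact h.2
    · linarith [h.1]

/-- Fixed linear orders on `A` and `C` for which the matching of every `b ∈ B` is a union of
two increasing matchings. The orders are the slope orders seen from one `o ∈ B`, cut open along a
transversal `ω`. The sign of `cross b a a'` does not depend on `b ∈ B`, and
`cross b c c' = r * r' * cross b a a'` for matched points with `c - b = r (a - b)` and
`c' - b = r' (a' - b)`. Hence the order is preserved as soon as `r * ω a * ω c` and
`r' * ω a' * ω c'` have the same sign, which is what `δ` records. -/
lemma exists_orders {A B C : Finset Pt} (hA : 2 ≤ A.card) (hC : 2 ≤ C.card) (hB : B.Nonempty)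
    (hAB : AvoidsHull A B) (hCB : AvoidsHull C B) :
    ∃ (f g : Pt → ℕ) (δ : Pt × Pt × Pt → Bool),
      (∀ a ∈ A, f a < A.card) ∧ (∀ c ∈ C, g c < C.card) ∧
      Set.InjOn f A ∧ Set.InjOn g C ∧
      ∀ a ∈ A, ∀ a' ∈ A, ∀ b ∈ B, ∀ c ∈ C, ∀ c' ∈ C,
        Collinear ℝ {a, b, c} → Collinear ℝ {a', b, c'} → δ (a, b, c) = δ (a', b, c') →
        f a < f a' → g c < g c' := by
  classical
  obtain ⟨o, ho⟩ := hB
  obtain ⟨s, hs⟩ := exists_transversal o (A ∪ C) (fun p hp => by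
    rcases Finset.mem_union.1 hp with h | h
    exacts [hAB.ne hA h ho, hCB.ne hC h ho])
  have hsA : ∀ p ∈ A, (p.2 - o.2) + s * (p.1 - o.1) ≠ 0 :=
    fun p hp => hs p (Finset.mem_union_left _ hp)
  have hsC : ∀ p ∈ C, (p.2 - o.2) + s * (p.1 - o.1) ≠ 0 :=
    fun p hp => hs p (Finset.mem_union_right _ hp)
  set ω : Pt → ℝ := fun p => (p.2 - o.2) + s * (p.1 - o.1) with hω
  set key : Pt → ℝ := fun p => (p.1 - o.1) / ω p with hkey
  obtain ⟨f, hf, hfk⟩ := exists_rank A key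
  obtain ⟨g, hg, hgk⟩ := exists_rank C key
  have inj : ∀ P : Finset Pt, AvoidsHull P B → (∀ p ∈ P, ω p ≠ 0) → ∀ f : Pt → ℕ,
      (∀ a ∈ P, ∀ a' ∈ P, (f a < f a' ↔ key a < key a')) → Set.InjOn f P := by
    intro P hP hP0 f hf a ha a' ha' h
    by_contra hne
    have h1 : cross o a a' * (ω a * ω a') ≠ 0 :=
      mul_ne_zero (hP.cross_ne_zero ha ha' hne ho) (mul_ne_zero (hP0 a ha) (hP0 a' ha'))
    have hanti : cross o a' a * (ω a' * ω a) = - (cross o a a' * (ω a * ω a')) := by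
      unfold cross; ring
    rcases lt_or_gt_of_ne h1 with h2 | h2
    · have := (hf a ha a' ha').2 ((key_lt_iff (hP0 a ha) (hP0 a' ha')).2 h2)
      omega
    · have := (hf a' ha' a ha).2 ((key_lt_iff (hP0 a' ha') (hP0 a ha)).2
        (by change cross o a' a * (ω a' * ω a) < 0; linarith))
      omega
  have hgi := inj C hCB hsC g hgk
  -- `dot t` has the sign of the ratio `(c - b) / (a - b)`
  set dot : Pt × Pt × Pt → ℝ := fun t =>
    (t.2.2.1 - t.2.1.1) * (t.1.1 - t.2.1.1) + (t.2.2.2 - t.2.1.2) * (t.1.2 - t.2.1.2) with hdot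
  refine ⟨f, g, fun t => decide (0 < dot t * (ω t.1 * ω t.2.2)), hf, hg,
    inj A hAB hsA f hfk, hgi, ?_⟩
  intro a ha a' ha' b hb c hc c' hc' h h' hδ hlt
  have hab := hAB.ne hA ha hb
  have hab' := hAB.ne hA ha' hb
  obtain ⟨r, hr, hr1, hr2⟩ := exists_ratio h hab (hCB.ne hC hc hb)
  obtain ⟨r', hr', hr1', hr2'⟩ := exists_ratio h' hab' (hCB.ne hC hc' hb)
  have haa : a ≠ a' := by rintro rfl; omega
  have hcr : cross b c c' = r * r' * cross b a a' := by
    unfold cross; rw [hr1, hr2, hr1', hr2']; ring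
  have hcne : cross b c c' ≠ 0 := by
    rw [hcr]; exact mul_ne_zero (mul_ne_zero hr hr') (hAB.cross_ne_zero ha ha' haa hb)
  have hcc : c ≠ c' := by
    rintro rfl
    apply hcne
    unfold cross; ring
  have nsq : ∀ x : Pt, x ≠ b → 0 < (x.1 - b.1) ^ 2 + (x.2 - b.2) ^ 2 := by
    intro x hx
    by_contra hcon
    have h1 : x.1 - b.1 = 0 := by nlinarith [sq_nonneg (x.1 - b.1), sq_nonneg (x.2 - b.2)]
    have h2 : x.2 - b.2 = 0 := by nlinarith [sq_nonneg (x.1 - b.1), sq_nonneg (x.2 - b.2)]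
    exact hx (Prod.ext (by linarith) (by linarith))
  have hd : dot (a, b, c) = r * ((a.1 - b.1) ^ 2 + (a.2 - b.2) ^ 2) := by
    simp only [hdot]; rw [hr1, hr2]; ring
  have hd' : dot (a', b, c') = r' * ((a'.1 - b.1) ^ 2 + (a'.2 - b.2) ^ 2) := by
    simp only [hdot]; rw [hr1', hr2']; ring
  have hn := nsq a hab
  have hn' := nsq a' hab'
  have hwa := hsA a ha
  have hwa' := hsA a' ha'
  have hwc := hsC c hc
  have hwc' := hsC c' hc'
  have hiff : 0 < dot (a, b, c) * (ω a * ω c) ↔ 0 < dot (a', b, c') * (ω a' * ω c') := by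
    simpa only [decide_eq_decide] using hδ
  rw [hd, hd', mul_right_comm, mul_right_comm r', mul_pos_iff_of_pos_right hn,
    mul_pos_iff_of_pos_right hn'] at hiff
  have hpos : 0 < (r * (ω a * ω c)) * (r' * (ω a' * ω c')) := by
    have h1 : r * (ω a * ω c) ≠ 0 := mul_ne_zero hr (mul_ne_zero hwa hwc)
    have h2 : r' * (ω a' * ω c') ≠ 0 := mul_ne_zero hr' (mul_ne_zero hwa' hwc')
    rcases lt_or_gt_of_ne h1 with h3 | h3
    · have : ¬ 0 < r' * (ω a' * ω c') := fun h4 => absurd (hiff.2 h4) (by linarith)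
      exact mul_pos_of_neg_of_neg h3 (lt_of_le_of_ne (not_lt.1 this) h2)
    · exact mul_pos h3 (hiff.1 h3)
  -- the sign is carried from `o` to `b` on the side of `A`, across the matching, and back to `o`
  have hka : cross o a a' * (ω a * ω a') < 0 :=
    (key_lt_iff hwa hwa').1 ((hfk a ha a' ha').1 hlt)
  refine (hgk c hc c' hc').2 ((key_lt_iff hwc hwc').2 ?_)
  change cross o c c' * (ω c * ω c') < 0
  have sA := hAB.cross_mul_pos ha ha' haa ho hb
  have sC := hCB.cross_mul_pos hc hc' hcc ho hb
  have hkb : cross b a a' * (ω a * ω a') < 0 := by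
    by_contra hcon
    have : 0 ≤ (cross o a a' * cross b a a') * (ω a * ω a') ^ 2 * (-1) := by
      have := mul_nonneg (not_lt.1 hcon) (neg_nonneg.2 hka.le)
      calc (0 : ℝ) ≤ _ := this
        _ = _ := by ring
    have h2 : 0 < (ω a * ω a') ^ 2 := by
      have := mul_ne_zero hwa hwa'
      positivity
    have := mul_pos sA h2
    linarith
  have hkc : cross b c c' * (ω c * ω c') < 0 := by
    by_contra hcon
    have h1 : 0 < (cross b a a') ^ 2 := by
      have := hAB.cross_ne_zero ha ha' haa hb
      positivity
    have h2 := mul_nonneg (not_lt.1 hcon) (neg_nonneg.2 hkb.le)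
    have h3 := mul_pos hpos h1
    have h4 : cross b c c' * (ω c * ω c') * -(cross b a a' * (ω a * ω a')) =
        - (r * (ω a * ω c) * (r' * (ω a' * ω c')) * cross b a a' ^ 2) := by
      rw [hcr]; ring
    linarith
  by_contra hcon
  have h1 := mul_nonneg (not_lt.1 hcon) (neg_nonneg.2 hkc.le)
  have h2 : 0 < (ω c * ω c') ^ 2 := by
    have := mul_ne_zero hwc hwc'
    positivity
  have h3 := mul_pos sC h2
  have h4 : cross o c c' * (ω c * ω c') * -(cross b c c' * (ω c * ω c')) =
      - (cross o c c' * cross b c c' * (ω c * ω c') ^ 2) := by ring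
  linarith

lemma triple_right_unique {A B C : Finset Pt} (hA : 2 ≤ A.card) (hC : 2 ≤ C.card)
    (hAB : AvoidsHull A B) (hCB : AvoidsHull C B) {a b c c' : Pt}
    (ha : a ∈ A) (hb : b ∈ B) (hc : c ∈ C) (hc' : c' ∈ C)
    (h : Collinear ℝ {a, b, c}) (h' : Collinear ℝ {a, b, c'}) : c = c' := by
  obtain ⟨r, hr, hr1, hr2⟩ := exists_ratio h (hAB.ne hA ha hb) (hCB.ne hC hc hb)
  obtain ⟨r', hr', hr1', hr2'⟩ := exists_ratio h' (hAB.ne hA ha hb) (hCB.ne hC hc' hb)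
  by_contra hne
  apply hCB.cross_ne_zero hc hc' hne hb
  unfold cross; rw [hr1', hr2', hr1, hr2]; ring

/-- Two edges of a matching determine the middle point, as the intersection of two distinct
lines: if `b ≠ b'`, both `a` and `a'` would lie on the line `b b'`. -/
lemma middle_unique {A B C : Finset Pt} (hA : 2 ≤ A.card) (hC : 2 ≤ C.card)
    (hAC : AvoidsHull A C) (hAB : AvoidsHull A B) (hCB : AvoidsHull C B) {a a' b b' c c' : Pt}
    (ha : a ∈ A) (ha' : a' ∈ A) (haa : a ≠ a') (hb : b ∈ B) (hb' : b' ∈ B)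
    (hc : c ∈ C) (hc' : c' ∈ C)
    (h1 : Collinear ℝ {a, b, c}) (h2 : Collinear ℝ {a', b, c'})
    (h3 : Collinear ℝ {a, b', c}) (h4 : Collinear ℝ {a', b', c'}) : b = b' := by
  have aux : ∀ a ∈ A, ∀ c ∈ C, Collinear ℝ {a, b, c} → Collinear ℝ {a, b', c} →
      ∃ t : ℝ, b'.1 - b.1 = t * (a.1 - b.1) ∧ b'.2 - b.2 = t * (a.2 - b.2) := by
    intro a ha c hc h1 h3
    obtain ⟨r, -, hr1, hr2⟩ := exists_ratio h1 (hAB.ne hA ha hb) (hCB.ne hC hc hb)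
    obtain ⟨s, -, hs1, hs2⟩ := exists_ratio h3 (hAB.ne hA ha hb') (hCB.ne hC hc hb')
    have hs : 1 - s ≠ 0 := fun h => by
      obtain rfl : s = 1 := by linarith
      exact hAC.ne hA ha hc (Prod.ext (by linarith) (by linarith))
    refine ⟨(r - s) / (1 - s), ?_, ?_⟩
    · field_simp; linarith
    · field_simp; linarith
  obtain ⟨t, ht1, ht2⟩ := aux a ha c hc h1 h3
  obtain ⟨t', ht1', ht2'⟩ := aux a' ha' c' hc' h2 h4
  have hx := hAB.cross_ne_zero ha ha' haa hb
  have h0 : t * t' * cross b a a' = 0 := by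
    have : t * t' * cross b a a' =
        (t * (a.1 - b.1)) * (t' * (a'.2 - b.2)) - (t * (a.2 - b.2)) * (t' * (a'.1 - b.1)) := by
      unfold cross; ring
    rw [this, ← ht1, ← ht2, ← ht1', ← ht2']; ring
  rcases mul_eq_zero.1 ((mul_eq_zero.1 h0).resolve_right hx) with h | h
  · rw [h] at ht1 ht2
    exact Prod.ext (by linarith) (by linarith)
  · rw [h] at ht1' ht2'
    exact Prod.ext (by linarith) (by linarith)

/-! ### Choice of parameters and conclusion -/

/-- The integer `q = ⌈n ^ (1 / (2 D))⌉`, for which `q ^ D` is of order `√n`. -/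
lemma exists_scale {D M n : ℕ} (hD : 0 < D) (hn : (M * 2 ^ D) ^ 2 + 2 ≤ n) :
    ∃ q : ℕ, 0 < q ∧ (n : ℝ) ^ ((1 : ℝ) / (2 * D)) ≤ q ∧ M * q ^ D < n := by
  have hn1 : (1 : ℝ) ≤ n := by
    have : 1 ≤ n := by omega
    exact_mod_cast this
  have hn0 : (0 : ℝ) < n := by linarith
  set x := (n : ℝ) ^ ((1 : ℝ) / (2 * D)) with hx
  have hx1 : 1 ≤ x := Real.one_le_rpow hn1 (by positivity)
  have hxD : x ^ D * x ^ D = n := by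
    rw [← pow_add, hx, ← Real.rpow_natCast, ← Real.rpow_mul hn0.le]
    have : (1 : ℝ) / (2 * D) * ((D + D : ℕ) : ℝ) = 1 := by
      push_cast
      field_simp
      norm_num
    rw [this, Real.rpow_one]
  refine ⟨⌈x⌉₊, Nat.ceil_pos.2 (by linarith), Nat.le_ceil x, ?_⟩
  have hq : (⌈x⌉₊ : ℝ) ≤ 2 * x := by
    have := Nat.ceil_lt_add_one (a := x) (by linarith)
    linarith
  have hbig : (M * 2 ^ D : ℝ) < x ^ D := by
    refine lt_of_pow_lt_pow_left₀ 2 (by positivity) ?_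
    have h1 : (M * 2 ^ D) ^ 2 < n := by omega
    have h2 : ((M : ℝ) * 2 ^ D) ^ 2 < n := by exact_mod_cast h1
    rw [pow_two (x ^ D), hxD]
    exact h2
  have : (M * (⌈x⌉₊ : ℝ) ^ D) < n := calc
    M * (⌈x⌉₊ : ℝ) ^ D ≤ M * (2 * x) ^ D := by gcongr
    _ = (M * 2 ^ D) * x ^ D := by rw [mul_pow]; ring
    _ < x ^ D * x ^ D := by gcongr
    _ = n := hxD
  exact_mod_cast this

/-- For every `k ≥ 1` there are `γ_k > 0`, `μ_k' > 0` and `n₀` such that: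
if `A, C` are mutually avoiding `n`-point sets (`n ≥ n₀`), the lines of `A` and of `C`
avoid the convex hull of the `n`-point set `B`, and the set `T` of all collinear triples of
`A × B × C` satisfies `|T| ≥ μ_k' n^{2−γ_k}`, then `T` contains a `k`-system in which the
`k²` middle points are pairwise distinct; in particular a configuration of exactly `3k²`
points spanning `k³` triples of `T`. -/
theorem statement7 (k : ℕ) (hk : 0 < k) :
    ∃ γ μ : ℝ, 0 < γ ∧ 0 < μ ∧ ∃ n₀ : ℕ, ∀ n : ℕ, n₀ ≤ n →
      ∀ A B C : Finset Pt, A.card = n → B.card = n → C.card = n →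
        AvoidsHull A C → AvoidsHull C A → AvoidsHull A B → AvoidsHull C B →
        ∀ T : Finset (Pt × Pt × Pt),
          (∀ t : Pt × Pt × Pt,
            t ∈ T ↔ t.1 ∈ A ∧ t.2.1 ∈ B ∧ t.2.2 ∈ C ∧ Collinear ℝ {t.1, t.2.1, t.2.2}) →
          μ * (n : ℝ) ^ ((2 : ℝ) - γ) ≤ (T.card : ℝ) →
          ∃ As Cs bs : Fin k → Fin k → Pt,
            IsKSystem A B C (T : Set (Pt × Pt × Pt)) k As Cs bs ∧
            (Function.Injective fun p : Fin k × Fin k => bs p.1 p.2) ∧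
            ((Finset.univ.image fun p : Fin k × Fin k => As p.1 p.2) ∪
             (Finset.univ.image fun p : Fin k × Fin k => Cs p.1 p.2) ∪
             (Finset.univ.image fun p : Fin k × Fin k => bs p.1 p.2)).card = 3 * k ^ 2 := by
  classical
  -- tuples of length `k + 1 ≥ 2` are used so that two edges determine `b` also when `k = 1`
  set K := k + 1 with hK
  set D := K * (2 * K + 2) with hD
  set M := K ^ 3 * (4 * (16 * K) ^ (2 * K + 1)) ^ K with hM
  have hD0 : 0 < D := by positivity
  refine ⟨1 / (2 * D), 1, by positivity, one_pos, (M * 2 ^ D) ^ 2 + 2, ?_⟩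
  intro n hn A B C hA hB hC hAC hCA hAB hCB T hT hcard
  have hn0 : (0 : ℝ) < n := by
    have : 0 < n := by omega
    exact_mod_cast this
  have hA2 : 2 ≤ A.card := by omega
  have hC2 : 2 ≤ C.card := by omega
  have hBne : B.Nonempty := Finset.card_pos.1 (by omega)
  obtain ⟨q, hq0, hqn, hqD⟩ := exists_scale hD0 (M := M) hn
  obtain ⟨f, g, δ, hf, hg, hfi, hgi, hmono⟩ := exists_orders hA2 hC2 hBne hAB hCB
  have hTm : ∀ {a b c : Pt}, (a, b, c) ∈ T →
      a ∈ A ∧ b ∈ B ∧ c ∈ C ∧ Collinear ℝ {a, b, c} := fun {a b c} h => (hT (a, b, c)).1 h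
  set fi := Function.invFunOn f (A : Set Pt) with hfid
  set gi := Function.invFunOn g (C : Set Pt) with hgid
  -- the triples with the points of `A` and `C` replaced by their ranks
  set T' : Finset (ℕ × Pt × ℕ) := T.image fun t => (f t.1, t.2.1, g t.2.2) with hT'
  have hdec : ∀ {x : ℕ} {b : Pt} {y : ℕ}, (x, b, y) ∈ T' →
      (fi x, b, gi y) ∈ T ∧ f (fi x) = x ∧ g (gi y) = y := by
    intro x b y h
    obtain ⟨⟨a, b', c⟩, ht, h⟩ := Finset.mem_image.1 h
    simp only [Prod.mk.injEq] at h
    obtain ⟨rfl, rfl, rfl⟩ := h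
    obtain ⟨ha, -, hc, -⟩ := hTm ht
    have h1 : fi (f a) = a := hfi.leftInvOn_invFunOn ha
    have h2 : gi (g c) = c := hgi.leftInvOn_invFunOn hc
    rw [h1, h2]
    exact ⟨ht, rfl, rfl⟩
  have hT'card : T'.card = T.card := by
    refine Finset.card_image_of_injOn ?_
    rintro ⟨a, b, c⟩ ht ⟨a', b', c'⟩ ht' h
    obtain ⟨ha, -, hc, -⟩ := hTm ht
    obtain ⟨ha', -, hc', -⟩ := hTm ht'
    simp only [Prod.mk.injEq] at h ⊢
    exact ⟨hfi ha ha' h.1, h.2.1, hgi hc hc' h.2.2⟩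
  have hmany : n ^ 2 ≤ q * T'.card := by
    rw [hT'card]
    have h1 : (n : ℝ) ^ 2 ≤ q * T.card := calc
      (n : ℝ) ^ 2 = (n : ℝ) ^ ((1 : ℝ) / (2 * D)) * (n : ℝ) ^ ((2 : ℝ) - 1 / (2 * D)) := by
        rw [← Real.rpow_add hn0, ← Real.rpow_natCast]
        congr 1
        push_cast
        ring
      _ ≤ q * T.card := by
        rw [one_mul] at hcard
        gcongr
    exact_mod_cast h1
  have hlarge : K ^ 3 * (4 * q * (16 * K * q) ^ (2 * K + 1)) ^ K < n := by
    refine lt_of_eq_of_lt ?_ hqD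
    rw [hM, hD, mul_comm K (2 * K + 2), pow_mul, mul_assoc (K ^ 3), ← mul_pow]
    congr 2
    rw [mul_pow (16 * K) q, show 2 * K + 2 = (2 * K + 1) + 1 by ring, pow_succ q (2 * K + 1)]
    ring
  obtain ⟨X, Y, bs, hX, hY, hbs, hsys⟩ := exists_system (K := K) (by omega) hq0 T' B hB.le
    (by
      intro x b y h
      obtain ⟨ht, hx, hy⟩ := hdec h
      obtain ⟨ha, hb, hc, -⟩ := hTm ht
      have h1 := hf _ ha
      have h2 := hg _ hc
      rw [hx] at h1
      rw [hy] at h2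
      exact ⟨by omega, hb, by omega⟩)
    (by
      intro x b y y' h h'
      obtain ⟨ht, hx, hy⟩ := hdec h
      obtain ⟨ht', -, hy'⟩ := hdec h'
      obtain ⟨ha, hb, hc, hcol⟩ := hTm ht
      obtain ⟨-, -, hc', hcol'⟩ := hTm ht'
      rw [← hy, ← hy', triple_right_unique hA2 hC2 hAB hCB ha hb hc hc' hcol hcol'])
    (by
      intro x x' b y h h'
      obtain ⟨ht, hx, hy⟩ := hdec h
      obtain ⟨ht', hx', -⟩ := hdec h'
      obtain ⟨ha, hb, hc, hcol⟩ := hTm ht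
      obtain ⟨ha', -, -, hcol'⟩ := hTm ht'
      have hrev : ∀ a b c : Pt, ({a, b, c} : Set Pt) = {c, b, a} := fun a b c => by
        ext z; simp only [Set.mem_insert_iff, Set.mem_singleton_iff]; tauto
      rw [hrev] at hcol hcol'
      rw [← hx, ← hx', triple_right_unique hC2 hA2 hCB hAB hc hb ha ha' hcol hcol'])
    (by
      intro x x' b b' y y' hne h1 h2 h3 h4
      obtain ⟨t1, hx, hy⟩ := hdec h1
      obtain ⟨t2, hx', hy'⟩ := hdec h2
      obtain ⟨t3, -, -⟩ := hdec h3
      obtain ⟨t4, -, -⟩ := hdec h4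
      obtain ⟨ha, hb, hc, c1⟩ := hTm t1
      obtain ⟨ha', -, hc', c2⟩ := hTm t2
      obtain ⟨-, hb', -, c3⟩ := hTm t3
      obtain ⟨-, -, -, c4⟩ := hTm t4
      refine middle_unique hA2 hC2 hAC hAB hCB ha ha' (fun h => hne ?_) hb hb' hc hc' c1 c2 c3 c4
      rw [← hx, ← hx', h])
    (fun t => δ (fi t.1, t.2.1, gi t.2.2))
    (by
      intro x b y x' y' h h' hd hlt
      obtain ⟨t, hx, hy⟩ := hdec h
      obtain ⟨t', hx', hy'⟩ := hdec h'
      obtain ⟨ha, hb, hc, hcol⟩ := hTm t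
      obtain ⟨ha', -, hc', hcol'⟩ := hTm t'
      have := hmono _ ha _ ha' _ hb _ hc _ hc' hcol hcol' hd (by rw [hx, hx']; exact hlt)
      rwa [hy, hy'] at this)
    hmany hlarge
  have hdecs : ∀ i j ℓ, (fi (X i ℓ), bs i j, gi (Y j ℓ)) ∈ T ∧
      f (fi (X i ℓ)) = X i ℓ ∧ g (gi (Y j ℓ)) = Y j ℓ := fun i j ℓ => hdec (hsys i j ℓ)
  set As : Fin k → Fin k → Pt := fun i ℓ => fi (X i.castSucc ℓ.castSucc) with hAs
  set Cs : Fin k → Fin k → Pt := fun j ℓ => gi (Y j.castSucc ℓ.rev.castSucc) with hCs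
  set Bs : Fin k → Fin k → Pt := fun i j => bs i.castSucc j.castSucc with hBs
  have hmem : ∀ i j ℓ : Fin k, (As i ℓ, Bs i j, Cs j ℓ.rev) ∈ T := by
    intro i j ℓ
    have := (hdecs i.castSucc j.castSucc ℓ.castSucc).1
    simpa only [hAs, hBs, hCs, Fin.rev_rev] using this
  have hAm : ∀ i ℓ, As i ℓ ∈ A := fun i ℓ => (hTm (hmem i i ℓ)).1
  have hBm : ∀ i j, Bs i j ∈ B := fun i j => (hTm (hmem i j i)).2.1
  have hCm : ∀ j ℓ, Cs j ℓ ∈ C := fun j ℓ => by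
    have := (hTm (hmem j j ℓ.rev)).2.2.1
    rwa [Fin.rev_rev] at this
  have hAinj : Function.Injective fun p : Fin k × Fin k => As p.1 p.2 := by
    rintro ⟨i, ℓ⟩ ⟨i', ℓ'⟩ h
    have h1 : X i.castSucc ℓ.castSucc = X i'.castSucc ℓ'.castSucc := by
      rw [← (hdecs i.castSucc i.castSucc ℓ.castSucc).2.1,
        ← (hdecs i'.castSucc i.castSucc ℓ'.castSucc).2.1]
      exact congrArg f h
    have h2 := @hX (i.castSucc, ℓ.castSucc) (i'.castSucc, ℓ'.castSucc) h1
    simpa using h2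
  have hCinj : Function.Injective fun p : Fin k × Fin k => Cs p.1 p.2 := by
    rintro ⟨j, ℓ⟩ ⟨j', ℓ'⟩ h
    have h1 : Y j.castSucc ℓ.rev.castSucc = Y j'.castSucc ℓ'.rev.castSucc := by
      rw [← (hdecs j.castSucc j.castSucc ℓ.rev.castSucc).2.2,
        ← (hdecs j.castSucc j'.castSucc ℓ'.rev.castSucc).2.2]
      exact congrArg g h
    have h2 := @hY (j.castSucc, ℓ.rev.castSucc) (j'.castSucc, ℓ'.rev.castSucc) h1
    simpa using h2
  have hBinj : Function.Injective fun p : Fin k × Fin k => Bs p.1 p.2 := by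
    rintro ⟨i, j⟩ ⟨i', j'⟩ h
    have h2 := @hbs (i.castSucc, j.castSucc) (i'.castSucc, j'.castSucc) h
    simpa using h2
  refine ⟨As, Cs, Bs, ⟨hAinj, hAm, hCinj, hCm, hBm, fun i j ℓ => hmem i j ℓ⟩, hBinj, ?_⟩
  rw [Finset.card_union_of_disjoint, Finset.card_union_of_disjoint,
    Finset.card_image_of_injective _ hAinj, Finset.card_image_of_injective _ hCinj,
    Finset.card_image_of_injective _ hBinj]
  · simp only [Finset.card_univ, Fintype.card_prod, Fintype.card_fin]
    ring
  · rw [Finset.disjoint_left]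
    intro x hx hx'
    obtain ⟨p, -, rfl⟩ := Finset.mem_image.1 hx
    obtain ⟨p', -, h⟩ := Finset.mem_image.1 hx'
    exact hAC.ne hA2 (hAm _ _) (hCm _ _) h.symm
  · rw [Finset.disjoint_left]
    intro x hx hx'
    obtain ⟨p', -, rfl⟩ := Finset.mem_image.1 hx'
    rcases Finset.mem_union.1 hx with hx | hx
    · obtain ⟨p, -, h⟩ := Finset.mem_image.1 hx
      exact hAB.ne hA2 (hAm _ _) (hBm _ _) h
    · obtain ⟨p, -, h⟩ := Finset.mem_image.1 hx
      exact hCB.ne hC2 (hCm _ _) (hBm _ _) h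
end

section
/- For every D > 0 and c > 0 there exist a constant δ > 0 and a threshold n₀ = n₀(c, D) such that the following holds for all n ≥ n₀. Let A ⊆ ℝ² be a set of n points in convex position, and let E be a set of unordered pairs of distinct points of A with |E| ≥ cn² such that the pairs in E determine at most Dn distinct directions. Then there exist a subset S ⊆ A with |S| ≥ δn and a nonzero real polynomial in two variables of total degree at most 2 vanishing at every point of S (i.e., at least δn points of A lie on a possibly degenerate conic). -/
/-- A finite set of points is in convex position: every point of it lies outside the convex
hull of the remaining points (i.e. all points are extreme points of the convex hull). -/
def ConvexPosition (A : Finset Pt) : Prop :=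
  ∀ a ∈ A, a ∉ convexHull ℝ ((A : Set Pt) \ {a})

/-- A set of points lies on a (possibly degenerate) conic: there is a nonzero real
polynomial in two variables of total degree at most `2` vanishing on all of them. -/
def OnConic (S : Set Pt) : Prop :=
  ∃ f : MvPolynomial (Fin 2) ℝ, f ≠ 0 ∧ f.totalDegree ≤ 2 ∧
    ∀ p ∈ S, MvPolynomial.eval ![p.1, p.2] f = 0

/-- The set of directions (one-dimensional linear subspaces of `ℝ²`) determined by a set
`E` of (two-element) pairs of points. -/
def directionsOf (E : Finset (Finset Pt)) : Set (Submodule ℝ Pt) :=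
  {d | ∃ e ∈ E, ∃ p ∈ e, ∃ q ∈ e, p ≠ q ∧ d = Submodule.span ℝ {q - p}}

namespace FewDirections

/-! ### Convex chains and parallel chords -/

/-- The cross product of `b - a` and `b' - a'`; zero iff these vectors are dependent. -/
def par (a b a' b' : Pt) : ℝ :=
  (b.1 - a.1) * (b'.2 - a'.2) - (b.2 - a.2) * (b'.1 - a'.1)

/-- Some non-vertical line through `p` has all other points of `X` strictly above it (`η = 1`) or
strictly below it (`η = -1`). -/
def Tan (η : ℝ) (X : Finset Pt) (p : Pt) : Prop :=
  ∃ s : ℝ, ∀ r ∈ X, r ≠ p → s * (r.1 - p.1) < η * (r.2 - p.2)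

theorem Tan.mono {η : ℝ} {X Y : Finset Pt} {p : Pt} (h : Tan η X p) (hY : Y ⊆ X) : Tan η Y p := by
  obtain ⟨s, hs⟩ := h
  exact ⟨s, fun r hr => hs r (hY hr)⟩

/-- A lower (`η = 1`) or upper (`η = -1`) convex chain: every point has such a supporting line. -/
def Chain (η : ℝ) (X : Finset Pt) : Prop := ∀ p ∈ X, Tan η X p

theorem Chain.fst_injOn {η : ℝ} {X : Finset Pt} (h : Chain η X) {p r : Pt} (hp : p ∈ X)
    (hr : r ∈ X) (e : p.1 = r.1) : p = r := by
  by_contra hne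
  obtain ⟨s, hs⟩ := h p hp
  obtain ⟨t, ht⟩ := h r hr
  have h1 := hs r hr (Ne.symm hne)
  have h2 := ht p hp hne
  rw [e] at h1 h2
  simp only [sub_self, mul_zero] at h1 h2
  linarith

/-- The slopes of consecutive chords, multiplied by `η`, strictly increase along a chain. -/
theorem Chain.slope_lt {η : ℝ} {X : Finset Pt} (h : Chain η X) {p q r : Pt} (hp : p ∈ X)
    (hq : q ∈ X) (hr : r ∈ X) (hpq : p.1 < q.1) (hqr : q.1 < r.1) :
    η * (q.2 - p.2) * (r.1 - q.1) < η * (r.2 - q.2) * (q.1 - p.1) := by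
  obtain ⟨s, hs⟩ := h q hq
  have h1 := hs p hp (by rintro rfl; exact lt_irrefl _ hpq)
  have h2 := hs r hr (by rintro rfl; exact lt_irrefl _ hqr)
  have a1 : 0 < q.1 - p.1 := sub_pos.2 hpq
  have a2 : 0 < r.1 - q.1 := sub_pos.2 hqr
  have h1' : η * (q.2 - p.2) < s * (q.1 - p.1) := by linarith
  have := mul_lt_mul_of_pos_right h1' a2
  have := mul_lt_mul_of_pos_right h2 a1
  linarith

/-- Parallel chords of one chain are nested: the one that starts later ends earlier. -/
theorem Chain.lt_of_par {η : ℝ} {X : Finset Pt} (h : Chain η X) {a b a' b' : Pt}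
    (ha : a ∈ X) (hb : b ∈ X) (ha' : a' ∈ X) (hb' : b' ∈ X) (hab : a.1 < b.1)
    (hab' : a'.1 < b'.1) (haa : a.1 < a'.1) (hpar : par a b a' b' = 0) : b'.1 < b.1 := by
  by_contra! hle
  have h1 := h.slope_lt ha ha' hb' haa hab'
  have p1 : 0 < b.1 - a.1 := sub_pos.2 hab
  have p2 : 0 < b'.1 - a'.1 := sub_pos.2 hab'
  have p3 : 0 < a'.1 - a.1 := sub_pos.2 haa
  have h2 : η * (b.2 - a.2) * (b'.1 - a.1) ≤ η * (b'.2 - a.2) * (b.1 - a.1) := by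
    rcases hle.lt_or_eq with hlt | heq
    · have := h.slope_lt ha hb hb' hab hlt
      nlinarith
    · have := h.fst_injOn hb hb' heq
      subst this; exact le_rfl
  unfold par at hpar
  have h3 : η * ((b.1 - a.1) * (b'.2 - a'.2)) = η * ((b.2 - a.2) * (b'.1 - a'.1)) := by
    rw [sub_eq_zero.1 hpar]
  have h4 : η * (b'.2 - a.2) * (b'.1 - a'.1) < η * (b'.2 - a'.2) * (b'.1 - a.1) := by
    nlinarith
  have p4 : 0 < b'.1 - a.1 := by linarith
  have h5 := mul_lt_mul_of_pos_right h4 p1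
  have h6 := mul_le_mul_of_nonneg_right h2 p2.le
  nlinarith

theorem Chain.eq_of_par {η : ℝ} {X : Finset Pt} (h : Chain η X) {a b b' : Pt}
    (ha : a ∈ X) (hb : b ∈ X) (hb' : b' ∈ X) (hab : a.1 < b.1)
    (hab' : a.1 < b'.1) (hpar : par a b a b' = 0) : b = b' := by
  unfold par at hpar
  have h3 : η * ((b.1 - a.1) * (b'.2 - a.2)) = η * ((b.2 - a.2) * (b'.1 - a.1)) := by
    rw [sub_eq_zero.1 hpar]
  rcases lt_trichotomy b.1 b'.1 with hlt | heq | hlt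
  · have := h.slope_lt ha hb hb' hab hlt
    nlinarith
  · exact h.fst_injOn hb hb' heq
  · have := h.slope_lt ha hb' hb hab' hlt
    nlinarith

theorem pos_same_sign {k u v : ℝ} (h1 : 0 < k * u) (h2 : 0 < k * v) : 0 < u * v := by
  have hk : k ≠ 0 := by rintro rfl; simp at h1
  have h : 0 < k ^ 2 * (u * v) := by
    have := mul_pos h1 h2
    nlinarith
  exact (mul_pos_iff_of_pos_left (by positivity)).1 h

theorem neg_same_sign {k u v : ℝ} (h1 : k * u < 0) (h2 : k * v < 0) : 0 < u * v :=
  pos_same_sign (k := -k) (by linarith) (by linarith)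

/-- Parallel chords from lower points `p, p'` to upper points `q, q'` do not cross: the order of the
lower endpoints is the order of the upper ones. The sign of `g` in the proof tells on which side of the line `pq`
the line `p'q'` lies, and in each case the supporting lines determine the order. -/
theorem mixed_lt {X : Finset Pt} {p q p' q' : Pt}
    (hp : p ∈ X) (hq : q ∈ X) (hp' : p' ∈ X) (hq' : q' ∈ X)
    (tp : Tan 1 X p) (tp' : Tan 1 X p') (tq : Tan (-1) X q) (tq' : Tan (-1) X q')
    (hpq : p ≠ q) (h1 : p ≠ q') (h2 : p' ≠ q)
    (hpar : par p q p' q' = 0) (hlt : p.1 < p'.1) : q.1 < q'.1 := by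
  unfold par at hpar
  have hpp : p ≠ p' := by rintro rfl; exact lt_irrefl _ hlt
  by_cases hv : q.1 = p.1
  · have : q.2 - p.2 ≠ 0 := fun h => hpq (Prod.ext hv.symm (by linarith))
    rw [hv, sub_self, zero_mul, zero_sub, neg_eq_zero, mul_eq_zero] at hpar
    have := hpar.resolve_left this
    linarith
  have hv' : q.1 - p.1 ≠ 0 := sub_ne_zero.2 hv
  obtain ⟨s, hs⟩ : ∃ s, s = (q.2 - p.2) / (q.1 - p.1) := ⟨_, rfl⟩
  have e1 : q.2 - p.2 = s * (q.1 - p.1) := by rw [hs]; field_simp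
  have e2 : q'.2 - p'.2 = s * (q'.1 - p'.1) := by
    rw [hs]; field_simp; linarith
  -- The signed vertical distance of `p'` from the line `pq`; if `g = 0`, then all four points would be
  -- collinear, which the supporting lines exclude.
  obtain ⟨g, hg⟩ : ∃ g, g = (p'.2 - p.2) - s * (p'.1 - p.1) := ⟨_, rfl⟩
  obtain ⟨a, ha⟩ := tp
  obtain ⟨a', ha'⟩ := tp'
  obtain ⟨b, hb⟩ := tq
  obtain ⟨b', hb'⟩ := tq'
  rcases lt_trichotomy g 0 with hg0 | hg0 | hg0
  · have hqq : q ≠ q' := by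
      rintro rfl
      linarith
    have f1 := neg_same_sign (k := a - s) (u := p'.1 - p.1) (v := q'.1 - p.1)
      (by linarith [ha p' hp' hpp.symm]) (by linarith [ha q' hq' h1.symm])
    have f2 : 0 < q'.1 - p.1 := (mul_pos_iff_of_pos_left (by linarith)).1 f1
    have f3 := neg_same_sign (k := -(b' + s)) (u := q'.1 - p.1) (v := q'.1 - q.1)
      (by linarith [hb' p hp h1]) (by linarith [hb' q hq hqq])
    have := (mul_pos_iff_of_pos_left f2).1 f3
    linarith
  · exfalso
    have f1 := neg_same_sign (k := a - s) (u := p'.1 - p.1) (v := q.1 - p.1)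
      (by linarith [ha p' hp' hpp.symm]) (by linarith [ha q hq hpq.symm])
    have f2 := neg_same_sign (k := -(a' - s)) (u := p'.1 - p.1) (v := p'.1 - q.1)
      (by linarith [ha' p hp hpp]) (by linarith [ha' q hq h2.symm])
    have f3 := neg_same_sign (k := b + s) (u := p'.1 - q.1) (v := p.1 - q.1)
      (by linarith [hb p' hp' h2]) (by linarith [hb p hp hpq])
    have g1 := (mul_pos_iff_of_pos_left (by linarith)).1 f1
    have g2 := (mul_pos_iff_of_pos_left (by linarith)).1 f2
    have g3 := (mul_pos_iff_of_pos_left g2).1 f3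
    linarith
  · have hqq : q ≠ q' := by
      rintro rfl
      linarith
    have f1 := neg_same_sign (k := -(a' - s)) (u := p'.1 - p.1) (v := p'.1 - q.1)
      (by linarith [ha' p hp hpp]) (by linarith [ha' q hq h2.symm])
    have f2 := (mul_pos_iff_of_pos_left (by linarith)).1 f1
    have f3 := neg_same_sign (k := b + s) (u := p'.1 - q.1) (v := q'.1 - q.1)
      (by linarith [hb p' hp' h2]) (by linarith [hb q' hq' hqq.symm])
    have := (mul_pos_iff_of_pos_left f2).1 f3
    linarith

/-- From a lower point at most one chord in a given direction goes to an upper point: three collinear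
points cannot all have supporting lines. -/
theorem mixed_eq {X : Finset Pt} {p q q' : Pt}
    (hp : p ∈ X) (hq : q ∈ X) (hq' : q' ∈ X)
    (tp : Tan 1 X p) (tq : Tan (-1) X q) (tq' : Tan (-1) X q')
    (hpq : p ≠ q) (hpq' : p ≠ q') (hpar : par p q p q' = 0) : q = q' := by
  by_contra hqq
  unfold par at hpar
  obtain ⟨a, ha⟩ := tp
  obtain ⟨b, hb⟩ := tq
  obtain ⟨b', hb'⟩ := tq'
  by_cases hv : q.1 = p.1
  · have : q.2 - p.2 ≠ 0 := fun h => hpq (Prod.ext hv.symm (by linarith))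
    rw [hv, sub_self, zero_mul, zero_sub, neg_eq_zero, mul_eq_zero] at hpar
    have h3 := hpar.resolve_left this
    have h4 : q'.1 - q.1 = 0 := by linarith
    have h5 : q.1 - q'.1 = 0 := by linarith
    have k1 := hb q' hq' (Ne.symm hqq)
    have k2 := hb' q hq hqq
    rw [h4] at k1
    rw [h5] at k2
    linarith
  have hv' : q.1 - p.1 ≠ 0 := sub_ne_zero.2 hv
  obtain ⟨s, hs⟩ : ∃ s, s = (q.2 - p.2) / (q.1 - p.1) := ⟨_, rfl⟩
  have e1 : q.2 - p.2 = s * (q.1 - p.1) := by rw [hs]; field_simp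
  have e2 : q'.2 - p.2 = s * (q'.1 - p.1) := by
    rw [hs]; field_simp; linarith
  have f1 := neg_same_sign (k := a - s) (u := q.1 - p.1) (v := q'.1 - p.1)
    (by linarith [ha q hq hpq.symm]) (by linarith [ha q' hq' hpq'.symm])
  have f2 := neg_same_sign (k := b + s) (u := p.1 - q.1) (v := q'.1 - q.1)
    (by linarith [hb p hp hpq]) (by linarith [hb q' hq' (Ne.symm hqq)])
  have f3 := neg_same_sign (k := b' + s) (u := p.1 - q'.1) (v := q.1 - q'.1)
    (by linarith [hb' p hp hpq']) (by linarith [hb' q hq hqq])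
  have := mul_pos f2 f3
  nlinarith [sq_nonneg (q.1 - q'.1), mul_nonneg f1.le (sq_nonneg (q.1 - q'.1))]

/-- Separation of `p` from the convex hull of the other points, with a non-vertical line. -/
theorem exists_tan {A : Finset Pt} (hA : ConvexPosition A) {p : Pt} (hp : p ∈ A) :
    Tan 1 A p ∨ Tan (-1) A p := by
  have hfin : ((A : Set Pt) \ {p}).Finite := A.finite_toSet.subset Set.sdiff_subset
  obtain ⟨f, u, hfu, hf⟩ := geometric_hahn_banach_point_closed (convex_convexHull ℝ _)
    (hfin.isCompact_convexHull ℝ).isClosed (hA p hp)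
  have hlin : ∀ r : Pt, f r = f (1, 0) * r.1 + f (0, 1) * r.2 := by
    intro r
    have : r = r.1 • ((1, 0) : Pt) + r.2 • ((0, 1) : Pt) := by ext <;> simp
    conv_lhs => rw [this]
    rw [map_add, map_smul, map_smul, smul_eq_mul, smul_eq_mul]
    ring
  set x := f (1, 0)
  set y := f (0, 1)
  have key : ∀ r ∈ A, r ≠ p → 0 < x * (r.1 - p.1) + y * (r.2 - p.2) := by
    intro r hr hrp
    have := hf r (subset_convexHull ℝ _ ⟨hr, hrp⟩)
    rw [hlin] at this hfu
    linarith
  -- A vertical supporting line is tilted slightly: the finitely many strict inequalities persist.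
  obtain ⟨z, hz0, hz⟩ : ∃ z : ℝ, z ≠ 0 ∧ ∀ r ∈ A, r ≠ p →
      0 < x * (r.1 - p.1) + z * (r.2 - p.2) := by
    by_cases hy : y = 0
    · have hev : ∀ᶠ z in nhdsWithin (0 : ℝ) (Set.Ioi 0), ∀ r ∈ A, r ≠ p →
          0 < x * (r.1 - p.1) + z * (r.2 - p.2) := by
        rw [Finset.eventually_all]
        intro r hr
        by_cases hrp : r = p
        · exact Filter.Eventually.of_forall fun z h => (h hrp).elim
        have hc : Continuous fun z : ℝ => x * (r.1 - p.1) + z * (r.2 - p.2) := by fun_prop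
        have := (hc.tendsto 0).eventually_const_lt (u := 0)
          (by have := key r hr hrp; rw [hy] at this; simpa using this)
        exact (this.filter_mono nhdsWithin_le_nhds).mono fun z hz _ => hz
      obtain ⟨z, hz, hz0⟩ := (hev.and self_mem_nhdsWithin).exists
      exact ⟨z, ne_of_gt hz0, hz⟩
    · exact ⟨y, hy, key⟩
  rcases lt_or_gt_of_ne hz0 with h | h
  · right
    refine ⟨x / z, fun r hr hrp => ?_⟩
    have := hz r hr hrp
    rw [div_mul_eq_mul_div, div_lt_iff_of_neg h]
    linarith
  · left
    refine ⟨-x / z, fun r hr hrp => ?_⟩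
    have := hz r hr hrp
    rw [div_mul_eq_mul_div, div_lt_iff₀ h]
    linarith

/-! ### Parallelism as a bilinear relation -/

/-- `OnConic` from the six coefficients of a quadratic equation. -/
theorem onConic_of_coeffs {S : Set Pt} (a b c d e g : ℝ)
    (h0 : ¬ (a = 0 ∧ b = 0 ∧ c = 0 ∧ d = 0 ∧ e = 0 ∧ g = 0))
    (h : ∀ p ∈ S, a * p.1 ^ 2 + b * (p.1 * p.2) + c * p.2 ^ 2 + d * p.1 + e * p.2 + g = 0) :
    OnConic S := by
  let f : MvPolynomial (Fin 2) ℝ :=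
    .C a * .X 0 ^ 2 + .C b * (.X 0 * .X 1) + .C c * .X 1 ^ 2 + .C d * .X 0 + .C e * .X 1 + .C g
  have hev : ∀ x y : ℝ, MvPolynomial.eval ![x, y] f =
      a * x ^ 2 + b * (x * y) + c * y ^ 2 + d * x + e * y + g := by
    intro x y
    simp [f]
  refine ⟨f, ?_, ?_, fun p hp => by rw [hev]; exact h p hp⟩
  · intro hf
    apply h0
    have k : ∀ x y : ℝ, a * x ^ 2 + b * (x * y) + c * y ^ 2 + d * x + e * y + g = 0 := by
      intro x y
      rw [← hev, hf, map_zero]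
    have k1 := k 0 0
    have k2 := k 1 0
    have k3 := k (-1) 0
    have k4 := k 0 1
    have k5 := k 0 (-1)
    have k6 := k 1 1
    refine ⟨?_, ?_, ?_, ?_, ?_, ?_⟩ <;> linarith
  · have hC : ∀ (t : ℝ) (q : MvPolynomial (Fin 2) ℝ), q.totalDegree ≤ 2 →
        (MvPolynomial.C t * q).totalDegree ≤ 2 := by
      intro t q hq
      refine (MvPolynomial.totalDegree_mul _ _).trans ?_
      simpa using hq
    have hX : ∀ i j : Fin 2, (MvPolynomial.X i * MvPolynomial.X j :
        MvPolynomial (Fin 2) ℝ).totalDegree ≤ 2 := by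
      intro i j
      refine (MvPolynomial.totalDegree_mul _ _).trans ?_
      simp
    have hX2 : ∀ i : Fin 2, (MvPolynomial.X i ^ 2 : MvPolynomial (Fin 2) ℝ).totalDegree ≤ 2 := by
      intro i; rw [pow_two]; exact hX i i
    have hadd : ∀ q r : MvPolynomial (Fin 2) ℝ, q.totalDegree ≤ 2 → r.totalDegree ≤ 2 →
        (q + r).totalDegree ≤ 2 := fun q r hq hr =>
      (MvPolynomial.totalDegree_add _ _).trans (max_le hq hr)
    refine hadd _ _ (hadd _ _ (hadd _ _ (hadd _ _ (hadd _ _ ?_ ?_) ?_) ?_) ?_) ?_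
    · exact hC _ _ (hX2 0)
    · exact hC _ _ (hX 0 1)
    · exact hC _ _ (hX2 1)
    · exact hC _ _ (by simp)
    · exact hC _ _ (by simp)
    · simp

/-- The vector `(p × p', p, p', 1)` of `ℝ⁶`, which makes parallelism bilinear (see `form_lift`). -/
def lift (p p' : Pt) : Fin 6 → ℝ :=
  ![p.1 * p'.2 - p.2 * p'.1, p.1, p.2, p'.1, p'.2, 1]

/-- The symmetric bilinear form on `ℝ⁶` that expresses parallelism of lifted pairs. -/
def form : LinearMap.BilinForm ℝ (Fin 6 → ℝ) :=
  LinearMap.mk₂ ℝ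
    (fun u w => u 0 * w 5 + u 5 * w 0 - u 1 * w 4 + u 2 * w 3 + u 3 * w 2 - u 4 * w 1)
    (fun u v w => by simp only [Pi.add_apply]; ring)
    (fun a u w => by simp only [Pi.smul_apply, smul_eq_mul]; ring)
    (fun u v w => by simp only [Pi.add_apply]; ring)
    (fun a u w => by simp only [Pi.smul_apply, smul_eq_mul]; ring)

theorem form_apply (u w : Fin 6 → ℝ) : form u w =
    u 0 * w 5 + u 5 * w 0 - u 1 * w 4 + u 2 * w 3 + u 3 * w 2 - u 4 * w 1 := rfl

theorem form_comm (u w : Fin 6 → ℝ) : form u w = form w u := by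
  simp only [form_apply]; ring

theorem form_nondegenerate : form.Nondegenerate := by
  have hleft : form.SeparatingLeft := by
    intro u hu
    have h0 := hu (Pi.single 0 1)
    have h1 := hu (Pi.single 1 1)
    have h2 := hu (Pi.single 2 1)
    have h3 := hu (Pi.single 3 1)
    have h4 := hu (Pi.single 4 1)
    have h5 := hu (Pi.single 5 1)
    simp [form_apply] at h0 h1 h2 h3 h4 h5
    ext i
    fin_cases i <;> simp <;> assumption
  exact ⟨hleft, fun u hu => hleft u fun w => by rw [form_comm]; exact hu w⟩

/-- Pairs `(p, p')` and `(q, q')` have orthogonal lifts iff `q - p` and `q' - p'` are parallel. -/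
theorem form_lift (p p' q q' : Pt) : form (lift p p') (lift q q') = par p q p' q' := by
  simp [form_apply, lift, par]
  ring

/-- Points whose lifts span dimension at most `3` lie on a conic, unless `σ` acts on them as a map
`p ↦ t p + b`. The case distinction is whether the coordinate functions `1, x, y` are independent on
`U`: if not, the points are collinear; if so, they are coordinates on `U` and all others are affine
in `p`. -/
theorem conic_or_homothety {S : Set Pt} {σ : Pt → Pt} {U : Submodule ℝ (Fin 6 → ℝ)}
    (hU : Module.finrank ℝ U ≤ 3) (hS : ∀ p ∈ S, lift p (σ p) ∈ U) :
    OnConic S ∨ ∃ t : ℝ, ∃ b : Pt, ∀ p ∈ S, σ p = t • p + b := by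
  let T : U →ₗ[ℝ] (Fin 3 → ℝ) :=
    LinearMap.pi ![(LinearMap.proj 5).comp U.subtype, (LinearMap.proj 1).comp U.subtype,
      (LinearMap.proj 2).comp U.subtype]
  have hT0 : ∀ u : U, T u 0 = u.1 5 := fun u => rfl
  have hT1 : ∀ u : U, T u 1 = u.1 1 := fun u => rfl
  have hT2 : ∀ u : U, T u 2 = u.1 2 := fun u => rfl
  by_cases hsurj : Function.Surjective T
  · have hfr : Module.finrank ℝ U = Module.finrank ℝ (Fin 3 → ℝ) := by
      apply le_antisymm
      · simpa using hU
      · exact LinearMap.finrank_le_finrank_of_surjective hsurj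
    have hinj : Function.Injective T :=
      (LinearMap.injective_iff_surjective_of_finrank_eq_finrank hfr).2 hsurj
    let e := LinearEquiv.ofBijective T ⟨hinj, hsurj⟩
    -- Each coordinate on `U` is an affine function of the first point.
    have hcoord : ∀ i : Fin 6, ∃ a b c : ℝ, ∀ p ∈ S,
        lift p (σ p) i = a + b * p.1 + c * p.2 := by
      intro i
      let F : (Fin 3 → ℝ) →ₗ[ℝ] ℝ := ((LinearMap.proj i).comp U.subtype).comp e.symm.toLinearMap
      refine ⟨F (Pi.single 0 1), F (Pi.single 1 1), F (Pi.single 2 1), fun p hp => ?_⟩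
      have h1 : lift p (σ p) i = F (T ⟨_, hS p hp⟩) := by
        have : e.symm (T ⟨_, hS p hp⟩) = ⟨_, hS p hp⟩ := e.symm_apply_apply _
        simp [F, this]
      rw [h1, LinearMap.pi_apply_eq_sum_univ F, Fin.sum_univ_three, hT0, hT1, hT2]
      have h2 : ∀ k : Fin 3, (fun j => if k = j then (1 : ℝ) else 0) = Pi.single k 1 := by
        intro k; ext j; simp [Pi.single_apply, eq_comm]
      simp only [h2, smul_eq_mul]
      simp [lift]
      ring
    obtain ⟨a, b, c, hx⟩ := hcoord 3
    obtain ⟨a', b', c', hy⟩ := hcoord 4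
    obtain ⟨a'', b'', c'', hz⟩ := hcoord 0
    simp only [lift, Matrix.cons_val] at hx hy hz
    -- The quadratic part of `p × σ(p)` is `b' x² + (c' - b) x y - c y²`.
    by_cases hdeg : b' = 0 ∧ c' - b = 0 ∧ c = 0
    · right
      refine ⟨b, (a, a'), fun p hp => ?_⟩
      obtain ⟨h1, h2, h3⟩ := hdeg
      ext
      · simp [hx p hp, h3]; ring
      · have : c' = b := by linarith
        simp [hy p hp, h1, this]; ring
    · left
      refine onConic_of_coeffs b' (c' - b) (-c) (a' - b'') (-a - c'') (-a'') ?_ ?_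
      · rintro ⟨h1, h2, h3, -⟩
        exact hdeg ⟨h1, h2, by linarith⟩
      · intro p hp
        have := hz p hp
        rw [hx p hp, hy p hp] at this
        linarith
  · left
    have hlt : LinearMap.range T < ⊤ := lt_top_iff_ne_top.2 fun h => hsurj (LinearMap.range_eq_top.1 h)
    obtain ⟨F, hF0, hF⟩ := Submodule.exists_le_ker_of_lt_top _ hlt
    -- A linear relation between `1, x, y` on `U` is the equation of a line.
    refine onConic_of_coeffs 0 0 0 (F (Pi.single 1 1)) (F (Pi.single 2 1)) (F (Pi.single 0 1)) ?_ ?_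
    · rintro ⟨-, -, -, h1, h2, h3⟩
      apply hF0
      ext i
      fin_cases i <;> simpa
    · intro p hp
      have h1 : F (T ⟨_, hS p hp⟩) = 0 := hF ⟨_, rfl⟩
      rw [LinearMap.pi_apply_eq_sum_univ F, Fin.sum_univ_three, hT0, hT1, hT2] at h1
      have h2 : ∀ k : Fin 3, (fun j => if k = j then (1 : ℝ) else 0) = Pi.single k 1 := by
        intro k; ext j; simp [Pi.single_apply, eq_comm]
      simp only [h2, smul_eq_mul] at h1
      simp [lift] at h1
      linarith

/-! ### Subspaces rich in points -/

/-- If linearly many subspaces `U q` contain linearly many of the points `φ p` each, then a single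
subspace `W` contains linearly many of these points and is contained in linearly many of the `U q`.
By Cauchy–Schwarz some `U q₀` shares linearly many points with linearly many `U q`. Either `U q₀` is
contained in enough of them, or the proper subspaces `U q₀ ⊓ U q` have smaller dimension and the
induction hypothesis applies to them. -/
theorem rich_subspace {V α β : Type*} [AddCommGroup V] [Module ℝ V] [FiniteDimensional ℝ V]
    (k : ℕ) : ∀ θ : ℝ, 0 < θ → ∃ δ : ℝ, 0 < δ ∧ ∀ (n : ℕ) (P : Finset α) (Q : Finset β)
      (φ : α → V) (U : β → Submodule ℝ V), 0 < n → P.card ≤ n →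
      (∀ q ∈ Q, Module.finrank ℝ (U q) ≤ k) → θ * n ≤ Q.card →
      (∀ q ∈ Q, ∃ S ⊆ P, θ * n ≤ S.card ∧ ∀ p ∈ S, φ p ∈ U q) →
      ∃ (W : Submodule ℝ V) (S : Finset α) (R : Finset β), S ⊆ P ∧ R ⊆ Q ∧
        δ * n ≤ S.card ∧ δ * n ≤ R.card ∧ (∀ p ∈ S, φ p ∈ W) ∧ ∀ q ∈ R, W ≤ U q := by
  classical
  induction k with
  | zero =>
    intro θ hθ
    refine ⟨θ, hθ, fun n P Q φ U hn hP hk hQ hS => ?_⟩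
    have hQ0 : Q.Nonempty := by
      rw [← Finset.card_pos, ← Nat.cast_pos (α := ℝ)]
      exact lt_of_lt_of_le (by positivity) hQ
    obtain ⟨q, hq⟩ := hQ0
    have hbot : ∀ q ∈ Q, U q = ⊥ := fun q hq =>
      Submodule.finrank_eq_zero.1 (Nat.le_zero.1 (hk q hq))
    obtain ⟨S, hSP, hSc, hSU⟩ := hS q hq
    exact ⟨⊥, S, Q, hSP, subset_rfl, hSc, hQ, fun p hp => hbot q hq ▸ hSU p hp,
      fun q _ => bot_le⟩
  | succ k ih =>
    intro θ hθ
    obtain ⟨δ, hδ, H⟩ := ih (min (θ ^ 3 / 4) (θ ^ 2 / 2)) (by positivity)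
    refine ⟨min δ (min θ (θ ^ 3 / 4)), by positivity, fun n P Q φ U hn hP hk hQ hS => ?_⟩
    have hn' : (0 : ℝ) < n := Nat.cast_pos.2 hn
    have hP' : (P.card : ℝ) ≤ n := Nat.cast_le.2 hP
    choose! S hSP hSc hSU using hS
    have hQpos : (0 : ℝ) < Q.card := lt_of_lt_of_le (by positivity) hQ
    have hQ0 : Q.Nonempty := Finset.card_pos.1 (Nat.cast_pos.1 hQpos)
    -- Double counting: the sets `S q` have large pairwise intersections on average.
    have hdeg : ∀ T ⊆ P, (T.card : ℝ) = ∑ p ∈ P, if p ∈ T then (1 : ℝ) else 0 := by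
      intro T hT
      rw [Finset.sum_boole, Finset.filter_mem_eq_inter, Finset.inter_eq_right.2 hT]
    have hsum : ∑ q ∈ Q, ((S q).card : ℝ) =
        ∑ p ∈ P, ∑ q ∈ Q, if p ∈ S q then (1 : ℝ) else 0 := by
      rw [Finset.sum_comm]
      exact Finset.sum_congr rfl fun q hq => hdeg _ (hSP q hq)
    have hsum2 : ∑ q ∈ Q, ∑ r ∈ Q, ((S q ∩ S r).card : ℝ) =
        ∑ p ∈ P, (∑ q ∈ Q, if p ∈ S q then (1 : ℝ) else 0) ^ 2 := by
      simp only [pow_two, Finset.sum_mul_sum]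
      rw [Finset.sum_comm]
      have : ∀ q ∈ Q, ∑ r ∈ Q, ((S r ∩ S q).card : ℝ) = ∑ p ∈ P, ∑ r ∈ Q,
          (if p ∈ S q then (1 : ℝ) else 0) * (if p ∈ S r then (1 : ℝ) else 0) := by
        intro q hq
        rw [Finset.sum_comm]
        refine Finset.sum_congr rfl fun r hr => ?_
        rw [hdeg _ (Finset.inter_subset_left.trans (hSP r hr))]
        refine Finset.sum_congr rfl fun p _ => ?_
        by_cases h1 : p ∈ S q <;> by_cases h2 : p ∈ S r <;> simp [h1, h2]
      rw [Finset.sum_congr rfl this, Finset.sum_comm]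
    have hlow : Q.card * (θ * n) ≤ ∑ q ∈ Q, ((S q).card : ℝ) := by
      rw [← nsmul_eq_mul]
      exact Finset.card_nsmul_le_sum _ _ _ hSc
    have hcs := sq_sum_le_card_mul_sum_sq (s := P)
      (f := fun p => ∑ q ∈ Q, if p ∈ S q then (1 : ℝ) else 0)
    rw [← hsum, ← hsum2] at hcs
    have hbig : Q.card * (θ ^ 2 * n * Q.card) ≤ ∑ q ∈ Q, ∑ r ∈ Q, ((S q ∩ S r).card : ℝ) := by
      have h1 : (Q.card * (θ * n)) ^ 2 ≤ (∑ q ∈ Q, ((S q).card : ℝ)) ^ 2 :=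
        pow_le_pow_left₀ (by positivity) hlow 2
      have h2 : (P.card : ℝ) * ∑ q ∈ Q, ∑ r ∈ Q, ((S q ∩ S r).card : ℝ) ≤
          n * ∑ q ∈ Q, ∑ r ∈ Q, ((S q ∩ S r).card : ℝ) :=
        mul_le_mul_of_nonneg_right hP' (by positivity)
      have h3 := (h1.trans hcs).trans h2
      refine le_of_mul_le_mul_left ?_ hn'
      calc _ = (Q.card * (θ * n) : ℝ) ^ 2 := by ring
        _ ≤ _ := h3
    obtain ⟨q₀, hq₀, hq₀s⟩ : ∃ q ∈ Q, θ ^ 2 * n * Q.card ≤ ∑ r ∈ Q, ((S q ∩ S r).card : ℝ) := by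
      apply Finset.exists_le_of_sum_le hQ0
      simpa using hbig
    let G := Q.filter fun r => θ ^ 2 / 2 * n ≤ ((S q₀ ∩ S r).card : ℝ)
    have hG : θ ^ 3 / 2 * n ≤ G.card := by
      have h1 : ∑ r ∈ Q, ((S q₀ ∩ S r).card : ℝ) ≤ G.card * n + Q.card * (θ ^ 2 / 2 * n) := by
        rw [← Finset.sum_filter_add_sum_filter_not Q
          (fun r => θ ^ 2 / 2 * n ≤ ((S q₀ ∩ S r).card : ℝ))]
        apply add_le_add
        · rw [← nsmul_eq_mul]
          apply Finset.sum_le_card_nsmul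
          intro r hr
          refine le_trans ?_ hP'
          exact Nat.cast_le.2 (Finset.card_le_card (Finset.inter_subset_left.trans (hSP q₀ hq₀)))
        · refine (Finset.sum_le_card_nsmul _ _ (θ ^ 2 / 2 * n) ?_).trans ?_
          · intro r hr
            exact (not_le.1 (Finset.mem_filter.1 hr).2).le
          · rw [nsmul_eq_mul]
            apply mul_le_mul_of_nonneg_right _ (by positivity)
            exact Nat.cast_le.2 (Finset.card_filter_le _ _)
      have h2 : θ ^ 2 / 2 * Q.card ≤ G.card := by
        refine le_of_mul_le_mul_right ?_ hn'
        linarith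
      have h3 : θ ^ 2 / 2 * (θ * n) ≤ θ ^ 2 / 2 * Q.card :=
        mul_le_mul_of_nonneg_left hQ (by positivity)
      linarith
    have hGQ : G ⊆ Q := Finset.filter_subset _ _
    have hsplit : ((G.filter fun r => U q₀ ≤ U r).card : ℝ) +
        (G.filter fun r => ¬ U q₀ ≤ U r).card = G.card := by
      exact_mod_cast Finset.card_filter_add_card_filter_not (s := G) (fun r => U q₀ ≤ U r)
    by_cases hcase : θ ^ 3 / 4 * n ≤ (G.filter fun r => U q₀ ≤ U r).card
    · refine ⟨U q₀, S q₀, G.filter fun r => U q₀ ≤ U r, hSP q₀ hq₀,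
        (Finset.filter_subset _ _).trans hGQ, ?_, ?_, hSU q₀ hq₀,
        fun q hq => (Finset.mem_filter.1 hq).2⟩
      · refine le_trans ?_ (hSc q₀ hq₀)
        gcongr
        exact (min_le_right _ _).trans (min_le_left _ _)
      · refine le_trans ?_ hcase
        gcongr
        exact (min_le_right _ _).trans (min_le_right _ _)
    · obtain ⟨W, S', R, hS', hR, hc1, hc2, hW1, hW2⟩ := H n P (G.filter fun r => ¬ U q₀ ≤ U r) φ
        (fun r => U q₀ ⊓ U r) hn hP
        (by
          intro q hq
          have hlt : U q₀ ⊓ U q < U q₀ :=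
            lt_of_le_of_ne inf_le_left fun h => (Finset.mem_filter.1 hq).2 (inf_eq_left.1 h)
          have := Submodule.finrank_lt_finrank_of_lt hlt
          have := hk q₀ hq₀
          omega)
        (by
          have : min (θ ^ 3 / 4) (θ ^ 2 / 2) * n ≤ θ ^ 3 / 4 * n := by
            gcongr
            exact min_le_left _ _
          linarith)
        (by
          intro q hq
          have hqG := Finset.mem_filter.1 (Finset.mem_filter.1 hq).1
          refine ⟨S q₀ ∩ S q, Finset.inter_subset_left.trans (hSP q₀ hq₀), ?_, ?_⟩
          · refine le_trans ?_ hqG.2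
            gcongr
            exact min_le_right _ _
          · intro p hp
            exact ⟨hSU q₀ hq₀ p (Finset.mem_inter.1 hp).1, hSU q hqG.1 p (Finset.mem_inter.1 hp).2⟩)
      refine ⟨W, S', R, hS', hR.trans ((Finset.filter_subset _ _).trans hGQ), ?_, ?_, hW1,
        fun q hq => (hW2 q hq).trans inf_le_right⟩
      · refine le_trans ?_ hc1
        gcongr
        exact min_le_left _ _
      · refine le_trans ?_ hc2
        gcongr
        exact min_le_left _ _

/-! ### Many parallel pairs force a conic -/

/-- If `pq` is parallel to `σ(p)τ(q)` for a positive proportion of the pairs, then linearly many points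
of `P`, or of `Q`, lie on a conic or are mapped by `σ`, respectively `τ`, as `p ↦ t p + b`. -/
theorem conic_of_many_parallel (ε : ℝ) (hε : 0 < ε) : ∃ δ : ℝ, 0 < δ ∧ ∀ (n : ℕ)
    (P Q : Finset Pt) (F : Finset (Pt × Pt)) (σ τ : Pt → Pt), 0 < n → P.card ≤ n → Q.card ≤ n →
    F ⊆ P ×ˢ Q → ε * (n : ℝ) ^ 2 ≤ F.card →
    (∀ e ∈ F, par e.1 e.2 (σ e.1) (τ e.2) = 0) →
    (∃ S ⊆ P, δ * n ≤ S.card ∧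
      (OnConic S ∨ ∃ t : ℝ, ∃ b : Pt, ∀ p ∈ S, σ p = t • p + b)) ∨
    (∃ S ⊆ Q, δ * n ≤ S.card ∧
      (OnConic S ∨ ∃ t : ℝ, ∃ b : Pt, ∀ p ∈ S, τ p = t • p + b)) := by
  classical
  obtain ⟨δ, hδ, H⟩ := rich_subspace (V := Fin 6 → ℝ) (α := Pt) (β := Pt) 6 (ε / 2) (by positivity)
  refine ⟨δ, hδ, fun n P Q F σ τ hn hP hQ hF hFc hpar => ?_⟩
  have hn' : (0 : ℝ) < n := Nat.cast_pos.2 hn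
  have hP' : (P.card : ℝ) ≤ n := Nat.cast_le.2 hP
  have hQ' : (Q.card : ℝ) ≤ n := Nat.cast_le.2 hQ
  let N : Pt → Finset Pt := fun q => P.filter fun p => (p, q) ∈ F
  have hcount : F.card = ∑ q ∈ Q, (N q).card := by
    rw [Finset.card_eq_sum_card_fiberwise (f := Prod.snd) (t := Q)
      (fun e he => (Finset.mem_product.1 (hF he)).2)]
    refine Finset.sum_congr rfl fun q hq => ?_
    refine Finset.card_bij' (fun e _ => e.1) (fun p _ => (p, q)) ?_ ?_ ?_ ?_
    · rintro ⟨p, q'⟩ he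
      obtain ⟨heF, rfl⟩ := Finset.mem_filter.1 he
      exact Finset.mem_filter.2 ⟨(Finset.mem_product.1 (hF heF)).1, heF⟩
    · intro p hp
      exact Finset.mem_filter.2 ⟨(Finset.mem_filter.1 hp).2, rfl⟩
    · rintro ⟨p, q'⟩ he
      obtain ⟨he, rfl⟩ := Finset.mem_filter.1 he
      rfl
    · intro p hp
      rfl
  let G := Q.filter fun q => ε / 2 * n ≤ ((N q).card : ℝ)
  have hG : ε / 2 * n ≤ G.card := by
    have h1 : (F.card : ℝ) ≤ G.card * n + n * (ε / 2 * n) := by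
      rw [hcount, Nat.cast_sum, ← Finset.sum_filter_add_sum_filter_not Q
        (fun q => ε / 2 * n ≤ ((N q).card : ℝ))]
      apply add_le_add
      · rw [← nsmul_eq_mul]
        apply Finset.sum_le_card_nsmul
        intro r hr
        exact le_trans (Nat.cast_le.2 (Finset.card_filter_le _ _)) hP'
      · refine (Finset.sum_le_card_nsmul _ _ (ε / 2 * n) ?_).trans ?_
        · intro r hr
          exact (not_le.1 (Finset.mem_filter.1 hr).2).le
        · rw [nsmul_eq_mul]
          apply mul_le_mul_of_nonneg_right _ (by positivity)
          exact le_trans (Nat.cast_le.2 (Finset.card_filter_le _ _)) hQ'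
    refine le_of_mul_le_mul_right ?_ hn'
    nlinarith
  obtain ⟨W, S, R, hS, hR, hSc, hRc, hSW, hRW⟩ := H n P G (fun p => lift p (σ p))
    (fun q => form.orthogonal (Submodule.span ℝ {lift q (τ q)})) hn hP
    (fun q _ => (Submodule.finrank_le _).trans (by simp)) hG (by
      intro q hq
      refine ⟨N q, Finset.filter_subset _ _, (Finset.mem_filter.1 hq).2, fun p hp => ?_⟩
      rw [LinearMap.BilinForm.mem_orthogonal_iff]
      intro w hw
      obtain ⟨t, rfl⟩ := Submodule.mem_span_singleton.1 hw
      have h1 := hpar _ (Finset.mem_filter.1 hp).2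
      rw [← form_lift, form_comm] at h1
      change form (t • _) _ = 0
      rw [map_smul, LinearMap.smul_apply, h1, smul_zero])
  by_cases hW : Module.finrank ℝ W ≤ 3
  · left
    exact ⟨S, hS, hSc, conic_or_homothety hW fun p hp => hSW p hp⟩
  · right
    refine ⟨R, hR.trans (Finset.filter_subset _ _), hRc,
      conic_or_homothety (U := form.orthogonal W) ?_ fun q hq => ?_⟩
    · rw [LinearMap.BilinForm.finrank_orthogonal form_nondegenerate]
      simp only [Module.finrank_fintype_fun_eq_card, Fintype.card_fin]
      omega
    · rw [LinearMap.BilinForm.mem_orthogonal_iff]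
      intro w hw
      have h1 := LinearMap.BilinForm.mem_orthogonal_iff.1 (hRW q hq hw) _
        (Submodule.mem_span_singleton_self _)
      change form w _ = 0
      rw [form_comm]
      exact h1

/-! ### Shifts along a chain -/

/-- The position of `p` in the order of `X` by `κ`: the number of points with a smaller value. -/
noncomputable def rank (κ : Pt → ℝ) (X : Finset Pt) (p : Pt) : ℕ := (X.filter fun r => κ r < κ p).card

theorem rank_lt_card {κ : Pt → ℝ} {X : Finset Pt} {p : Pt} (hp : p ∈ X) :
    rank κ X p < X.card :=
  Finset.card_lt_card (Finset.filter_ssubset.2 ⟨p, hp, lt_irrefl _⟩)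

theorem rank_lt_rank {κ : Pt → ℝ} {X : Finset Pt} {p r : Pt} (hp : p ∈ X) (h : κ p < κ r) :
    rank κ X p < rank κ X r := by
  refine Finset.card_lt_card ⟨fun x hx => ?_, fun hsub => ?_⟩
  · simp only [Finset.mem_filter] at hx ⊢
    exact ⟨hx.1, hx.2.trans h⟩
  · have := hsub (Finset.mem_filter.2 ⟨hp, h⟩)
    exact lt_irrefl _ (Finset.mem_filter.1 this).2

theorem rank_lt_rank_iff {κ : Pt → ℝ} {X : Finset Pt} {p r : Pt} (hp : p ∈ X) (hr : r ∈ X) :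
    rank κ X p < rank κ X r ↔ κ p < κ r := by
  refine ⟨fun h => ?_, rank_lt_rank hp⟩
  by_contra! hle
  rcases hle.lt_or_eq with h1 | h1
  · exact lt_asymm h (rank_lt_rank hr h1)
  · simp [rank, h1] at h

/-- The shift by `k` positions in the order of `X` by `κ`. -/
theorem exists_shift (κ : Pt → ℝ) (X : Finset Pt) (hκ : ∀ p ∈ X, ∀ r ∈ X, κ p = κ r → p = r)
    (k : ℕ) : ∃ σ : Pt → Pt, ∀ p, ∀ p' ∈ X, rank κ X p' = rank κ X p + k → σ p = p' := by
  classical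
  refine ⟨fun p => if h : ∃ p' ∈ X, rank κ X p' = rank κ X p + k then h.choose else p, ?_⟩
  intro p p' hp' h
  have hex : ∃ p' ∈ X, rank κ X p' = rank κ X p + k := ⟨p', hp', h⟩
  simp only [hex, dif_pos]
  obtain ⟨h1, h2⟩ := hex.choose_spec
  apply hκ _ h1 _ hp'
  apply le_antisymm <;> rw [← not_lt, ← rank_lt_rank_iff (by assumption) (by assumption)] <;> omega

/-- A shift along a chain is not of the form `p ↦ t p + b` on two points `p, r`: the chords `pr` and
`σ(p)σ(r)` would be parallel but not nested. -/
theorem Chain.not_homothety {η : ℝ} {X : Finset Pt} (h : Chain η X) {κ : Pt → ℝ}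
    (hκ : κ = Prod.fst ∨ κ = fun p => -p.1) {k : ℕ} (hk : 0 < k) {σ : Pt → Pt} {S : Finset Pt}
    (hS : ∀ p ∈ S, p ∈ X ∧ σ p ∈ X ∧ rank κ X (σ p) = rank κ X p + k) (hcard : 1 < S.card)
    (t : ℝ) (b : Pt) : ¬ ∀ p ∈ S, σ p = t • p + b := by
  intro hσ
  obtain ⟨p, hp, r, hr, hpr⟩ := Finset.one_lt_card.1 hcard
  wlog hlt : p.1 < r.1 generalizing p r
  · refine this r hr p hp hpr.symm (lt_of_le_of_ne (not_lt.1 hlt) fun e => hpr ?_)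
    exact (h.fst_injOn (hS r hr).1 (hS p hp).1 e).symm
  obtain ⟨hpX, hpX', hpk⟩ := hS p hp
  obtain ⟨hrX, hrX', hrk⟩ := hS r hr
  have hpar : par p r (σ p) (σ r) = 0 := by
    rw [hσ p hp, hσ r hr]
    simp [par]; ring
  have i1 := rank_lt_rank_iff (κ := κ) hpX hpX'
  have i2 := rank_lt_rank_iff (κ := κ) hrX hrX'
  have i3 := rank_lt_rank_iff (κ := κ) hpX' hrX'
  have i3' := rank_lt_rank_iff (κ := κ) hrX' hpX'
  have i4 := rank_lt_rank_iff (κ := κ) hpX hrX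
  have i4' := rank_lt_rank_iff (κ := κ) hrX hpX
  have j1 := i1.1 (by omega)
  have j2 := i2.1 (by omega)
  rcases hκ with rfl | rfl
  · have := i4.2 hlt
    have j3 := i3.1 (by omega)
    exact lt_asymm j2 (h.lt_of_par hpX hrX hpX' hrX' hlt j3 j1 hpar)
  · simp only [neg_lt_neg_iff] at *
    have := i4'.2 hlt
    have j3 := i3'.1 (by omega)
    have hpar' : par (σ p) (σ r) p r = 0 := by
      unfold par at hpar ⊢; linarith
    exact lt_asymm j2 (h.lt_of_par hpX' hrX' hpX hrX j3 hlt j1 hpar')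

/-- The common argument for pairs within one chain and between two chains. The order on `Q` is by
`κ = ± abscissa`, the sign being chosen so that both endpoints of parallel pairs move in the same
sense. The constant `w` is the block length on both chains. -/
theorem core (D c : ℝ) (hD : 0 < D) (hc : 0 < c) : ∃ (δ : ℝ) (n₀ : ℕ), 0 < δ ∧
    ∀ n : ℕ, n₀ ≤ n → ∀ (P Q : Finset Pt) (F : Finset (Pt × Pt)) (η₁ η₂ : ℝ) (κ : Pt → ℝ)
      (d : Pt × Pt → Submodule ℝ Pt) (T : Finset (Submodule ℝ Pt)),
      (κ = Prod.fst ∨ κ = fun p => -p.1) → P.card ≤ n → Q.card ≤ n →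
      Chain η₁ P → Chain η₂ Q → F ⊆ P ×ˢ Q → c * (n : ℝ) ^ 2 ≤ F.card →
      (∀ e ∈ F, d e ∈ T) → (T.card : ℝ) ≤ D * n →
      (∀ e ∈ F, ∀ e' ∈ F, d e = d e' → par e.1 e.2 e'.1 e'.2 = 0) →
      (∀ e ∈ F, ∀ e' ∈ F, par e.1 e.2 e'.1 e'.2 = 0 → e.1.1 < e'.1.1 → κ e.2 < κ e'.2) →
      (∀ e ∈ F, ∀ e' ∈ F, par e.1 e.2 e'.1 e'.2 = 0 → e.1 = e'.1 → e.2 = e'.2) →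
      ∃ S ⊆ P ∪ Q, δ * n ≤ S.card ∧ OnConic S := by
  classical
  -- With `w > 8 D / c`, the `D n` directions meet at most `(2 n / w + 1) D n ≤ c n² / 2` cells.
  obtain ⟨w, hw⟩ := exists_nat_gt (8 * D / c)
  have hw0 : (0 : ℝ) < w := lt_trans (by positivity) hw
  have hw0' : 0 < w := Nat.cast_pos.1 hw0
  obtain ⟨δ, hδ, H⟩ := conic_of_many_parallel (c / (2 * w ^ 2)) (by positivity)
  obtain ⟨n₁, hn₁⟩ := exists_nat_gt (4 * D / c)
  obtain ⟨n₂, hn₂⟩ := exists_nat_gt (1 / δ)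
  refine ⟨δ, max n₁ n₂ + 1, hδ, ?_⟩
  intro n hn P Q F η₁ η₂ κ d T hκ hP hQ hcP hcQ hF hFc hdT hT hpar hmono hinj
  have hn0 : 0 < n := by omega
  have hn' : (0 : ℝ) < n := Nat.cast_pos.2 hn0
  have hnn₁ : 4 * D / c < n := hn₁.trans_le (Nat.cast_le.2 (by omega))
  have hnn₂ : 1 / δ < n := hn₂.trans_le (Nat.cast_le.2 (by omega))
  have hFm : ∀ e ∈ F, e.1 ∈ P ∧ e.2 ∈ Q := fun e he => Finset.mem_product.1 (hF he)
  have hκinj : ∀ p ∈ Q, ∀ r ∈ Q, κ p = κ r → p = r := by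
    intro p hp r hr h
    apply hcQ.fst_injOn hp hr
    rcases hκ with rfl | rfl
    · exact h
    · exact neg_injective h
  let ρ := rank Prod.fst P
  let ρ' := rank κ Q
  -- Within one direction both block indices are monotone, so their sum determines the cell.
  let g : Pt × Pt → Submodule ℝ Pt × ℕ := fun e => (d e, ρ e.1 / w + ρ' e.2 / w)
  have hgmem : ∀ e ∈ F, g e ∈ T ×ˢ Finset.range (2 * (n / w) + 1) := by
    intro e he
    refine Finset.mem_product.2 ⟨hdT e he, Finset.mem_range.2 ?_⟩
    have h1 : ρ e.1 / w ≤ n / w :=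
      Nat.div_le_div_right ((rank_lt_card (hFm e he).1).le.trans hP)
    have h2 : ρ' e.2 / w ≤ n / w :=
      Nat.div_le_div_right ((rank_lt_card (hFm e he).2).le.trans hQ)
    change ρ e.1 / w + ρ' e.2 / w < _
    omega
  -- The pairs that are not the last one of their direction and cell.
  let F' := F.filter fun e => ∃ e' ∈ F, g e' = g e ∧ ρ e.1 < ρ e'.1
  have hmax : ((F.filter fun e => ¬ ∃ e' ∈ F, g e' = g e ∧ ρ e.1 < ρ e'.1).card : ℝ) ≤
      c / 2 * n ^ 2 := by
    have h1 : (F.filter fun e => ¬ ∃ e' ∈ F, g e' = g e ∧ ρ e.1 < ρ e'.1).card ≤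
        (T ×ˢ Finset.range (2 * (n / w) + 1)).card := by
      apply Finset.card_le_card_of_injOn g
      · intro e he
        exact hgmem e (Finset.mem_filter.1 he).1
      · intro e he e' he' hee
        obtain ⟨heF, he⟩ := Finset.mem_filter.1 he
        obtain ⟨heF', he'⟩ := Finset.mem_filter.1 he'
        have hp := hpar e heF e' heF' (congrArg Prod.fst hee)
        have k1 : ¬ ρ e.1 < ρ e'.1 := fun h => he ⟨e', heF', hee.symm, h⟩
        have k2 : ¬ ρ e'.1 < ρ e.1 := fun h => he' ⟨e, heF, hee, h⟩
        rw [rank_lt_rank_iff (hFm e heF).1 (hFm e' heF').1] at k1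
        rw [rank_lt_rank_iff (hFm e' heF').1 (hFm e heF).1] at k2
        have k3 : e.1 = e'.1 := hcP.fst_injOn (hFm e heF).1 (hFm e' heF').1
          (le_antisymm (not_lt.1 k2) (not_lt.1 k1))
        exact Prod.ext k3 (hinj e heF e' heF' hp k3)
    rw [Finset.card_product, Finset.card_range] at h1
    have h2 : ((n / w : ℕ) : ℝ) ≤ n / w := Nat.cast_div_le
    have h3 : (2 * ((n / w : ℕ) : ℝ) + 1) ≤ 2 * (n / w) + 1 := by linarith
    calc _ ≤ ((T.card * (2 * (n / w) + 1) : ℕ) : ℝ) := Nat.cast_le.2 h1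
      _ = T.card * (2 * ((n / w : ℕ) : ℝ) + 1) := by push_cast; ring
      _ ≤ (D * n) * (2 * (n / w) + 1) := by gcongr
      _ = (2 * D / w) * n ^ 2 + D * n := by field_simp
      _ ≤ (c / 4) * n ^ 2 + (c / 4 * n) * n := by
        have a1 : 2 * D / w ≤ c / 4 := by
          rw [div_lt_iff₀ hc] at hw
          rw [div_le_iff₀ hw0]
          linarith
        have a2 : D ≤ c / 4 * n := by
          rw [div_lt_iff₀ hc] at hnn₁
          linarith
        gcongr
      _ = c / 2 * n ^ 2 := by ring
  have hF' : c / 2 * n ^ 2 ≤ (F'.card : ℝ) := by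
    have := Finset.card_filter_add_card_filter_not (s := F)
      (fun e => ∃ e' ∈ F, g e' = g e ∧ ρ e.1 < ρ e'.1)
    have : (F'.card : ℝ) + (F.filter fun e => ¬ ∃ e' ∈ F, g e' = g e ∧ ρ e.1 < ρ e'.1).card =
      F.card := by exact_mod_cast this
    linarith
  -- The pairs with a parallel partner displaced by `m.1 + 1` and `m.2 + 1` positions.
  let K : ℕ × ℕ → Finset (Pt × Pt) := fun m => F.filter fun e => ∃ e' ∈ F, d e = d e' ∧
    ρ e'.1 = ρ e.1 + (m.1 + 1) ∧ ρ' e'.2 = ρ' e.2 + (m.2 + 1)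
  have hcover : F' ⊆ (Finset.range w ×ˢ Finset.range w).biUnion K := by
    intro e he
    obtain ⟨heF, e', heF', hg, hlt⟩ := Finset.mem_filter.1 he
    have hde : d e' = d e := congrArg Prod.fst hg
    have hkey : ρ e'.1 / w + ρ' e'.2 / w = ρ e.1 / w + ρ' e.2 / w := congrArg Prod.snd hg
    have hlt' : ρ' e.2 < ρ' e'.2 := rank_lt_rank (hFm e heF).2
      (hmono e heF e' heF' (hpar e heF e' heF' hde.symm)
        ((rank_lt_rank_iff (hFm e heF).1 (hFm e' heF').1).1 hlt))
    have d1 : ρ e.1 / w ≤ ρ e'.1 / w := Nat.div_le_div_right hlt.le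
    have d2 : ρ' e.2 / w ≤ ρ' e'.2 / w := Nat.div_le_div_right hlt'.le
    have d3 : ρ e.1 / w = ρ e'.1 / w := by omega
    have d4 : ρ' e.2 / w = ρ' e'.2 / w := by omega
    have b1 := Nat.div_add_mod (ρ e.1) w
    have b2 := Nat.div_add_mod (ρ e'.1) w
    have b3 := Nat.div_add_mod (ρ' e.2) w
    have b4 := Nat.div_add_mod (ρ' e'.2) w
    have m2 := Nat.mod_lt (ρ e'.1) hw0'
    have m4 := Nat.mod_lt (ρ' e'.2) hw0'
    rw [d3] at b1
    rw [d4] at b3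
    refine Finset.mem_biUnion.2 ⟨(ρ e'.1 - ρ e.1 - 1, ρ' e'.2 - ρ' e.2 - 1), ?_, ?_⟩
    · simp only [Finset.mem_product, Finset.mem_range]
      omega
    · refine Finset.mem_filter.2 ⟨heF, e', heF', hde.symm, ?_, ?_⟩ <;> dsimp only <;> omega
  obtain ⟨m, hm⟩ : ∃ m, c / (2 * w ^ 2) * n ^ 2 ≤ ((K m).card : ℝ) := by
    by_contra! hcon
    have h1 : (F'.card : ℝ) ≤ ∑ m ∈ Finset.range w ×ˢ Finset.range w, ((K m).card : ℝ) := by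
      exact_mod_cast (Finset.card_le_card hcover).trans Finset.card_biUnion_le
    have h2 : ∑ m ∈ Finset.range w ×ˢ Finset.range w, ((K m).card : ℝ) <
        ∑ m ∈ Finset.range w ×ˢ Finset.range w, c / (2 * w ^ 2) * (n : ℝ) ^ 2 :=
      Finset.sum_lt_sum_of_nonempty
        ⟨(0, 0), Finset.mem_product.2 ⟨Finset.mem_range.2 hw0', Finset.mem_range.2 hw0'⟩⟩
        fun m _ => hcon m
    rw [Finset.sum_const, Finset.card_product, Finset.card_range, nsmul_eq_mul] at h2
    have h3 : ((w * w : ℕ) : ℝ) * (c / (2 * w ^ 2) * (n : ℝ) ^ 2) = c / 2 * n ^ 2 := by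
      push_cast; field_simp
    linarith
  obtain ⟨σ, hσ⟩ := exists_shift Prod.fst P (fun p hp r hr h => hcP.fst_injOn hp hr h) (m.1 + 1)
  obtain ⟨τ, hτ⟩ := exists_shift κ Q hκinj (m.2 + 1)
  let P' := P.filter fun p => σ p ∈ P ∧ ρ (σ p) = ρ p + (m.1 + 1)
  let Q' := Q.filter fun q => τ q ∈ Q ∧ ρ' (τ q) = ρ' q + (m.2 + 1)
  have hKspec : ∀ e ∈ K m, e.1 ∈ P' ∧ e.2 ∈ Q' ∧ par e.1 e.2 (σ e.1) (τ e.2) = 0 := by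
    intro e he
    obtain ⟨heF, e', heF', hd, hr1, hr2⟩ := Finset.mem_filter.1 he
    have s1 : σ e.1 = e'.1 := hσ _ _ (hFm e' heF').1 hr1
    have s2 : τ e.2 = e'.2 := hτ _ _ (hFm e' heF').2 hr2
    refine ⟨Finset.mem_filter.2 ⟨(hFm e heF).1, ?_⟩, Finset.mem_filter.2 ⟨(hFm e heF).2, ?_⟩, ?_⟩
    · rw [s1]; exact ⟨(hFm e' heF').1, hr1⟩
    · rw [s2]; exact ⟨(hFm e' heF').2, hr2⟩
    · rw [s1, s2]; exact hpar e heF e' heF' hd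
  have htwo : ∀ S : Finset Pt, δ * n ≤ S.card → 1 < S.card := by
    intro S hS
    rw [div_lt_iff₀ hδ] at hnn₂
    have : (1 : ℝ) < S.card := by linarith
    exact_mod_cast this
  rcases H n P' Q' (K m) σ τ hn0 ((Finset.card_filter_le _ _).trans hP)
    ((Finset.card_filter_le _ _).trans hQ)
    (fun e he => Finset.mem_product.2 ⟨(hKspec e he).1, (hKspec e he).2.1⟩) hm
    (fun e he => (hKspec e he).2.2) with ⟨S, hS, hSc, hcon⟩ | ⟨S, hS, hSc, hcon⟩
  · refine ⟨S, (hS.trans (Finset.filter_subset _ _)).trans Finset.subset_union_left, hSc,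
      hcon.resolve_right ?_⟩
    rintro ⟨t, b, hb⟩
    exact hcP.not_homothety (Or.inl rfl) (Nat.succ_pos m.1)
      (fun p hp => Finset.mem_filter.1 (hS hp)) (htwo S hSc) t b hb
  · refine ⟨S, (hS.trans (Finset.filter_subset _ _)).trans Finset.subset_union_right, hSc,
      hcon.resolve_right ?_⟩
    rintro ⟨t, b, hb⟩
    exact hcQ.not_homothety hκ (Nat.succ_pos m.2)
      (fun p hp => Finset.mem_filter.1 (hS hp)) (htwo S hSc) t b hb

/-! ### Directions -/

theorem par_eq_zero_of_span_eq {a b a' b' : Pt} (h : Submodule.span ℝ {b - a} =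
    Submodule.span ℝ {b' - a'}) : par a b a' b' = 0 := by
  have h1 : b' - a' ∈ Submodule.span ℝ {b - a} := h ▸ Submodule.mem_span_singleton_self _
  obtain ⟨t, ht⟩ := Submodule.mem_span_singleton.1 h1
  have h2 := congrArg Prod.fst ht
  have h3 := congrArg Prod.snd ht
  simp at h2 h3
  unfold par
  rw [← h2, ← h3]
  ring

end FewDirections

open FewDirections in
/-- For every `D > 0`, `c > 0` there are `δ > 0` and `n₀` such that:
if `A` is an `n`-point set in convex position (`n ≥ n₀`) and `E` is a set of at least `c n²`
unordered pairs of distinct points of `A` determining at most `D n` distinct directions,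
then at least `δ n` points of `A` lie on a (possibly degenerate) conic. -/
theorem statement8 (D c : ℝ) (hD : 0 < D) (hc : 0 < c) :
    ∃ (δ : ℝ) (n₀ : ℕ), 0 < δ ∧
      ∀ n : ℕ, n₀ ≤ n →
      ∀ A : Finset Pt, A.card = n → ConvexPosition A →
      ∀ E : Finset (Finset Pt),
        (∀ e ∈ E, e.card = 2 ∧ e ⊆ A) →
        c * (n : ℝ) ^ 2 ≤ (E.card : ℝ) →
        ((directionsOf E).ncard : ℝ) ≤ D * (n : ℝ) →
        ∃ S : Finset Pt, S ⊆ A ∧ δ * (n : ℝ) ≤ (S.card : ℝ) ∧ OnConic (S : Set Pt) := by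
  classical
  obtain ⟨δ, n₀, hδ, H⟩ := core D (c / 3) hD (by positivity)
  refine ⟨δ, n₀, hδ, ?_⟩
  intro n hn A hA hconv E hE hEc hdir
  let d : Pt × Pt → Submodule ℝ Pt := fun e => Submodule.span ℝ {e.2 - e.1}
  have hfin : (directionsOf E).Finite := by
    refine ((A ×ˢ A).image d).finite_toSet.subset ?_
    rintro _ ⟨e, he, p, hp, q, hq, -, rfl⟩
    exact Finset.mem_coe.2 (Finset.mem_image.2
      ⟨(p, q), Finset.mem_product.2 ⟨(hE e he).2 hp, (hE e he).2 hq⟩, rfl⟩)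
  let T := hfin.toFinset
  have hT : (T.card : ℝ) ≤ D * n := by
    rwa [← Set.ncard_eq_toFinset_card _ hfin]
  have hdT : ∀ e : Pt × Pt, e.1 ≠ e.2 → {e.1, e.2} ∈ E → d e ∈ T := by
    intro e hne he
    exact hfin.mem_toFinset.2 ⟨_, he, e.1, by simp, e.2, by simp, hne, rfl⟩
  -- A point with supporting lines on both sides (an extreme abscissa) is put into `L` only.
  let L := A.filter fun p => Tan 1 A p
  let M := A.filter fun p => ¬ Tan 1 A p
  have hLA : L ⊆ A := Finset.filter_subset _ _
  have hMA : M ⊆ A := Finset.filter_subset _ _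
  have hLt : ∀ p ∈ L, Tan 1 A p := fun p hp => (Finset.mem_filter.1 hp).2
  have hMt : ∀ p ∈ M, Tan (-1) A p := fun p hp =>
    (exists_tan hconv (hMA hp)).resolve_left (Finset.mem_filter.1 hp).2
  have hLM : ∀ p ∈ L, ∀ q ∈ M, p ≠ q := by
    rintro p hp q hq rfl
    exact (Finset.mem_filter.1 hq).2 (hLt p hp)
  have hL : Chain 1 L := fun p hp => (hLt p hp).mono hLA
  have hM : Chain (-1) M := fun p hp => (hMt p hp).mono hMA
  have hLn : L.card ≤ n := hA ▸ Finset.card_le_card hLA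
  have hMn : M.card ≤ n := hA ▸ Finset.card_le_card hMA
  let FX : Finset Pt → Finset (Pt × Pt) := fun X =>
    (X ×ˢ X).filter fun e => e.1.1 < e.2.1 ∧ {e.1, e.2} ∈ E
  let FLM : Finset (Pt × Pt) := (L ×ˢ M).filter fun e => {e.1, e.2} ∈ E
  let pr : Pt × Pt → Finset Pt := fun e => {e.1, e.2}
  have hcover : E ⊆ (FX L).image pr ∪ (FX M).image pr ∪ FLM.image pr := by
    intro e he
    obtain ⟨hcard, hsub⟩ := hE e he
    obtain ⟨p, q, hpq, rfl⟩ := Finset.card_eq_two.1 hcard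
    have hpA : p ∈ A := hsub (by simp)
    have hqA : q ∈ A := hsub (by simp)
    have he' : {q, p} ∈ E := by rwa [Finset.pair_comm]
    have hsame : ∀ (X : Finset Pt) (η : ℝ), Chain η X → p ∈ X → q ∈ X →
        ({p, q} : Finset Pt) ∈ (FX X).image pr := by
      intro X η hX hp hq
      rcases lt_trichotomy p.1 q.1 with h | h | h
      · exact Finset.mem_image.2 ⟨(p, q), by simp [FX, hp, hq, h, he], rfl⟩
      · exact (hpq (hX.fst_injOn hp hq h)).elim
      · exact Finset.mem_image.2 ⟨(q, p), by simp [FX, hp, hq, h, he'], Finset.pair_comm _ _⟩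
    have hdich : ∀ r ∈ A, r ∈ L ∨ r ∈ M := by
      intro r hr
      by_cases h : Tan 1 A r
      · exact Or.inl (Finset.mem_filter.2 ⟨hr, h⟩)
      · exact Or.inr (Finset.mem_filter.2 ⟨hr, h⟩)
    simp only [Finset.mem_union]
    rcases hdich p hpA with hp | hp <;> rcases hdich q hqA with hq | hq
    · exact Or.inl (Or.inl (hsame L 1 hL hp hq))
    · exact Or.inr (Finset.mem_image.2 ⟨(p, q), by simp [FLM, hp, hq, he], rfl⟩)
    · exact Or.inr (Finset.mem_image.2
        ⟨(q, p), by simp [FLM, hp, hq, he'], Finset.pair_comm _ _⟩)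
    · exact Or.inl (Or.inr (hsame M (-1) hM hp hq))
  have hsum : (E.card : ℝ) ≤ (FX L).card + (FX M).card + FLM.card := by
    have h1 := Finset.card_le_card hcover
    have h2 := Finset.card_union_le ((FX L).image pr ∪ (FX M).image pr) (FLM.image pr)
    have h3 := Finset.card_union_le ((FX L).image pr) ((FX M).image pr)
    have h4 := Finset.card_image_le (s := FX L) (f := pr)
    have h5 := Finset.card_image_le (s := FX M) (f := pr)
    have h6 := Finset.card_image_le (s := FLM) (f := pr)
    have : E.card ≤ (FX L).card + (FX M).card + FLM.card := by omega
    exact_mod_cast this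
  have hsame : ∀ (X : Finset Pt) (η : ℝ), Chain η X → X ⊆ A →
      c / 3 * (n : ℝ) ^ 2 ≤ (FX X).card →
      ∃ S : Finset Pt, S ⊆ A ∧ δ * (n : ℝ) ≤ (S.card : ℝ) ∧ OnConic (S : Set Pt) := by
    intro X η hX hXA hXc
    have hXn : X.card ≤ n := hA ▸ Finset.card_le_card hXA
    have hmem : ∀ e ∈ FX X, e.1 ∈ X ∧ e.2 ∈ X ∧ e.1.1 < e.2.1 ∧ {e.1, e.2} ∈ E := by
      intro e he
      simpa [FX, and_assoc] using he
    -- Parallel chords of one chain are nested, hence the reversed order on the second endpoint.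
    obtain ⟨S, hS, hSc, hSo⟩ := H n hn X X (FX X) η η (fun p => -p.1) d T (Or.inr rfl) hXn hXn
      hX hX (Finset.filter_subset _ _) hXc
      (fun e he => hdT e (fun h => by
        have := (hmem e he).2.2.1
        rw [h] at this
        exact lt_irrefl _ this) (hmem e he).2.2.2)
      hT (fun e _ e' _ h => par_eq_zero_of_span_eq h)
      (fun e he e' he' hp hlt => by
        obtain ⟨h1, h2, h3, -⟩ := hmem e he
        obtain ⟨h1', h2', h3', -⟩ := hmem e' he'
        exact neg_lt_neg (hX.lt_of_par h1 h2 h1' h2' h3 h3' hlt hp))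
      (fun e he e' he' hp heq => by
        obtain ⟨h1, h2, h3, -⟩ := hmem e he
        obtain ⟨h1', h2', h3', -⟩ := hmem e' he'
        rw [← heq] at hp h3'
        exact hX.eq_of_par h1 h2 h2' h3 h3' hp)
    exact ⟨S, hS.trans (Finset.union_subset hXA hXA), hSc, hSo⟩
  by_cases c1 : c / 3 * (n : ℝ) ^ 2 ≤ (FX L).card
  · exact hsame L 1 hL hLA c1
  by_cases c2 : c / 3 * (n : ℝ) ^ 2 ≤ (FX M).card
  · exact hsame M (-1) hM hMA c2
  have c3 : c / 3 * (n : ℝ) ^ 2 ≤ FLM.card := by linarith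
  have hmem : ∀ e ∈ FLM, e.1 ∈ L ∧ e.2 ∈ M ∧ {e.1, e.2} ∈ E := by
    intro e he
    simpa [FLM, and_assoc] using he
  obtain ⟨S, hS, hSc, hSo⟩ := H n hn L M FLM 1 (-1) Prod.fst d T (Or.inl rfl) hLn hMn
    hL hM (Finset.filter_subset _ _) c3
    (fun e he => hdT e (hLM _ (hmem e he).1 _ (hmem e he).2.1) (hmem e he).2.2)
    hT (fun e _ e' _ h => par_eq_zero_of_span_eq h)
    (fun e he e' he' hp hlt => by
      obtain ⟨h1, h2, -⟩ := hmem e he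
      obtain ⟨h1', h2', -⟩ := hmem e' he'
      exact mixed_lt (hLA h1) (hMA h2) (hLA h1') (hMA h2') (hLt _ h1) (hLt _ h1') (hMt _ h2)
        (hMt _ h2') (hLM _ h1 _ h2) (hLM _ h1 _ h2') (hLM _ h1' _ h2) hp hlt)
    (fun e he e' he' hp heq => by
      obtain ⟨h1, h2, -⟩ := hmem e he
      obtain ⟨h1', h2', -⟩ := hmem e' he'
      rw [← heq] at hp
      exact mixed_eq (hLA h1) (hMA h2) (hMA h2') (hLt _ h1) (hMt _ h2) (hMt _ h2')
        (hLM _ h1 _ h2) (hLM _ h1 _ h2') hp)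
  exact ⟨S, hS.trans (Finset.union_subset hLA hMA), hSc, hSo⟩
end

section
/- For every δ > 0 there exist a threshold n₀ = n₀(δ) and a constant γ = γ(δ) > 0 such that the following holds. Let A, B, C ⊆ ℝ² be n-element point sets with n ≥ n₀ satisfying: (1) the points of C all lie on a line L; (2) no three points of A are collinear, and no two disjoint triples of points of A are similar relative to L; (3) L is disjoint from the convex hull of A and from the convex hull of B; (4) no line through two distinct points of A intersects the convex hull of B; (5) there are at least δn² collinear triples (a,b,c) with a ∈ A, b ∈ B, c ∈ C. Then there exist a subset S ⊆ B with |S| ≥ γn and a nonzero real polynomial in two variables of total degree at most 2 vanishing at every point of S (i.e., at least γn points of B lie on a possibly degenerate conic). -/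
/-- The condition on one pair of corresponding sides: the lines through `p, q` and through
`p', q'` either meet in a point of `L`, or are both parallel to `L`. -/
def SideCond (L : AffineSubspace ℝ Pt) (p q p' q' : Pt) : Prop :=
  (∃ x : Pt, x ∈ L ∧ x ∈ affineSpan ℝ ({p, q} : Set Pt) ∧
      x ∈ affineSpan ℝ ({p', q'} : Set Pt)) ∨
  (AffineSubspace.Parallel (affineSpan ℝ ({p, q} : Set Pt)) L ∧
    AffineSubspace.Parallel (affineSpan ℝ ({p', q'} : Set Pt)) L)

/-- Two triples of pairwise distinct, non-collinear points are similar relative to a line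
`L` if each pair of corresponding sides satisfies `SideCond L`. -/
def SimilarTriples (L : AffineSubspace ℝ Pt) (p q r p' q' r' : Pt) : Prop :=
  p ≠ q ∧ q ≠ r ∧ p ≠ r ∧ ¬Collinear ℝ ({p, q, r} : Set Pt) ∧
  p' ≠ q' ∧ q' ≠ r' ∧ p' ≠ r' ∧ ¬Collinear ℝ ({p', q', r'} : Set Pt) ∧
  SideCond L p q p' q' ∧ SideCond L q r q' r' ∧ SideCond L p r p' r'

/-! ### Finite combinatorics -/

/-- In a dense bipartite graph on `n + n` vertices, two distinct vertices on the left have linearly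
many common neighbours. -/
theorem exists_large_codegree (n : ℕ) (ε : ℝ) (hε : 0 < ε) (hn : 4 / ε ^ 2 ≤ n)
    (E : Finset (ℕ × ℕ)) (hE : E ⊆ Finset.range n ×ˢ Finset.range n)
    (hcard : ε * (n : ℝ) ^ 2 ≤ E.card) :
    ∃ i i' : ℕ, i ≠ i' ∧
      ε ^ 2 / 4 * n ≤ (((Finset.range n).filter fun j => (i, j) ∈ E ∧ (i', j) ∈ E).card : ℝ) := by
  classical
  by_contra! hcon
  set χ : ℕ → ℕ → ℝ := fun i j => if (i, j) ∈ E then 1 else 0 with hχ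
  have hn0 : (0 : ℝ) < n := lt_of_lt_of_le (by positivity) hn
  have h1 : (E.card : ℝ) = ∑ j ∈ Finset.range n, ∑ i ∈ Finset.range n, χ i j := by
    rw [Finset.sum_comm, ← Finset.sum_product']
    simp only [hχ]
    rw [Finset.sum_boole, Finset.filter_mem_eq_inter, Finset.inter_eq_right.mpr hE]
  have h2 : (∑ j ∈ Finset.range n, ∑ i ∈ Finset.range n, χ i j) ^ 2
      ≤ n * ∑ j ∈ Finset.range n, (∑ i ∈ Finset.range n, χ i j) ^ 2 := by
    simpa using sq_sum_le_card_mul_sum_sq (s := Finset.range n)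
      (f := fun j => ∑ i ∈ Finset.range n, χ i j)
  have h3 : ∑ j ∈ Finset.range n, (∑ i ∈ Finset.range n, χ i j) ^ 2
      = ∑ i ∈ Finset.range n, ∑ i' ∈ Finset.range n, ∑ j ∈ Finset.range n, χ i j * χ i' j := by
    simp only [sq, Finset.sum_mul_sum]
    rw [Finset.sum_comm]
    refine Finset.sum_congr rfl fun i _ => ?_
    rw [Finset.sum_comm]
  have h4 : ∀ i i', ∑ j ∈ Finset.range n, χ i j * χ i' j
      = (((Finset.range n).filter fun j => (i, j) ∈ E ∧ (i', j) ∈ E).card : ℝ) := by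
    intro i i'
    rw [← Finset.sum_boole]
    refine Finset.sum_congr rfl fun j _ => ?_
    simp only [hχ]
    by_cases h : (i, j) ∈ E <;> by_cases h' : (i', j) ∈ E <;> simp [h, h']
  have h5 : ∀ i i', ∑ j ∈ Finset.range n, χ i j * χ i' j
      ≤ ε ^ 2 / 4 * n + if i = i' then (n : ℝ) else 0 := by
    intro i i'
    rw [h4]
    by_cases h : i = i'
    · have : (((Finset.range n).filter fun j => (i, j) ∈ E ∧ (i', j) ∈ E).card : ℝ) ≤ n := by
        exact_mod_cast (Finset.card_filter_le _ _).trans (by simp)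
      rw [if_pos h]
      have : 0 ≤ ε ^ 2 / 4 * n := by positivity
      linarith
    · rw [if_neg h]
      linarith [hcon i i' h]
  have h6 : ∑ i ∈ Finset.range n, ∑ i' ∈ Finset.range n, ∑ j ∈ Finset.range n, χ i j * χ i' j
      ≤ ε ^ 2 / 4 * n ^ 3 + n ^ 2 := by
    calc _ ≤ ∑ i ∈ Finset.range n, ∑ i' ∈ Finset.range n,
          (ε ^ 2 / 4 * n + if i = i' then (n : ℝ) else 0) :=
          Finset.sum_le_sum fun i _ => Finset.sum_le_sum fun i' _ => h5 i i'
      _ = ∑ i ∈ Finset.range n, (n * (ε ^ 2 / 4 * n) + (n : ℝ)) := by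
          refine Finset.sum_congr rfl fun i hi => ?_
          rw [Finset.sum_add_distrib, Finset.sum_ite_eq, if_pos hi]
          simp
      _ = _ := by
          simp
          ring
  rw [h3, ← h1] at h2
  have h7 : (ε * (n : ℝ) ^ 2) ^ 2 ≤ (E.card : ℝ) ^ 2 := by gcongr
  have h8 : (ε * (n : ℝ) ^ 2) ^ 2 ≤ n * (ε ^ 2 / 4 * n ^ 3 + n ^ 2) :=
    h7.trans (h2.trans (by gcongr))
  have h9 : 4 ≤ n * ε ^ 2 := by rwa [div_le_iff₀ (by positivity)] at hn
  have h10 : (0 : ℝ) < n ^ 3 := by positivity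
  have h11 : (n : ℝ) ^ 3 * (n * ε ^ 2) * (3 / 4) ≤ n ^ 3 := by nlinarith
  nlinarith

theorem vec3_injective {α : Type*} {x y z : α} (hxy : x ≠ y) (hxz : x ≠ z) (hyz : y ≠ z) :
    Function.Injective ![x, y, z] := by
  intro k l h
  fin_cases k <;> fin_cases l <;> simp_all

set_option maxHeartbeats 800000 in
/-- The combinatorial core. Read `H` as a set of incidences between points `a` (of rank `r a`) and
viewpoints `b`, and `g a b` as the rank of the direction in which `b` sees `a`. From each `b` the
directions are increasing in `r a`, so the pairs `(r a, g a b)` form a chain, which meets only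
`O(n / K)` of the `K × K` cells of the grid; hence a dense `H` has `≫ n ^ 2` pairs (viewpoint, cell)
with three points `a` in the cell. Fixing the most popular positions of the three points inside
their cell gives a dense bipartite graph between row blocks and column blocks, and two row blocks
with many common neighbours give the triples `p` and `q`. -/
theorem exists_repeated_pattern (δ : ℝ) (hδ : 0 < δ) :
    ∃ (n₀ : ℕ) (γ : ℝ), 0 < γ ∧ ∀ n : ℕ, n₀ ≤ n →
      ∀ {α β : Type} (H : Finset (α × β)) (B : Finset β) (r : α → ℕ) (g : α → β → ℕ),
      B.card ≤ n → (∀ a b, (a, b) ∈ H → b ∈ B) →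
      (∀ a b a' b', (a, b) ∈ H → (a', b') ∈ H → r a = r a' → a = a') →
      (∀ a b, (a, b) ∈ H → r a < n) → (∀ a b, (a, b) ∈ H → g a b < n) →
      (∀ a a' b, (a, b) ∈ H → (a', b) ∈ H → r a < r a' → g a b < g a' b) →
      (∀ a a' b b', (a, b) ∈ H → (a', b) ∈ H → (a, b') ∈ H → (a', b') ∈ H → a ≠ a' →
        g a b = g a b' → g a' b = g a' b' → b = b') →
      δ * (n : ℝ) ^ 2 ≤ H.card →
      ∃ (p q : Fin 3 → α) (S : Finset β), Function.Injective p ∧ Function.Injective q ∧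
        (∀ k l, p k ≠ q l) ∧ γ * (n : ℝ) ≤ S.card ∧ S ⊆ B ∧ S.Nonempty ∧
        ∀ b ∈ S, ∃ b', ∀ k, (p k, b) ∈ H ∧ (q k, b') ∈ H ∧ g (p k) b = g (q k) b' := by
  classical
  obtain ⟨K, hK⟩ := exists_nat_ge (16 / δ)
  have hK0 : 0 < K := by
    have : (0 : ℝ) < K := lt_of_lt_of_le (by positivity) hK
    exact_mod_cast this
  have hKR : (0 : ℝ) < K := by exact_mod_cast hK0
  set ε : ℝ := δ / (2 * K) / K ^ 6 with hεdef
  have hε : 0 < ε := by positivity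
  obtain ⟨n₁, hn₁⟩ := exists_nat_ge (8 / δ)
  obtain ⟨n₂, hn₂⟩ := exists_nat_ge (4 / ε ^ 2)
  refine ⟨max n₁ n₂, ε ^ 2 / 4, by positivity, ?_⟩
  intro n hn α β H B r g hBn hHB hrinj hr hg hmono hdet hcard
  have hnn₁ : 8 / δ ≤ n := hn₁.trans (by exact_mod_cast (le_max_left _ _).trans hn)
  have hnn₂ : 4 / ε ^ 2 ≤ n := hn₂.trans (by exact_mod_cast (le_max_right _ _).trans hn)
  have hnR : (0 : ℝ) < n := lt_of_lt_of_le (by positivity) hnn₁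
  -- Along a monotone chain of cells, the sum of the two cell coordinates identifies the cell.
  set key : α × β → β × ℕ := fun x => (x.2, r x.1 / K + g x.1 x.2 / K) with hkey
  set T : Finset (β × ℕ) := B ×ˢ Finset.range (2 * n / K + 1) with hT
  have hmaps : ∀ x ∈ H, key x ∈ T := by
    rintro ⟨a, b⟩ hx
    simp only [hkey, hT, Finset.mem_product, Finset.mem_range]
    refine ⟨hHB a b hx, Nat.lt_succ_of_le ?_⟩
    have h1 := hr a b hx
    have h2 := hg a b hx
    rw [Nat.le_div_iff_mul_le hK0, add_mul]
    have h3 := Nat.div_mul_le_self (r a) K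
    have h4 := Nat.div_mul_le_self (g a b) K
    omega
  have hcell : ∀ a a' b, (a, b) ∈ H → (a', b) ∈ H →
      r a / K + g a b / K = r a' / K + g a' b / K → r a / K = r a' / K ∧ g a b / K = g a' b / K := by
    intro a a' b h h' e
    rcases lt_trichotomy (r a) (r a') with hlt | heq | hlt
    · have h1 := Nat.div_le_div_right (c := K) hlt.le
      have h2 := Nat.div_le_div_right (c := K) (hmono a a' b h h' hlt).le
      omega
    · have := hrinj a b a' b h h' heq
      subst this
      exact ⟨rfl, rfl⟩
    · have h1 := Nat.div_le_div_right (c := K) hlt.le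
      have h2 := Nat.div_le_div_right (c := K) (hmono a' a b h' h hlt).le
      omega
  set W : Finset (β × ℕ) := T.filter fun y => 2 < (H.filter fun x => key x = y).card with hW
  have hfib : ∀ y ∈ T, (H.filter fun x => key x = y).card ≤ K := by
    rintro ⟨b, w⟩ -
    calc _ ≤ (Finset.range K).card := ?_
      _ = K := Finset.card_range K
    refine Finset.card_le_card_of_injOn (fun x => r x.1 % K)
      (fun x _ => by simpa using Nat.mod_lt _ hK0) ?_
    rintro ⟨a, b₁⟩ h₁ ⟨a', b₂⟩ h₂ e
    simp only [hkey, Finset.coe_filter, Set.mem_ofPred_eq, Prod.mk.injEq] at h₁ h₂ e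
    obtain ⟨h₁, rfl, rfl⟩ := h₁
    obtain ⟨h₂, rfl, hw⟩ := h₂
    have h3 := (hcell a a' b₂ h₁ h₂ hw.symm).1
    have h4 : r a = r a' := by
      rw [← Nat.div_add_mod (r a) K, ← Nat.div_add_mod (r a') K, h3, e]
    rw [hrinj a b₂ a' b₂ h₁ h₂ h4]
  have hcount : H.card ≤ 2 * T.card + K * W.card := by
    rw [Finset.card_eq_sum_card_fiberwise hmaps]
    calc _ ≤ ∑ y ∈ T, (2 + if 2 < (H.filter fun x => key x = y).card then K else 0) := by
          refine Finset.sum_le_sum fun y hy => ?_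
          split_ifs with h
          · have := hfib y hy
            omega
          · omega
      _ = _ := by
          rw [Finset.sum_add_distrib, ← Finset.sum_filter]
          simp [hW, mul_comm]
  have hTcard : (T.card : ℝ) ≤ n * (2 * n / K + 1) := by
    rw [hT, Finset.card_product, Finset.card_range]
    push_cast
    have h1 : ((2 * n / K : ℕ) : ℝ) ≤ 2 * n / K := by
      simpa using (Nat.cast_div_le (m := 2 * n) (n := K) (α := ℝ))
    have h2 : (B.card : ℝ) ≤ n := by exact_mod_cast hBn
    gcongr
  have hWcard : K ^ 6 * ε * (n : ℝ) ^ 2 ≤ W.card := by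
    have h1 : (H.card : ℝ) ≤ 2 * T.card + K * W.card := by exact_mod_cast hcount
    have h2 : 8 ≤ n * δ := by rwa [div_le_iff₀ hδ] at hnn₁
    have h3 : 16 ≤ K * δ := by rwa [div_le_iff₀ hδ] at hK
    have h4 : (n : ℝ) * (2 * n / K) ≤ δ / 8 * n ^ 2 := by
      have : (n : ℝ) * (2 * n / K) = (2 / K) * n ^ 2 := by ring
      rw [this]
      refine mul_le_mul_of_nonneg_right ?_ (by positivity)
      rw [div_le_iff₀ hKR]
      linarith
    have h5 : (n : ℝ) ≤ δ / 8 * n ^ 2 := by nlinarith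
    have h6 : δ / 2 * (n : ℝ) ^ 2 ≤ K * W.card := by nlinarith
    have h7 : (K : ℝ) ^ 6 * ε * n ^ 2 = δ / 2 * n ^ 2 / K := by
      rw [hεdef]
      field_simp
    rw [h7, div_le_iff₀ hKR]
    linarith
  have htriple : ∀ y ∈ W, ∃ a : Fin 3 → α, Function.Injective a ∧
      ∀ k, (a k, y.1) ∈ H ∧ r (a k) / K + g (a k) y.1 / K = y.2 := by
    rintro ⟨b, w⟩ hyW
    obtain ⟨x, y, z, hx, hy, hz, hxy, hxz, hyz⟩ :=
      Finset.two_lt_card_iff.mp (Finset.mem_filter.mp hyW).2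
    obtain ⟨x, b₁⟩ := x
    obtain ⟨y, b₂⟩ := y
    obtain ⟨z, b₃⟩ := z
    simp only [hkey, Finset.mem_filter, Prod.mk.injEq] at hx hy hz
    obtain ⟨hx, rfl, hxw⟩ := hx
    obtain ⟨hy, rfl, hyw⟩ := hy
    obtain ⟨hz, rfl, hzw⟩ := hz
    have h1 : x ≠ y := fun h => hxy (by rw [h])
    have h2 : x ≠ z := fun h => hxz (by rw [h])
    have h3 : y ≠ z := fun h => hyz (by rw [h])
    refine ⟨![x, y, z], vec3_injective h1 h2 h3, ?_⟩
    · intro k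
      fin_cases k
      · exact ⟨hx, hxw⟩
      · exact ⟨hy, hyw⟩
      · exact ⟨hz, hzw⟩
  have : Nonempty α := by
    by_contra hne
    rw [not_nonempty_iff] at hne
    have : H.card = 0 := by simp [Finset.eq_empty_of_isEmpty]
    rw [this] at hcard
    have : 0 < δ * (n : ℝ) ^ 2 := by positivity
    simp at hcard
    linarith
  choose! a ha_inj ha using htriple
  have haI : ∀ y ∈ W, ∀ k, r (a y k) / K = r (a y 0) / K ∧ g (a y k) y.1 / K = g (a y 0) y.1 / K :=
    fun y hy k => hcell _ _ _ (ha y hy k).1 (ha y hy 0).1 ((ha y hy k).2.trans (ha y hy 0).2.symm)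
  -- The offsets, inside their cell, of the three chosen points.
  set τ : β × ℕ → (Fin 3 → Fin K) × (Fin 3 → Fin K) := fun y =>
    (fun k => ⟨r (a y k) % K, Nat.mod_lt _ hK0⟩, fun k => ⟨g (a y k) y.1 % K, Nat.mod_lt _ hK0⟩)
    with hτ
  obtain ⟨t, -, ht⟩ := Finset.exists_le_card_fiber_of_nsmul_le_card_of_maps_to
    (s := W) (t := Finset.univ) (f := τ) (b := ε * (n : ℝ) ^ 2) (fun _ _ => Finset.mem_univ _)
    ⟨(fun _ => ⟨0, hK0⟩, fun _ => ⟨0, hK0⟩), Finset.mem_univ _⟩ (by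
      have : (Finset.univ : Finset ((Fin 3 → Fin K) × (Fin 3 → Fin K))).card = K ^ 6 := by
        simp
        ring
      rw [this, nsmul_eq_mul]
      push_cast
      linarith)
  set V := W.filter fun y => τ y = t with hV
  set IJ : β × ℕ → ℕ × ℕ := fun y => (r (a y 0) / K, g (a y 0) y.1 / K) with hIJ
  have hVW : ∀ y ∈ V, y ∈ W := fun y hy => (Finset.mem_filter.mp hy).1
  have hoff : ∀ y ∈ V, ∀ y' ∈ V, ∀ k, r (a y k) % K = r (a y' k) % K ∧
      g (a y k) y.1 % K = g (a y' k) y'.1 % K := by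
    intro y hy y' hy' k
    have h := (Finset.mem_filter.mp hy).2.trans (Finset.mem_filter.mp hy').2.symm
    simp only [hτ, Prod.mk.injEq] at h
    have h1 := congrFun h.1 k
    have h2 := congrFun h.2 k
    simp only [Fin.mk.injEq] at h1 h2
    exact ⟨h1, h2⟩
  have hsameI : ∀ y ∈ V, ∀ y' ∈ V, (IJ y).1 = (IJ y').1 → ∀ k, a y k = a y' k := by
    intro y hy y' hy' h k
    refine hrinj _ y.1 _ y'.1 (ha y (hVW y hy) k).1 (ha y' (hVW y' hy') k).1 ?_
    rw [← Nat.div_add_mod (r (a y k)) K, ← Nat.div_add_mod (r (a y' k)) K,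
      (hoff y hy y' hy' k).1, (haI y (hVW y hy) k).1, (haI y' (hVW y' hy') k).1]
    simp only [hIJ] at h
    rw [h]
  have hsameJ : ∀ y ∈ V, ∀ y' ∈ V, (IJ y).2 = (IJ y').2 → ∀ k, g (a y k) y.1 = g (a y' k) y'.1 := by
    intro y hy y' hy' h k
    rw [← Nat.div_add_mod (g (a y k) y.1) K, ← Nat.div_add_mod (g (a y' k) y'.1) K,
      (hoff y hy y' hy' k).2, (haI y (hVW y hy) k).2, (haI y' (hVW y' hy') k).2]
    simp only [hIJ] at h
    rw [h]
  have hIJinj : Set.InjOn IJ V := by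
    intro y hy y' hy' h
    have hI := hsameI y hy y' hy' (by rw [h])
    have hJ := hsameJ y hy y' hy' (by rw [h])
    have h0 := ha y (hVW y hy)
    have h0' := ha y' (hVW y' hy')
    have hb : y.1 = y'.1 := by
      refine hdet (a y 0) (a y 1) y.1 y'.1 (h0 0).1 (h0 1).1 ?_ ?_
        (fun h => absurd (ha_inj y (hVW y hy) h) (by decide)) ?_ ?_
      · rw [hI]; exact (h0' 0).1
      · rw [hI]; exact (h0' 1).1
      · rw [hJ 0, hI]
      · rw [hJ 1, hI]
    refine Prod.ext hb ?_
    rw [← (h0 0).2, ← (h0' 0).2, hJ 0, hI 0]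
  obtain ⟨i, i', hii', hcod⟩ := exists_large_codegree n ε hε hnn₂ (V.image IJ) (by
      intro x hx
      obtain ⟨y, hy, rfl⟩ := Finset.mem_image.mp hx
      have h := (ha y (hVW y hy) 0).1
      simp only [hIJ, Finset.mem_product, Finset.mem_range]
      exact ⟨(Nat.div_le_self _ _).trans_lt (hr _ _ h), (Nat.div_le_self _ _).trans_lt (hg _ _ h)⟩)
    (by rw [Finset.card_image_of_injOn hIJinj]; exact ht)
  set J := (Finset.range n).filter fun j => (i, j) ∈ V.image IJ ∧ (i', j) ∈ V.image IJ with hJdef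
  have hJmem : ∀ j ∈ J, (∃ y ∈ V, IJ y = (i, j)) ∧ ∃ y ∈ V, IJ y = (i', j) := by
    intro j hj
    simpa only [Finset.mem_image] using (Finset.mem_filter.mp hj).2
  have hJne : J.Nonempty := by
    rw [← Finset.card_pos]
    have : (0 : ℝ) < J.card := lt_of_lt_of_le (by positivity) hcod
    exact_mod_cast this
  obtain ⟨j₀, hj₀⟩ := hJne
  obtain ⟨⟨y₀, hy₀, hy₀e⟩, z₀, hz₀, hz₀e⟩ := hJmem j₀ hj₀
  have : Nonempty β := ⟨y₀.1⟩
  choose! y hyV hye using fun j hj => (hJmem j hj).1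
  choose! z hzV hze using fun j hj => (hJmem j hj).2
  have hay : ∀ j ∈ J, ∀ k, a (y j) k = a y₀ k := fun j hj =>
    hsameI _ (hyV j hj) _ hy₀ (by rw [hye j hj, hy₀e])
  have haz : ∀ j ∈ J, ∀ k, a (z j) k = a z₀ k := fun j hj =>
    hsameI _ (hzV j hj) _ hz₀ (by rw [hze j hj, hz₀e])
  have hyinj : Set.InjOn (fun j => (y j).1) J := by
    intro j hj j' hj' h
    have h1 : (IJ (y j)).2 = (IJ (y j')).2 := by
      simp only [hIJ]
      simp only at h
      rw [h, hay j hj, hay j' hj']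
    rwa [hye j hj, hye j' hj'] at h1
  refine ⟨a y₀, a z₀, J.image fun j => (y j).1, ha_inj _ (hVW _ hy₀), ha_inj _ (hVW _ hz₀),
    ?_, ?_, ?_, ⟨_, Finset.mem_image_of_mem _ hj₀⟩, ?_⟩
  · intro k l h
    have h1 := (haI _ (hVW _ hy₀) k).1
    have h2 := (haI _ (hVW _ hz₀) l).1
    rw [h, h2] at h1
    simp only [hIJ, Prod.mk.injEq] at hy₀e hz₀e
    exact hii' (by rw [← hy₀e.1, ← hz₀e.1, h1])
  · rwa [Finset.card_image_of_injOn hyinj]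
  · intro b hb
    obtain ⟨j, hj, rfl⟩ := Finset.mem_image.mp hb
    exact hHB _ _ (ha _ (hVW _ (hyV j hj)) 0).1
  · intro b hb
    obtain ⟨j, hj, rfl⟩ := Finset.mem_image.mp hb
    refine ⟨(z j).1, fun k => ⟨?_, ?_, ?_⟩⟩
    · rw [← hay j hj]; exact (ha _ (hVW _ (hyV j hj)) k).1
    · rw [← haz j hj]; exact (ha _ (hVW _ (hzV j hj)) k).1
    · rw [← hay j hj, ← haz j hj]
      exact hsameJ _ (hyV j hj) _ (hzV j hj) (by rw [hye j hj, hze j hj]) k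

/-! ### Sending the line to infinity -/

/-- The signed area form `(v - u) × (p - u)`: it vanishes exactly on the line `uv`. -/
def orient (u v p : Pt) : ℝ := (v.1 - u.1) * (p.2 - u.2) - (v.2 - u.2) * (p.1 - u.1)

/-- The coordinate `(v - u) · (p - u)` along the line `uv`. -/
def along (u v p : Pt) : ℝ := (v.1 - u.1) * (p.1 - u.1) + (v.2 - u.2) * (p.2 - u.2)

/-- First coordinate of the image of `p` under a projective map sending the line `uv` to infinity
(meaningful for `p` off that line). -/
noncomputable def projX (u v p : Pt) : ℝ := along u v p / orient u v p

/-- Second coordinate of the image of `p` under the projective map of `projX`. -/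
noncomputable def projY (u v p : Pt) : ℝ := 1 / orient u v p

theorem dist_sq_pos {u v : Pt} (h : u ≠ v) : 0 < (v.1 - u.1) ^ 2 + (v.2 - u.2) ^ 2 := by
  by_contra hc
  have h1 : v.1 - u.1 = 0 := by nlinarith [sq_nonneg (v.1 - u.1), sq_nonneg (v.2 - u.2)]
  have h2 : v.2 - u.2 = 0 := by nlinarith [sq_nonneg (v.1 - u.1), sq_nonneg (v.2 - u.2)]
  exact h (Prod.ext (by linarith) (by linarith))

theorem mem_line_iff {u v : Pt} (h : u ≠ v) (p : Pt) :
    p ∈ affineSpan ℝ ({u, v} : Set Pt) ↔ orient u v p = 0 := by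
  rw [mem_affineSpan_pair_iff_exists_lineMap_eq]
  have hd := dist_sq_pos h
  constructor
  · rintro ⟨r, rfl⟩
    simp [orient, AffineMap.lineMap_apply]
    ring
  · intro h0
    simp only [orient] at h0
    refine ⟨along u v p / ((v.1 - u.1) ^ 2 + (v.2 - u.2) ^ 2), ?_⟩
    ext
    · simp only [AffineMap.lineMap_apply, along, Prod.smul_fst,
        vsub_eq_sub, smul_eq_mul, vadd_eq_add, Prod.fst_add, Prod.fst_sub]
      field_simp
      linear_combination (v.2 - u.2) * h0
    · simp only [AffineMap.lineMap_apply, along, Prod.smul_snd,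
        vsub_eq_sub, smul_eq_mul, vadd_eq_add, Prod.snd_add, Prod.snd_sub]
      field_simp
      linear_combination (-(v.1 - u.1)) * h0

theorem collinear_iff_orient {p q : Pt} (h : p ≠ q) (r : Pt) :
    Collinear ℝ ({p, q, r} : Set Pt) ↔ orient p q r = 0 := by
  rw [← mem_line_iff h]
  constructor
  · intro hc
    exact hc.mem_affineSpan_of_mem_of_ne (by simp) (by simp) (by simp) h
  · intro hm
    have := collinear_insert_of_mem_affineSpan_pair hm
    convert this using 1
    ext x
    simp
    tauto

/-- A line disjoint from a convex hull has all of it strictly on one side. -/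
theorem same_side {u v : Pt} (h : u ≠ v) {S : Set Pt}
    (hS : Disjoint (affineSpan ℝ ({u, v} : Set Pt) : Set Pt) (convexHull ℝ S))
    {b b' : Pt} (hb : b ∈ S) (hb' : b' ∈ S) : 0 < orient u v b * orient u v b' := by
  by_contra hc
  rw [not_lt] at hc
  have hne : ∀ x ∈ convexHull ℝ S, orient u v x ≠ 0 := fun x hx h0 =>
    Set.disjoint_left.mp hS ((mem_line_iff h x).mpr h0) hx
  have h1 := hne b (subset_convexHull ℝ S hb)
  have h2 := hne b' (subset_convexHull ℝ S hb')
  have h3 : orient u v b * orient u v b' < 0 := lt_of_le_of_ne hc (mul_ne_zero h1 h2)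
  have h4 : 0 < (orient u v b - orient u v b') ^ 2 := by
    nlinarith [sq_nonneg (orient u v b), sq_nonneg (orient u v b')]
  have h5 : orient u v b - orient u v b' ≠ 0 := fun h0 => by simp [h0] at h4
  set s' := orient u v b'
  set s := orient u v b
  -- `s / (s - s')` lies in `[0, 1]` and locates the crossing point on the segment.
  have hseg : (-s' / (s - s')) • b + (s / (s - s')) • b' ∈ convexHull ℝ S := by
    refine segment_subset_convexHull hb hb' ⟨_, _, ?_, ?_, ?_, rfl⟩
    · have : -s' / (s - s') = (s' ^ 2 - s * s') / (s - s') ^ 2 := by field_simp; ring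
      rw [this]
      exact div_nonneg (by nlinarith [sq_nonneg s']) h4.le
    · have : s / (s - s') = (s ^ 2 - s * s') / (s - s') ^ 2 := by field_simp
      rw [this]
      exact div_nonneg (by nlinarith [sq_nonneg s]) h4.le
    · field_simp
      ring
  refine hne _ hseg ?_
  have e1 : -s' / (s - s') = 1 - s / (s - s') := by field_simp; ring
  have e2 : orient u v ((-s' / (s - s')) • b + (s / (s - s')) • b')
      = s + s / (s - s') * (s' - s) := by
    rw [e1]
    simp only [orient, s, s', Prod.fst_add, Prod.snd_add, Prod.smul_fst, Prod.smul_snd, smul_eq_mul]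
    ring
  rw [e2]
  field_simp
  ring

theorem exists_point {u v : Pt} (h : u ≠ v) (t l : ℝ) :
    ∃ p, along u v p = t ∧ orient u v p = l := by
  have hd := dist_sq_pos h
  refine ⟨(u.1 + (t * (v.1 - u.1) - l * (v.2 - u.2)) / ((v.1 - u.1) ^ 2 + (v.2 - u.2) ^ 2),
    u.2 + (t * (v.2 - u.2) + l * (v.1 - u.1)) / ((v.1 - u.1) ^ 2 + (v.2 - u.2) ^ 2)), ?_, ?_⟩
  · simp only [along]
    field_simp
    ring
  · simp only [orient]
    field_simp
    ring

theorem point_ext {u v p q : Pt} (h : u ≠ v) (ht : along u v p = along u v q)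
    (hl : orient u v p = orient u v q) : p = q := by
  have hd := dist_sq_pos h
  simp only [along, orient] at ht hl
  refine Prod.ext ?_ ?_
  · have : ((v.1 - u.1) ^ 2 + (v.2 - u.2) ^ 2) * (p.1 - q.1) = 0 := by
      linear_combination (v.1 - u.1) * ht - (v.2 - u.2) * hl
    rcases mul_eq_zero.mp this with h | h <;> linarith
  · have : ((v.1 - u.1) ^ 2 + (v.2 - u.2) ^ 2) * (p.2 - q.2) = 0 := by
      linear_combination (v.2 - u.2) * ht + (v.1 - u.1) * hl
    rcases mul_eq_zero.mp this with h | h <;> linarith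

theorem proj_ext {u v p q : Pt} (h : u ≠ v) (hp : orient u v p ≠ 0) (hq : orient u v q ≠ 0)
    (hX : projX u v p = projX u v q) (hY : projY u v p = projY u v q) : p = q := by
  simp only [projX, projY] at hX hY
  have hl : orient u v p = orient u v q := by
    field_simp at hY
    exact hY.symm
  rw [hl] at hX
  field_simp at hX
  exact point_ext h hX hl

/-- The projective map multiplies orientations by a factor whose sign is governed by the sides of the
line `uv` on which the points lie. -/
theorem proj_orient {u v a a' b : Pt} (ha : orient u v a ≠ 0) (ha' : orient u v a' ≠ 0)
    (hb : orient u v b ≠ 0) :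
    (projX u v a - projX u v b) * (projY u v a' - projY u v b)
      - (projX u v a' - projX u v b) * (projY u v a - projY u v b)
      = -(((v.1 - u.1) ^ 2 + (v.2 - u.2) ^ 2) * orient a a' b /
        (orient u v a * orient u v a' * orient u v b)) := by
  have key : ((v.1 - u.1) ^ 2 + (v.2 - u.2) ^ 2) * orient a a' b
      = (along u v a' - along u v a) * (orient u v b - orient u v a)
        - (orient u v a' - orient u v a) * (along u v b - along u v a) := by
    simp only [orient, along]
    ring
  rw [key]
  simp only [projX, projY]
  field_simp
  ring

/-- The point `c` where the line `ab` meets `uv` is read off from the (inverse) slope of the image of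
`ab`. -/
theorem proj_slope {u v a b c : Pt} (h : u ≠ v) (hab : a ≠ b) (ha : orient u v a ≠ 0)
    (hb : orient u v b ≠ 0) (hc : orient u v c = 0) (hcol : orient a b c = 0) :
    projY u v a ≠ projY u v b ∧
      along u v c = (projX u v a - projX u v b) / (projY u v a - projY u v b) := by
  have hd := dist_sq_pos h
  have key : (along u v a - along u v c) * orient u v b
      = (along u v b - along u v c) * orient u v a := by
    simp only [orient, along] at *
    linear_combination ((v.1 - u.1) ^ 2 + (v.2 - u.2) ^ 2) * hcol -
      ((v.1 - u.1) * (b.1 - a.1) + (v.2 - u.2) * (b.2 - a.2)) * hc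
  have hne : projY u v a ≠ projY u v b := by
    intro hY
    refine hab (proj_ext h ha hb ?_ hY)
    simp only [projY, projX] at *
    have hl : orient u v a = orient u v b := by
      field_simp at hY
      exact hY.symm
    rw [hl] at key ⊢
    have := mul_right_cancel₀ hb key
    rw [sub_left_inj] at this
    rw [this]
  refine ⟨hne, ?_⟩
  rw [eq_div_iff (sub_ne_zero.mpr hne)]
  simp only [projY, projX]
  field_simp
  linear_combination -key

theorem parallel_line {u v p q : Pt} (h : u ≠ v) (hpq : p ≠ q)
    (hl : orient u v p = orient u v q) :
    AffineSubspace.Parallel (affineSpan ℝ ({p, q} : Set Pt)) (affineSpan ℝ ({u, v} : Set Pt)) := by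
  have hd := dist_sq_pos h
  rw [AffineSubspace.affineSpan_pair_parallel_iff_exists_unit_smul']
  have ht : along u v q - along u v p ≠ 0 := fun h0 =>
    hpq (point_ext h (by linarith) hl)
  refine ⟨Units.mk0 (((v.1 - u.1) ^ 2 + (v.2 - u.2) ^ 2) / (along u v q - along u v p))
    (div_ne_zero hd.ne' ht), ?_⟩
  rw [Units.smul_def]
  simp only [Units.val_mk0]
  ext
  · simp only [vsub_eq_sub, Prod.smul_fst, Prod.fst_sub, smul_eq_mul]
    rw [div_mul_eq_mul_div, div_eq_iff ht]
    simp only [orient, along] at *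
    linear_combination (v.2 - u.2) * hl
  · simp only [vsub_eq_sub, Prod.smul_snd, Prod.snd_sub, smul_eq_mul]
    rw [div_mul_eq_mul_div, div_eq_iff ht]
    simp only [orient, along] at *
    linear_combination -(v.1 - u.1) * hl

theorem exists_meet {u v p q : Pt} (hl : orient u v p ≠ orient u v q) :
    ∃ x, x ∈ affineSpan ℝ ({p, q} : Set Pt) ∧ orient u v x = 0 ∧
      along u v x * (orient u v q - orient u v p)
        = along u v p * orient u v q - along u v q * orient u v p := by
  have hne : orient u v q - orient u v p ≠ 0 := sub_ne_zero.mpr hl.symm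
  refine ⟨AffineMap.lineMap p q (-orient u v p / (orient u v q - orient u v p)),
    AffineMap.lineMap_mem_affineSpan_pair _ _ _, ?_, ?_⟩
  · have : orient u v (AffineMap.lineMap p q (-orient u v p / (orient u v q - orient u v p)))
        = orient u v p + (-orient u v p / (orient u v q - orient u v p)) *
          (orient u v q - orient u v p) := by
      generalize -orient u v p / (orient u v q - orient u v p) = θ
      simp [orient, AffineMap.lineMap_apply]
      ring
    rw [this]
    field_simp
    ring
  · have : along u v (AffineMap.lineMap p q (-orient u v p / (orient u v q - orient u v p)))
        = along u v p + (-orient u v p / (orient u v q - orient u v p)) *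
          (along u v q - along u v p) := by
      generalize -orient u v p / (orient u v q - orient u v p) = θ
      simp [along, AffineMap.lineMap_apply]
      ring
    rw [this]
    field_simp
    ring

/-- Sides with parallel images under the projective map satisfy the side condition. -/
theorem sideCond_of_proj_parallel {u v p q p' q' : Pt} (h : u ≠ v) (hpq : p ≠ q) (hpq' : p' ≠ q')
    (hp : orient u v p ≠ 0) (hq : orient u v q ≠ 0) (hp' : orient u v p' ≠ 0)
    (hq' : orient u v q' ≠ 0)
    (hpar : (projX u v p - projX u v q) * (projY u v p' - projY u v q')
      = (projX u v p' - projX u v q') * (projY u v p - projY u v q)) :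
    SideCond (affineSpan ℝ ({u, v} : Set Pt)) p q p' q' := by
  have key : (along u v p * orient u v q - along u v q * orient u v p) *
      (orient u v q' - orient u v p') =
      (along u v p' * orient u v q' - along u v q' * orient u v p') *
      (orient u v q - orient u v p) := by
    simp only [projX, projY] at hpar
    field_simp at hpar
    linear_combination hpar
  have hcross : ∀ {x y : Pt}, x ≠ y → orient u v x ≠ 0 → orient u v x = orient u v y →
      along u v x * orient u v y - along u v y * orient u v x ≠ 0 := by
    intro x y hxy hx hl h0
    rw [← hl, ← sub_mul] at h0
    rcases mul_eq_zero.mp h0 with h1 | h1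
    · exact hxy (point_ext h (by linarith) hl)
    · exact hx h1
  by_cases hl : orient u v p = orient u v q
  · have hl' : orient u v p' = orient u v q' := by
      rw [hl, sub_self, mul_zero, ← hl] at key
      rcases mul_eq_zero.mp key with h1 | h1
      · exact absurd (by rwa [← hl]) (hcross hpq hp hl)
      · linarith
    exact Or.inr ⟨parallel_line h hpq hl, parallel_line h hpq' hl'⟩
  · have hl' : orient u v p' ≠ orient u v q' := by
      intro hl'
      rw [sub_eq_zero.mpr hl'.symm, mul_zero] at key
      rcases mul_eq_zero.mp key.symm with h1 | h1
      · exact hcross hpq' hp' hl' h1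
      · exact hl (by linarith)
    obtain ⟨x, hx, hx0, hxt⟩ := exists_meet hl
    obtain ⟨x', hx', hx0', hxt'⟩ := exists_meet hl'
    have hxx : x = x' := by
      refine point_ext h ?_ (hx0.trans hx0'.symm)
      have h1 : orient u v q - orient u v p ≠ 0 := sub_ne_zero.mpr (Ne.symm hl)
      have h2 : orient u v q' - orient u v p' ≠ 0 := sub_ne_zero.mpr hl'.symm
      refine mul_right_cancel₀ (mul_ne_zero h1 h2) ?_
      linear_combination (orient u v q' - orient u v p') * hxt
        - (orient u v q - orient u v p) * hxt' + key
    exact Or.inl ⟨x, (mem_line_iff h x).mpr hx0, hx, hxx ▸ hx'⟩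

/-! ### The conic of a pair of triangles -/

/-- The concurrency form. For triangles `p = (x, y)` and `q = (x', y')` it vanishes at `(X, Y)` iff
the lines through `q 0`, `q 1`, `q 2` parallel to those joining `(X, Y)` to `p 0`, `p 1`, `p 2`
are concurrent. -/
def concForm (x y x' y' : Fin 3 → ℝ) (X Y : ℝ) : ℝ :=
  ((X - x 0) * (Y - y 1) - (Y - y 0) * (X - x 1)) * ((X - x 2) * y' 2 - (Y - y 2) * x' 2) +
  ((X - x 1) * (Y - y 2) - (Y - y 1) * (X - x 2)) * ((X - x 0) * y' 0 - (Y - y 0) * x' 0) +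
  ((X - x 2) * (Y - y 0) - (Y - y 2) * (X - x 0)) * ((X - x 1) * y' 1 - (Y - y 1) * x' 1)

/-- If the lines joining `(X, Y)` to the `p k` are parallel to those joining some `(X', Y')` to the
`q k`, the concurrency form vanishes at `(X, Y)`. -/
theorem concForm_eq_zero {x y x' y' : Fin 3 → ℝ} {X Y X' Y' : ℝ}
    (h : ∀ k, (x k - X) * (y' k - Y') = (x' k - X') * (y k - Y)) :
    concForm x y x' y' X Y = 0 := by
  simp only [concForm]
  linear_combination
    (-((X - x 0) * (Y - y 1) - (Y - y 0) * (X - x 1))) * h 2 -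
    ((X - x 1) * (Y - y 2) - (Y - y 1) * (X - x 2)) * h 0 -
    ((X - x 2) * (Y - y 0) - (Y - y 2) * (X - x 0)) * h 1

/-- At the midpoint of a side of `p` the concurrency form is the cross product of that side with the
corresponding side of `q`, up to the area of `p`. -/
theorem parallel_of_concForm {x y x' y' : Fin 3 → ℝ}
    (hD : (x 0 - x 2) * (y 1 - y 2) - (x 1 - x 2) * (y 0 - y 2) ≠ 0) (i j : Fin 3) (hij : i ≠ j)
    (h : concForm x y x' y' ((x i + x j) / 2) ((y i + y j) / 2) = 0) :
    (x i - x j) * (y' i - y' j) = (x' i - x' j) * (y i - y j) := by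
  have key : ((x 0 - x 2) * (y 1 - y 2) - (x 1 - x 2) * (y 0 - y 2)) *
      ((x i - x j) * (y' i - y' j) - (x' i - x' j) * (y i - y j)) = 0 := by
    simp only [concForm] at h
    fin_cases i <;> fin_cases j <;> first | exact absurd rfl hij | skip
    all_goals
      simp only [Fin.zero_eta, Fin.mk_one, Fin.reduceFinMk] at h ⊢
      first
        | linear_combination 4 * h
        | linear_combination (-4) * h
  rcases mul_eq_zero.mp key with h0 | h0
  · exact absurd h0 hD
  · linarith

/-- The polynomial `α t + β ℓ + γ`, where `t` and `ℓ` are the coordinates `along u v` and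
`orient u v`. -/
noncomputable def affPoly (u v : Pt) (α β γ : ℝ) : MvPolynomial (Fin 2) ℝ :=
  MvPolynomial.C (α * (v.1 - u.1) - β * (v.2 - u.2)) * MvPolynomial.X 0 +
  MvPolynomial.C (α * (v.2 - u.2) + β * (v.1 - u.1)) * MvPolynomial.X 1 +
  MvPolynomial.C (γ - α * ((v.1 - u.1) * u.1 + (v.2 - u.2) * u.2)
    - β * ((v.1 - u.1) * u.2 - (v.2 - u.2) * u.1))

theorem eval_affPoly (u v : Pt) (α β γ : ℝ) (p : Pt) :
    MvPolynomial.eval ![p.1, p.2] (affPoly u v α β γ)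
      = α * along u v p + β * orient u v p + γ := by
  simp [affPoly, along, orient]
  ring

theorem totalDegree_affPoly (u v : Pt) (α β γ : ℝ) : (affPoly u v α β γ).totalDegree ≤ 1 := by
  have hX : ∀ (c : ℝ) (i : Fin 2),
      (MvPolynomial.C c * MvPolynomial.X i : MvPolynomial (Fin 2) ℝ).totalDegree ≤ 1 := by
    intro c i
    refine (MvPolynomial.totalDegree_mul _ _).trans ?_
    simp
  refine (MvPolynomial.totalDegree_add _ _).trans (max_le ?_ ?_)
  · exact (MvPolynomial.totalDegree_add _ _).trans (max_le (hX _ _) (hX _ _))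
  · rw [MvPolynomial.totalDegree_C]
    exact zero_le_one

/-- Pulled back along the projective map, `concForm` times `ℓ ^ 2` is a polynomial of degree two in
the original coordinates. -/
theorem exists_conic {u v : Pt} (x y x' y' : Fin 3 → ℝ) :
    ∃ f : MvPolynomial (Fin 2) ℝ, f.totalDegree ≤ 2 ∧ ∀ p, orient u v p ≠ 0 →
      MvPolynomial.eval ![p.1, p.2] f
        = orient u v p ^ 2 * concForm x y x' y' (projX u v p) (projY u v p) := by
  have hdeg : ∀ α β γ α' β' γ',
      (affPoly u v α β γ * affPoly u v α' β' γ').totalDegree ≤ 2 := fun _ _ _ _ _ _ =>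
    (MvPolynomial.totalDegree_mul _ _).trans
      (add_le_add (totalDegree_affPoly _ _ _ _ _) (totalDegree_affPoly _ _ _ _ _))
  refine ⟨affPoly u v (y 0 - y 1) (x 0 * y 1 - y 0 * x 1) (x 1 - x 0) *
      affPoly u v (y' 2) (y 2 * x' 2 - x 2 * y' 2) (-x' 2) +
    affPoly u v (y 1 - y 2) (x 1 * y 2 - y 1 * x 2) (x 2 - x 1) *
      affPoly u v (y' 0) (y 0 * x' 0 - x 0 * y' 0) (-x' 0) +
    affPoly u v (y 2 - y 0) (x 2 * y 0 - y 2 * x 0) (x 0 - x 2) *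
      affPoly u v (y' 1) (y 1 * x' 1 - x 1 * y' 1) (-x' 1), ?_, ?_⟩
  · refine (MvPolynomial.totalDegree_add _ _).trans (max_le ?_ (hdeg _ _ _ _ _ _))
    exact (MvPolynomial.totalDegree_add _ _).trans (max_le (hdeg _ _ _ _ _ _) (hdeg _ _ _ _ _ _))
  · intro p hp
    simp only [map_add, map_mul, eval_affPoly, concForm, projX, projY]
    generalize along u v p = t at *
    generalize orient u v p = l at *
    have e2 : ∀ a b c d : ℝ, l * ((t / l - a) * (1 / l - b) - (1 / l - c) * (t / l - d))
        = (c - b) * t + (a * b - c * d) * l + (d - a) := by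
      intro a b c d
      field_simp
      ring
    have e3 : ∀ a b c d : ℝ, l * ((t / l - a) * b - (1 / l - c) * d)
        = b * t + (c * d - a * b) * l + -d := by
      intro a b c d
      field_simp
      ring
    rw [← e2, ← e2, ← e2, ← e3, ← e3, ← e3]
    ring

/-! ### Slopes from `B` to `A` are monotone -/

/-- The position of `x` in the increasing order of `T`. -/
noncomputable def rankIn (T : Finset ℝ) (x : ℝ) : ℕ := (T.filter fun y => y < x).card

theorem rankIn_le {T : Finset ℝ} {x x' : ℝ} (h : x ≤ x') : rankIn T x ≤ rankIn T x' :=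
  Finset.card_le_card fun y hy => by
    rw [Finset.mem_filter] at hy ⊢
    exact ⟨hy.1, hy.2.trans_le h⟩

theorem rankIn_lt {T : Finset ℝ} {x x' : ℝ} (hx : x ∈ T) (h : x < x') :
    rankIn T x < rankIn T x' := by
  refine Finset.card_lt_card ⟨fun y hy => ?_, fun hs => ?_⟩
  · rw [Finset.mem_filter] at hy ⊢
    exact ⟨hy.1, hy.2.trans h⟩
  · have := hs (Finset.mem_filter.mpr ⟨hx, h⟩)
    simp at this

theorem rankIn_lt_card {T : Finset ℝ} {x : ℝ} (hx : x ∈ T) : rankIn T x < T.card :=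
  Finset.card_lt_card ⟨Finset.filter_subset _ _, fun hs => by
    have := hs hx
    simp at this⟩

theorem rankIn_inj {T : Finset ℝ} {x x' : ℝ} (hx : x ∈ T) (hx' : x' ∈ T)
    (h : rankIn T x = rankIn T x') : x = x' := by
  rcases lt_trichotomy x x' with h1 | h1 | h1
  · exact absurd h (rankIn_lt hx h1).ne
  · exact h1
  · exact absurd h (rankIn_lt hx' h1).ne'

/-- If all points of `B` see `A` with the same orientations (the sign condition), and many pairs
`(a, b)` with `a` above `b` have (inverse) slope in `C`, then two disjoint triples `p`, `q` of `A`
are seen along the same three directions from linearly many `b`, each with a partner `b'`.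
Slopes from a fixed `b` to the points above it increase along the order in which the lowest point
of `B` sees `A`, so that `exists_repeated_pattern` applies to ranks. -/
theorem exists_parallel_pattern_above (δ : ℝ) (hδ : 0 < δ) :
    ∃ (n₀ : ℕ) (γ : ℝ), 0 < γ ∧ ∀ n : ℕ, n₀ ≤ n →
      ∀ (X Y : Pt → ℝ) (A B : Finset Pt) (C : Finset ℝ),
      A.card ≤ n → B.card ≤ n → C.card ≤ n →
      (∀ b ∈ B, ∀ b' ∈ B, X b = X b' → Y b = Y b' → b = b') →
      (∀ a ∈ A, ∀ a' ∈ A, a ≠ a' → ∀ b ∈ B, ∀ b' ∈ B,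
        0 < ((X a - X b) * (Y a' - Y b) - (X a' - X b) * (Y a - Y b)) *
          ((X a - X b') * (Y a' - Y b') - (X a' - X b') * (Y a - Y b'))) →
      δ * (n : ℝ) ^ 2 ≤ (((A ×ˢ B).filter fun t =>
        Y t.2 < Y t.1 ∧ (X t.1 - X t.2) / (Y t.1 - Y t.2) ∈ C).card : ℝ) →
      ∃ (p q : Fin 3 → Pt) (S : Finset Pt), Function.Injective p ∧ Function.Injective q ∧
        (∀ k l, p k ≠ q l) ∧ (∀ k, p k ∈ A) ∧ (∀ k, q k ∈ A) ∧
        γ * (n : ℝ) ≤ S.card ∧ S ⊆ B ∧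
        ∀ b ∈ S, ∃ b', ∀ k,
          (X (p k) - X b) * (Y (q k) - Y b') = (X (q k) - X b') * (Y (p k) - Y b) := by
  obtain ⟨n₀, γ, hγ, hmain⟩ := exists_repeated_pattern δ hδ
  refine ⟨max n₀ 1, γ, hγ, ?_⟩
  intro n hn X Y A B C hA hB hC hinj hsign hcard
  set H := (A ×ˢ B).filter fun t =>
    Y t.2 < Y t.1 ∧ (X t.1 - X t.2) / (Y t.1 - Y t.2) ∈ C with hH
  have hHmem : ∀ a b, (a, b) ∈ H →
      a ∈ A ∧ b ∈ B ∧ Y b < Y a ∧ (X a - X b) / (Y a - Y b) ∈ C := by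
    intro a b h
    have := Finset.mem_filter.mp h
    exact ⟨(Finset.mem_product.mp this.1).1, (Finset.mem_product.mp this.1).2, this.2⟩
  have hn1 : 1 ≤ n := (le_max_right _ _).trans hn
  have hHne : H.Nonempty := by
    rw [← Finset.card_pos]
    have h1 : (1 : ℝ) ≤ n := by exact_mod_cast hn1
    have : (0 : ℝ) < H.card := lt_of_lt_of_le (by positivity) hcard
    exact_mod_cast this
  have hBne : B.Nonempty := by
    obtain ⟨⟨a, b⟩, h⟩ := hHne
    exact ⟨b, (hHmem a b h).2.1⟩
  -- All points of `A` that are above some point of `B` are above the lowest point `b₀` of `B`.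
  obtain ⟨b₀, hb₀, hmin⟩ := B.exists_min_image Y hBne
  set φ : Pt → ℝ := fun a => (X a - X b₀) / (Y a - Y b₀) with hφ
  have hpos₀ : ∀ a b, (a, b) ∈ H → 0 < Y a - Y b₀ := fun a b h => by
    have h1 := hHmem a b h
    linarith [hmin b h1.2.1]
  have hpos : ∀ a b, (a, b) ∈ H → 0 < Y a - Y b := fun a b h => by
    have h1 := hHmem a b h
    linarith
  have hsne : ∀ a ∈ A, ∀ a' ∈ A, a ≠ a' → ∀ b ∈ B,
      (X a - X b) * (Y a' - Y b) ≠ (X a' - X b) * (Y a - Y b) := by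
    intro a ha a' ha' hne b hb h
    have := hsign a ha a' ha' hne b hb b hb
    rw [h] at this
    simp at this
  have hφinj : ∀ a b a' b', (a, b) ∈ H → (a', b') ∈ H → φ a = φ a' → a = a' := by
    intro a b a' b' h h' e
    by_contra hne
    rw [hφ] at e
    simp only at e
    rw [div_eq_div_iff (hpos₀ a b h).ne' (hpos₀ a' b' h').ne'] at e
    exact hsne a (hHmem a b h).1 a' (hHmem a' b' h').1 hne b₀ hb₀ e
  have hφmem : ∀ a b, (a, b) ∈ H → φ a ∈ A.image φ := fun a b h =>
    Finset.mem_image_of_mem _ (hHmem a b h).1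
  obtain ⟨p, q, S, hp, hq, hpq, hS, hSB, hSne, hpat⟩ := hmain n ((le_max_left _ _).trans hn) H B
    (fun a => rankIn (A.image φ) (φ a)) (fun a b => rankIn C ((X a - X b) / (Y a - Y b)))
    hB (fun a b h => (hHmem a b h).2.1)
    (fun a b a' b' h h' e =>
      hφinj a b a' b' h h' (rankIn_inj (hφmem a b h) (hφmem a' b' h') e))
    (fun a b h => (rankIn_lt_card (hφmem a b h)).trans_le (Finset.card_image_le.trans hA))
    (fun a b h => (rankIn_lt_card (hHmem a b h).2.2.2).trans_le hC)
    (by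
      intro a a' b h h' hlt
      have h1 : φ a < φ a' := by
        by_contra hc
        exact absurd hlt (not_lt.mpr (rankIn_le (not_lt.mp hc)))
      have hne : a ≠ a' := fun e => by simp [e] at h1
      refine rankIn_lt (hHmem a b h).2.2.2 ?_
      simp only [hφ] at h1
      rw [div_lt_div_iff₀ (hpos₀ a b h) (hpos₀ a' b h')] at h1
      rw [div_lt_div_iff₀ (hpos a b h) (hpos a' b h')]
      have h2 := hsign a (hHmem a b h).1 a' (hHmem a' b h').1 hne b₀ hb₀ b (hHmem a b h).2.1
      have h3 := neg_of_mul_pos_right h2 (by linarith)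
      linarith)
    (by
      intro a a' b b' h1 h2 h3 h4 hne e e'
      have m := rankIn_inj (hHmem _ _ h1).2.2.2 (hHmem _ _ h3).2.2.2 e
      have m' := rankIn_inj (hHmem _ _ h2).2.2.2 (hHmem _ _ h4).2.2.2 e'
      have k1 : X a - X b = (X a - X b) / (Y a - Y b) * (Y a - Y b) :=
        (div_mul_cancel₀ _ (hpos _ _ h1).ne').symm
      have k2 : X a' - X b = (X a' - X b) / (Y a' - Y b) * (Y a' - Y b) :=
        (div_mul_cancel₀ _ (hpos _ _ h2).ne').symm
      have k3 : X a - X b' = (X a - X b) / (Y a - Y b) * (Y a - Y b') := by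
        rw [m]
        exact (div_mul_cancel₀ _ (hpos _ _ h3).ne').symm
      have k4 : X a' - X b' = (X a' - X b) / (Y a' - Y b) * (Y a' - Y b') := by
        rw [m']
        exact (div_mul_cancel₀ _ (hpos _ _ h4).ne').symm
      have hmm : (X a - X b) / (Y a - Y b) ≠ (X a' - X b) / (Y a' - Y b) := by
        intro e
        rw [div_eq_div_iff (hpos _ _ h1).ne' (hpos _ _ h2).ne'] at e
        exact hsne a (hHmem _ _ h1).1 a' (hHmem _ _ h2).1 hne b (hHmem _ _ h1).2.1 e
      generalize (X a - X b) / (Y a - Y b) = μ at *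
      generalize (X a' - X b) / (Y a' - Y b) = ν at *
      have hY : Y b = Y b' := by
        have : (μ - ν) * (Y b - Y b') = 0 := by linear_combination k1 - k3 - k2 + k4
        rcases mul_eq_zero.mp this with h0 | h0
        · exact absurd (sub_eq_zero.mp h0) hmm
        · linarith
      refine hinj b (hHmem _ _ h1).2.1 b' (hHmem _ _ h3).2.1 ?_ hY
      rw [hY] at k1
      linarith)
    hcard
  obtain ⟨b₁, hb₁⟩ := hSne
  obtain ⟨b₁', hb₁'⟩ := hpat b₁ hb₁
  refine ⟨p, q, S, hp, hq, hpq, fun k => (hHmem _ _ (hb₁' k).1).1,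
    fun k => (hHmem _ _ (hb₁' k).2.1).1, hS, hSB, ?_⟩
  intro b hb
  obtain ⟨b', hb'⟩ := hpat b hb
  refine ⟨b', fun k => ?_⟩
  obtain ⟨h1, h2, h3⟩ := hb' k
  have := rankIn_inj (hHmem _ _ h1).2.2.2 (hHmem _ _ h2).2.2.2 h3
  rwa [div_eq_div_iff (hpos _ _ h1).ne' (hpos _ _ h2).ne'] at this

/-- The version of `exists_parallel_pattern_above` without the condition that `a` is above `b`. -/
theorem exists_parallel_pattern (δ : ℝ) (hδ : 0 < δ) :
    ∃ (n₀ : ℕ) (γ : ℝ), 0 < γ ∧ ∀ n : ℕ, n₀ ≤ n →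
      ∀ (X Y : Pt → ℝ) (A B : Finset Pt) (C : Finset ℝ),
      A.card ≤ n → B.card ≤ n → C.card ≤ n →
      (∀ b ∈ B, ∀ b' ∈ B, X b = X b' → Y b = Y b' → b = b') →
      (∀ a ∈ A, ∀ a' ∈ A, a ≠ a' → ∀ b ∈ B, ∀ b' ∈ B,
        0 < ((X a - X b) * (Y a' - Y b) - (X a' - X b) * (Y a - Y b)) *
          ((X a - X b') * (Y a' - Y b') - (X a' - X b') * (Y a - Y b'))) →
      δ * (n : ℝ) ^ 2 ≤ (((A ×ˢ B).filter fun t =>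
        Y t.1 ≠ Y t.2 ∧ (X t.1 - X t.2) / (Y t.1 - Y t.2) ∈ C).card : ℝ) →
      ∃ (p q : Fin 3 → Pt) (S : Finset Pt), Function.Injective p ∧ Function.Injective q ∧
        (∀ k l, p k ≠ q l) ∧ (∀ k, p k ∈ A) ∧ (∀ k, q k ∈ A) ∧
        γ * (n : ℝ) ≤ S.card ∧ S ⊆ B ∧
        ∀ b ∈ S, ∃ b', ∀ k,
          (X (p k) - X b) * (Y (q k) - Y b') = (X (q k) - X b') * (Y (p k) - Y b) := by
  classical
  obtain ⟨n₀, γ, hγ, hmain⟩ := exists_parallel_pattern_above (δ / 2) (by positivity)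
  refine ⟨n₀, γ, hγ, ?_⟩
  intro n hn X Y A B C hA hB hC hinj hsign hcard
  set H₁ := (A ×ˢ B).filter fun t =>
    Y t.2 < Y t.1 ∧ (X t.1 - X t.2) / (Y t.1 - Y t.2) ∈ C with hH₁
  set H₂ := (A ×ˢ B).filter fun t =>
    -Y t.2 < -Y t.1 ∧ (-X t.1 - -X t.2) / (-Y t.1 - -Y t.2) ∈ C with hH₂
  have hsub : ((A ×ˢ B).filter fun t =>
      Y t.1 ≠ Y t.2 ∧ (X t.1 - X t.2) / (Y t.1 - Y t.2) ∈ C) ⊆ H₁ ∪ H₂ := by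
    intro t ht
    obtain ⟨h1, h2, h3⟩ := Finset.mem_filter.mp ht
    rw [Finset.mem_union]
    rcases lt_or_gt_of_ne h2 with h | h
    · right
      refine Finset.mem_filter.mpr ⟨h1, by linarith, ?_⟩
      have : (-X t.1 - -X t.2) / (-Y t.1 - -Y t.2) = (X t.1 - X t.2) / (Y t.1 - Y t.2) := by
        rw [← neg_div_neg_eq]
        congr 1 <;> ring
      rwa [this]
    · left
      exact Finset.mem_filter.mpr ⟨h1, h, h3⟩
  have hsum : δ * (n : ℝ) ^ 2 ≤ H₁.card + H₂.card := by
    refine hcard.trans ?_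
    exact_mod_cast (Finset.card_le_card hsub).trans (Finset.card_union_le _ _)
  by_cases hc : δ / 2 * (n : ℝ) ^ 2 ≤ H₁.card
  · exact hmain n hn X Y A B C hA hB hC hinj hsign hc
  · -- Negating both coordinates preserves slopes and orientations but swaps above and below.
    obtain ⟨p, q, S, h1, h2, h3, h4, h5, h6, h7, h8⟩ :=
      hmain n hn (fun a => -X a) (fun a => -Y a) A B C hA hB hC
        (fun b hb b' hb' hX hY => hinj b hb b' hb' (neg_injective hX) (neg_injective hY))
        (fun a ha a' ha' hne b hb b' hb' => by
          have := hsign a ha a' ha' hne b hb b' hb'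
          nlinarith)
        (by
          rw [← hH₂]
          linarith)
    refine ⟨p, q, S, h1, h2, h3, h4, h5, h6, h7, fun b hb => ?_⟩
    obtain ⟨b', hb'⟩ := h8 b hb
    exact ⟨b', fun k => by linear_combination hb' k⟩

/-- For every `δ > 0` there are `n₀` and `γ > 0` such that: if `A, B, C`
are `n`-point sets (`n ≥ n₀`) with (1) `C` on a line `L`, (2) no three points of `A`
collinear and no two disjoint triples of `A` similar relative to `L`, (3) `L` disjoint from
the convex hulls of `A` and `B`, (4) no line of `A` meeting the convex hull of `B`, and
(5) at least `δ n²` collinear triples in `A × B × C`, then at least `γ n` points of `B`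
lie on a (possibly degenerate) conic. -/
theorem statement9 (δ : ℝ) (hδ : 0 < δ) :
    ∃ (n₀ : ℕ) (γ : ℝ), 0 < γ ∧
      ∀ n : ℕ, n₀ ≤ n →
      ∀ A B C : Finset Pt, A.card = n → B.card = n → C.card = n →
      ∀ u v : Pt, u ≠ v →
      ∀ L : AffineSubspace ℝ Pt, L = affineSpan ℝ ({u, v} : Set Pt) →
        (C : Set Pt) ⊆ (L : Set Pt) →
        (∀ p ∈ A, ∀ q ∈ A, ∀ r ∈ A, p ≠ q → q ≠ r → p ≠ r →
          ¬Collinear ℝ ({p, q, r} : Set Pt)) →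
        (∀ p q r p' q' r' : Pt, p ∈ A → q ∈ A → r ∈ A → p' ∈ A → q' ∈ A → r' ∈ A →
          ({p, q, r} : Set Pt) ∩ ({p', q', r'} : Set Pt) = ∅ →
          ¬SimilarTriples L p q r p' q' r') →
        Disjoint (L : Set Pt) (convexHull ℝ (A : Set Pt)) →
        Disjoint (L : Set Pt) (convexHull ℝ (B : Set Pt)) →
        AvoidsHull A B →
        δ * (n : ℝ) ^ 2 ≤
          (({t : Pt × Pt × Pt | t.1 ∈ A ∧ t.2.1 ∈ B ∧ t.2.2 ∈ C ∧
            Collinear ℝ {t.1, t.2.1, t.2.2}}.ncard : ℝ)) →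
        ∃ S : Finset Pt, S ⊆ B ∧ γ * (n : ℝ) ≤ (S.card : ℝ) ∧ OnConic (S : Set Pt) := by
  classical
  obtain ⟨n₀, γ, hγ, hmain⟩ := exists_parallel_pattern δ hδ
  refine ⟨max n₀ 2, γ, hγ, ?_⟩
  intro n hn A B C hA hB hC u v huv L hL hCL hgen hsim hLA hLB hAB hcard
  subst hL
  set X := projX u v with hXdef
  set Y := projY u v with hYdef
  have hd := dist_sq_pos huv
  have hn2 : 2 ≤ n := (le_max_right _ _).trans hn
  have hlA : ∀ a ∈ A, ∀ a' ∈ A, 0 < orient u v a * orient u v a' :=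
    fun a ha a' ha' => same_side huv hLA ha ha'
  have hlB : ∀ b ∈ B, ∀ b' ∈ B, 0 < orient u v b * orient u v b' :=
    fun b hb b' hb' => same_side huv hLB hb hb'
  have hA0 : ∀ a ∈ A, orient u v a ≠ 0 := fun a ha h => by
    have := hlA a ha a ha
    simp [h] at this
  have hB0 : ∀ b ∈ B, orient u v b ≠ 0 := fun b hb h => by
    have := hlB b hb b hb
    simp [h] at this
  have hlC : ∀ c ∈ C, orient u v c = 0 := fun c hc => (mem_line_iff huv c).mp (hCL hc)
  have hsign₀ : ∀ a ∈ A, ∀ a' ∈ A, a ≠ a' → ∀ b ∈ B, ∀ b' ∈ B,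
      0 < orient a a' b * orient a a' b' :=
    fun a ha a' ha' hne b hb b' hb' => same_side hne (hAB a ha a' ha' hne) hb hb'
  have hdisj : ∀ a ∈ A, ∀ b ∈ B, a ≠ b := by
    rintro a ha b hb rfl
    obtain ⟨a', ha', hne⟩ := Finset.exists_mem_ne (by omega : 1 < A.card) a
    have := hsign₀ a ha a' ha' hne.symm a hb a hb
    simp [orient] at this
  have hsign : ∀ a ∈ A, ∀ a' ∈ A, a ≠ a' → ∀ b ∈ B, ∀ b' ∈ B,
      0 < ((X a - X b) * (Y a' - Y b) - (X a' - X b) * (Y a - Y b)) *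
        ((X a - X b') * (Y a' - Y b') - (X a' - X b') * (Y a - Y b')) := by
    intro a ha a' ha' hne b hb b' hb'
    rw [hXdef, hYdef, proj_orient (hA0 a ha) (hA0 a' ha') (hB0 b hb),
      proj_orient (hA0 a ha) (hA0 a' ha') (hB0 b' hb'), neg_mul_neg, div_mul_div_comm]
    have h1 := hsign₀ a ha a' ha' hne b hb b' hb'
    have h2 := hlB b hb b' hb'
    have h3 := mul_pos (hlA a ha a ha) (hlA a' ha' a' ha')
    apply div_pos
    · nlinarith [mul_pos (mul_pos hd hd) h1]
    · nlinarith [mul_pos h3 h2]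
  have hcard' : δ * (n : ℝ) ^ 2 ≤ (((A ×ˢ B).filter fun t =>
      Y t.1 ≠ Y t.2 ∧ (X t.1 - X t.2) / (Y t.1 - Y t.2) ∈ C.image (along u v)).card : ℝ) := by
    refine hcard.trans ?_
    rw [← Set.ncard_coe_finset]
    refine Nat.cast_le.mpr (Set.ncard_le_ncard_of_injOn (fun t => (t.1, t.2.1)) ?_ ?_
      (Finset.finite_toSet _))
    · rintro ⟨a, b, c⟩ ⟨ha, hb, hc, hcol⟩
      have h1 := proj_slope huv (hdisj a ha b hb) (hA0 a ha) (hB0 b hb) (hlC c hc)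
        ((collinear_iff_orient (hdisj a ha b hb) c).mp hcol)
      simp only [Finset.coe_filter, Set.mem_ofPred_eq, Finset.mem_product]
      refine ⟨⟨ha, hb⟩, h1.1, ?_⟩
      rw [← h1.2]
      exact Finset.mem_image_of_mem _ hc
    · rintro ⟨a, b, c⟩ ⟨ha, hb, hc, hcol⟩ ⟨a', b', c'⟩ ⟨ha', hb', hc', hcol'⟩ e
      simp only [Prod.mk.injEq] at e
      simp only at ha hb hc hcol ha' hb' hc' hcol'
      obtain ⟨rfl, rfl⟩ := e
      have h1 := proj_slope huv (hdisj a ha b hb) (hA0 a ha) (hB0 b hb) (hlC c hc)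
        ((collinear_iff_orient (hdisj a ha b hb) c).mp hcol)
      have h2 := proj_slope huv (hdisj a ha b hb) (hA0 a ha) (hB0 b hb) (hlC c' hc')
        ((collinear_iff_orient (hdisj a ha b hb) c').mp hcol')
      have : c = c' :=
        point_ext huv (h1.2.trans h2.2.symm) ((hlC c hc).trans (hlC c' hc').symm)
      rw [this]
  obtain ⟨p, q, S, hp, hq, hpq, hpA, hqA, hS, hSB, hpat⟩ :=
    hmain n ((le_max_left _ _).trans hn) X Y A B (C.image (along u v)) hA.le hB.le
      (Finset.card_image_le.trans hC.le)
      (fun b hb b' hb' hX hY => proj_ext huv (hB0 b hb) (hB0 b' hb') hX hY) hsign hcard'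
  refine ⟨S, hSB, hS, ?_⟩
  obtain ⟨f, hfdeg, hf⟩ := exists_conic (u := u) (v := v) (fun k => X (p k)) (fun k => Y (p k))
    (fun k => X (q k)) (fun k => Y (q k))
  refine ⟨f, ?_, hfdeg, ?_⟩
  · intro hf0
    have hpne : ∀ {i j : Fin 3}, i ≠ j → p i ≠ p j := fun h e => h (hp e)
    have hqne : ∀ {i j : Fin 3}, i ≠ j → q i ≠ q j := fun h e => h (hq e)
    have hpcol : ¬Collinear ℝ ({p 0, p 1, p 2} : Set Pt) := hgen _ (hpA 0) _ (hpA 1) _ (hpA 2)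
      (hpne (by decide)) (hpne (by decide)) (hpne (by decide))
    have hqcol : ¬Collinear ℝ ({q 0, q 1, q 2} : Set Pt) := hgen _ (hqA 0) _ (hqA 1) _ (hqA 2)
      (hqne (by decide)) (hqne (by decide)) (hqne (by decide))
    have hD : (X (p 0) - X (p 2)) * (Y (p 1) - Y (p 2))
        - (X (p 1) - X (p 2)) * (Y (p 0) - Y (p 2)) ≠ 0 := by
      rw [hXdef, hYdef, proj_orient (hA0 _ (hpA 0)) (hA0 _ (hpA 1)) (hA0 _ (hpA 2))]
      rw [collinear_iff_orient (hpne (by decide))] at hpcol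
      exact neg_ne_zero.mpr (div_ne_zero (mul_ne_zero hd.ne' hpcol)
        (mul_ne_zero (mul_ne_zero (hA0 _ (hpA 0)) (hA0 _ (hpA 1))) (hA0 _ (hpA 2))))
    have hside : ∀ i j : Fin 3, i ≠ j →
        SideCond (affineSpan ℝ ({u, v} : Set Pt)) (p i) (p j) (q i) (q j) := by
      intro i j hij
      refine sideCond_of_proj_parallel huv (hpne hij) (hqne hij) (hA0 _ (hpA i)) (hA0 _ (hpA j))
        (hA0 _ (hqA i)) (hA0 _ (hqA j)) ?_
      refine parallel_of_concForm (x := fun k => X (p k)) (y := fun k => Y (p k))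
        (x' := fun k => X (q k)) (y' := fun k => Y (q k)) hD i j hij ?_
      -- The midpoint is not on the line at infinity, because `A` lies on one side of `L`.
      have hY0 : (Y (p i) + Y (p j)) / 2 ≠ 0 := by
        have h1 : 0 < Y (p i) * Y (p j) := by
          simp only [hYdef, projY, div_mul_div_comm]
          exact div_pos (by norm_num) (hlA _ (hpA i) _ (hpA j))
        intro h0
        have h2 : Y (p j) = -Y (p i) := by linarith
        rw [h2] at h1
        nlinarith [sq_nonneg (Y (p i))]
      obtain ⟨m, hmt, hml⟩ := exists_point huv
        ((X (p i) + X (p j)) / 2 / ((Y (p i) + Y (p j)) / 2)) (1 / ((Y (p i) + Y (p j)) / 2))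
      have hm0 : orient u v m ≠ 0 := by
        rw [hml]
        exact one_div_ne_zero hY0
      have hmX : projX u v m = (X (p i) + X (p j)) / 2 := by
        rw [projX, hmt, hml, div_div_div_cancel_right₀ hY0, div_one]
      have hmY : projY u v m = (Y (p i) + Y (p j)) / 2 := by
        rw [projY, hml, one_div_one_div]
      have h1 := hf m hm0
      rw [hf0, map_zero, hmX, hmY] at h1
      exact (mul_eq_zero.mp h1.symm).resolve_left (pow_ne_zero 2 hm0)
    refine hsim (p 0) (p 1) (p 2) (q 0) (q 1) (q 2) (hpA 0) (hpA 1) (hpA 2) (hqA 0) (hqA 1) (hqA 2)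
      ?_ ⟨hpne (by decide), hpne (by decide), hpne (by decide), hpcol, hqne (by decide),
        hqne (by decide), hqne (by decide), hqcol, hside 0 1 (by decide), hside 1 2 (by decide),
        hside 0 2 (by decide)⟩
    rw [← Set.disjoint_iff_inter_eq_empty, Set.disjoint_left]
    intro x hx hx'
    simp only [Set.mem_insert_iff, Set.mem_singleton_iff] at hx hx'
    obtain ⟨k, rfl⟩ : ∃ k, x = p k := by
      rcases hx with h | h | h
      exacts [⟨0, h⟩, ⟨1, h⟩, ⟨2, h⟩]
    rcases hx' with h | h | h
    exacts [hpq _ _ h, hpq _ _ h, hpq _ _ h]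
  · intro b hb
    have hbB : b ∈ B := hSB hb
    obtain ⟨b', hb'⟩ := hpat b hb
    rw [hf b (hB0 b hbB), concForm_eq_zero (X' := X b') (Y' := Y b') hb', mul_zero]
end
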